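/- Fix κ > 0 and an integer m ≥ 3, and let α ∈ (0,1], k₀ = 4m(1 + 1/α), k₁ = k₀ − m. There exists C > 0 independent of n such that for all sufficiently large n, every ϑ ∈ (0,1), and every classical solution φ of the HJB equation on B_κ^n vanishing on the boundary and satisfying |φ|*_{2,α,B_κ^n} ≤ C₀ √n (log n)^{k₀} for some constant C₀: for all x, y ∈ B_{ϑκ}^n with |x − y| ≤ 1 and all u ∈ 𝒰, |∑_{i=1}^I (∂²_{ii}φ(y) − ∂²_{ii}φ(x)) · (σ_i^n(x,u))²| ≤ (C/(1−ϑ)) (log n)^{k₁}. -/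

import Mathlib

/-!
The terms of the sum are products of a coefficient of size `n` with differences of second
derivatives, so the bound rests on cancellation coming from the equation. Write `L = log n`,
`X = √n L^m` and `M = μ̄ n`. By the heavy-traffic condition, all coefficients of the HJB equation
are `O(X)` on `B_κ^n`, apart from the leading diffusion `a_i M`, which is the same for every
control. The equation therefore reads `M ∑ a_i ∂²_ii φ = F`, where `F` involves `φ`, `∂_i φ` and
`∂²_ii φ` with coefficients `O(X)` that are Lipschitz in `x` (`locEq_of_sol`). The controlled
coefficient `σ_i²` is `2 a_i M + O(X)` as well. So once `|∂_i φ| ≤ G` and `|∂²_ij φ| ≤ Q` are known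
on `B_{ϑκ}^n`, subtracting the equations at `x` and `y` shows that the sum is at most a constant
times `1 + G + X Q` (`osc_bound`). No modulus of continuity of `∂² φ` enters.

The bounds `G` and `Q` come from two facts.

* Boundary growth (`sol_bound`). Comparison with the supersolution `T (1 - exp (-p (R² - |x|²)))`,
  `R = κ X`, gives `|φ(x)| ≤ A min (R - |x|, r₀)` with `r₀ = δ √n / L^m`, `δ` small, and
  `A = O(L^{2m})`.
* Interior estimates (`interior_bounds`). For the constant coefficient operator `∑ a_i ∂²_ii`, an
  interior Schauder estimate (`schauder_local`) is obtained from smooth averages: a kernel pair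
  `K`, `P` is built for which the derivative in `τ` of `∫ P(z) v(x + τ z) dz` is
  `τ ∫ K(z) (∑ a_i ∂²_ii v)(x + τ z) dz`, and differentiated pairs have the analogous property,
  with a mean-zero `K`. At the local scale `w = min (R - |x|, r₀)` the terms of `F` are small
  compared with `M`, since `X r₀ = O(δ n)` and `X = o(n)`. A weighted second order Hölder bound
  with constant `B` then improves to `C A + B / 2` (`WB_step`), and iterating gives `|∂_i φ| ≤ C A`
  and `|∂²_ij φ| ≤ C A / w`. The finite Schauder norm of the hypothesis is used only to know that
  some finite `B` exists (`exists_WB_of_schauder`).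

On `B_{ϑκ}^n` one has `w ≥ min ((1 - ϑ) R, r₀)`, so `X Q = O(L^{4m} / (1 - ϑ))` and `G = O(L^{2m})`
(`osc_log_bound`). Since `α ≤ 1`, the exponent `k₁ = 4m(1 + 1/α) - m` is at least `7m ≥ 4m`.
-/

open Finset Metric Set

noncomputable section

namespace HW

variable {I : ℕ}

/-- `ℝ^I` with the Euclidean norm. -/
abbrev Euc (I : ℕ) := EuclideanSpace ℝ (Fin I)

/-- First partial derivative `∂_i φ (x)`. -/
noncomputable def pd1 (φ : Euc I → ℝ) (i : Fin I) (x : Euc I) : ℝ :=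
  fderiv ℝ φ x (EuclideanSpace.single i 1)

/-- Second partial derivative `∂²_{ii} φ (x)`. -/
noncomputable def pd2 (φ : Euc I → ℝ) (i : Fin I) (x : Euc I) : ℝ :=
  fderiv ℝ (pd1 φ i) x (EuclideanSpace.single i 1)

/-- The fluid fraction `ν_i = (a_i/μ_i) · μ̄` where `μ̄ = (∑ a_j/μ_j)⁻¹`. -/
noncomputable def nu (μ a : Fin I → ℝ) (i : Fin I) : ℝ :=
  (a i / μ i) * (∑ j, a j / μ j)⁻¹

/-- The radius `κ √n (log n)^m` of the ball `B_κ^n`. -/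
noncomputable def Rad (κ : ℝ) (m n : ℕ) : ℝ :=
  κ * Real.sqrt n * Real.log n ^ m

/-- The HJB equation at `x`, with a general "front" function `g` in place of `(e·x)^+`
(the true HJB equation uses `g y = max y 0`, the smoothed one uses `g = f_a`).
Here `lam = λ^n`, `l_i^n = a_i λ^n − μ_i ν_i n`. -/
def HJBgen (μ a c : Fin I → ℝ) (γ lam : ℝ) (n : ℕ) (g : ℝ → ℝ)
    (φ : Euc I → ℝ) (x : Euc I) : Prop :=
  0 = -γ * φ x
    + g (∑ j, x j) * (⨅ i, (c i + μ i * pd1 φ i x - (1 / 2) * μ i * pd2 φ i x))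
    + ∑ i, ((a i * lam - μ i * nu μ a i * n) - μ i * x i) * pd1 φ i x
    + (1 / 2) * ∑ i, (a i * lam + μ i * (nu μ a i * n + x i)) * pd2 φ i x

/-- A classical solution on `B = ball 0 R`: Lipschitz on the closed ball, `C²` on the open
ball, vanishing on the boundary sphere, and satisfying the (generalized) HJB equation on `B`. -/
def IsSolGen (μ a c : Fin I → ℝ) (γ lam : ℝ) (n : ℕ) (R : ℝ) (g : ℝ → ℝ)
    (φ : Euc I → ℝ) : Prop :=
  (∃ K : NNReal, LipschitzOnWith K φ (closedBall 0 R)) ∧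
  ContDiffOn ℝ 2 φ (ball 0 R) ∧
  (∀ x : Euc I, ‖x‖ = R → φ x = 0) ∧
  (∀ x ∈ ball (0 : Euc I) R, HJBgen μ a c γ lam n g φ x)

/-- α-Hölder continuity of the second derivative on every compact subset of `ball 0 R`. -/
def HolderSecond (α R : ℝ) (φ : Euc I → ℝ) : Prop :=
  ∀ K : Set (Euc I), K ⊆ ball 0 R → IsCompact K →
    ∃ C : ℝ, ∀ x ∈ K, ∀ y ∈ K,
      ‖fderiv ℝ (fderiv ℝ φ) x - fderiv ℝ (fderiv ℝ φ) y‖ ≤ C * ‖x - y‖ ^ α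

/-- Pointwise form of the bound `|φ|*_{2,α,ball 0 R} ≤ M`: each of the four constituent
(weighted) seminorms is bounded by `M`.  For `x` in the ball, `dist (x, ∂B) = R − ‖x‖`. -/
def SchauderBound (α R M : ℝ) (φ : Euc I → ℝ) : Prop :=
  (∀ x : Euc I, ‖x‖ < R → |φ x| ≤ M) ∧
  (∀ x : Euc I, ‖x‖ < R → (R - ‖x‖) * ‖fderiv ℝ φ x‖ ≤ M) ∧
  (∀ x : Euc I, ‖x‖ < R → (R - ‖x‖) ^ 2 * ‖fderiv ℝ (fderiv ℝ φ) x‖ ≤ M) ∧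
  (∀ x y : Euc I, ‖x‖ < R → ‖y‖ < R → x ≠ y →
    (min (R - ‖x‖) (R - ‖y‖)) ^ (2 + α) *
        ‖fderiv ℝ (fderiv ℝ φ) x - fderiv ℝ (fderiv ℝ φ) y‖ ≤
      M * ‖x - y‖ ^ α)

/-- `(σ_i^n(x,u))² = λ_i^n + μ_i ν_i n + μ_i (x_i − u_i (e·x)^+)`. -/
noncomputable def sigmaSq (μ a : Fin I → ℝ) (lam : ℝ) (n : ℕ)
    (x : Euc I) (u : Fin I → ℝ) (i : Fin I) : ℝ :=
  a i * lam + μ i * nu μ a i * n + μ i * (x i - u i * max (∑ j, x j) 0)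

/-! ### Partial derivatives and kernel pairs -/

theorem two_le_top : (2 : WithTop ℕ∞) ≤ ((⊤ : ℕ∞) : WithTop ℕ∞) := by
  have : ((2 : ℕ∞) : WithTop ℕ∞) ≤ ((⊤ : ℕ∞) : WithTop ℕ∞) := WithTop.coe_le_coe.2 le_top
  simpa using this

theorem contDiff_pd1 {n m : ℕ∞} {f : Euc I → ℝ} (hf : ContDiff ℝ n f) (i : Fin I)
    (h : m + 1 ≤ n) : ContDiff ℝ m (pd1 f i) := by
  have h1 : ContDiff ℝ m (fderiv ℝ f) := hf.fderiv_right (by exact_mod_cast h)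
  exact h1.clm_apply contDiff_const

theorem fderiv_eq_sum_pd1 (f : Euc I → ℝ) (x v : Euc I) :
    fderiv ℝ f x v = ∑ i, v i * pd1 f i x := by
  have hv : v = ∑ i, v i • EuclideanSpace.single i (1 : ℝ) := by
    ext j
    simp [Finset.sum_apply, Pi.single_apply]
  conv_lhs => rw [hv]
  simp [map_sum, pd1]

theorem pd1_comm {f : Euc I → ℝ} {x : Euc I} (hf : ContDiffAt ℝ 2 f x) (i j : Fin I) :
    pd1 (pd1 f i) j x = pd1 (pd1 f j) i x := by
  have hd : DifferentiableAt ℝ (fderiv ℝ f) x :=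
    (hf.fderiv_right (m := 1) (by norm_num)).differentiableAt (by norm_num)
  have key : ∀ i j : Fin I, pd1 (pd1 f i) j x
      = fderiv ℝ (fderiv ℝ f) x (EuclideanSpace.single j 1) (EuclideanSpace.single i 1) := by
    intro i j
    have : HasFDerivAt (pd1 f i) _ x :=
      hd.hasFDerivAt.clm_apply (hasFDerivAt_const (EuclideanSpace.single i (1:ℝ)) x)
    rw [pd1, this.fderiv]
    simp
  rw [key, key]
  exact (hf.isSymmSndFDerivAt (by simp)).eq _ _

theorem hasFDerivAt_affine (f : Euc I → ℝ) (hf : Differentiable ℝ f) (x : Euc I) (t : ℝ)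
    (z : Euc I) :
    HasFDerivAt (fun z => f (x + t • z)) (t • fderiv ℝ f (x + t • z)) z := by
  have h1 : HasFDerivAt (fun z : Euc I => x + t • z) (t • ContinuousLinearMap.id ℝ (Euc I)) z :=
    ((hasFDerivAt_id z).const_smul t).const_add x
  refine ((hf (x + t • z)).hasFDerivAt.comp z h1).congr_fderiv ?_
  ext v
  simp

theorem pd1_affine {f : Euc I → ℝ} (hf : Differentiable ℝ f) (x : Euc I) (t : ℝ) (i : Fin I) :
    pd1 (fun z => f (x + t • z)) i = fun z => t * pd1 f i (x + t • z) := by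
  funext z
  rw [pd1, (hasFDerivAt_affine f hf x t z).fderiv]
  simp [pd1]

theorem pd1_mul {f g : Euc I → ℝ} {x : Euc I} (hf : DifferentiableAt ℝ f x)
    (hg : DifferentiableAt ℝ g x) (i : Fin I) :
    pd1 (fun z => f z * g z) i x = f x * pd1 g i x + pd1 f i x * g x := by
  rw [pd1, (hf.hasFDerivAt.fun_mul hg.hasFDerivAt).fderiv]
  simp [pd1]; ring

theorem pd1_add {f g : Euc I → ℝ} {x : Euc I} (hf : DifferentiableAt ℝ f x)
    (hg : DifferentiableAt ℝ g x) (i : Fin I) :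
    pd1 (fun z => f z + g z) i x = pd1 f i x + pd1 g i x := by
  rw [pd1, (hf.hasFDerivAt.fun_add hg.hasFDerivAt).fderiv]
  simp [pd1]

theorem pd1_const_mul {f : Euc I → ℝ} {x : Euc I} (hf : DifferentiableAt ℝ f x) (c : ℝ)
    (i : Fin I) :
    pd1 (fun z => c * f z) i x = c * pd1 f i x := by
  rw [pd1, (hf.hasFDerivAt.const_mul c).fderiv]
  simp [pd1]

theorem pd1_sum {ι : Type*} {s : Finset ι} {f : ι → Euc I → ℝ} {x : Euc I}
    (hf : ∀ k ∈ s, DifferentiableAt ℝ (f k) x) (i : Fin I) :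
    pd1 (fun z => ∑ k ∈ s, f k z) i x = ∑ k ∈ s, pd1 (f k) i x := by
  rw [pd1, (HasFDerivAt.fun_sum (fun k hk => (hf k hk).hasFDerivAt)).fderiv]
  simp [pd1]

theorem hasFDerivAt_coord (j : Fin I) (x : Euc I) :
    HasFDerivAt (fun z : Euc I => z j) (EuclideanSpace.proj j : Euc I →L[ℝ] ℝ) x :=
  (EuclideanSpace.proj j : Euc I →L[ℝ] ℝ).hasFDerivAt

theorem pd1_coord (i j : Fin I) (x : Euc I) :
    pd1 (fun z : Euc I => z j) i x = if j = i then 1 else 0 := by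
  rw [pd1, (hasFDerivAt_coord j x).fderiv]
  simp

theorem contDiff_coord {n : WithTop ℕ∞} (j : Fin I) : ContDiff ℝ n (fun z : Euc I => z j) :=
  (EuclideanSpace.proj j : Euc I →L[ℝ] ℝ).contDiff

theorem abs_coord_le (z : Euc I) (i : Fin I) : |z i| ≤ ‖z‖ := by
  have := PiLp.norm_apply_le z i
  simpa using this

theorem pd1_congr {f g : Euc I → ℝ} {x : Euc I} (h : f =ᶠ[nhds x] g) (i : Fin I) :
    pd1 f i x = pd1 g i x := by
  rw [pd1, pd1, h.fderiv_eq]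

theorem pd1_congr_nhds {f g : Euc I → ℝ} {x : Euc I} (h : f =ᶠ[nhds x] g) (i : Fin I) :
    pd1 f i =ᶠ[nhds x] pd1 g i := by
  filter_upwards [h.eventuallyEq_nhds] with y hy using pd1_congr hy i

/-- A pair of kernels on the unit ball for which
`∂_τ (τ^(-N) ∫ P(z) v(x+τz) dz) = τ^(1-N) ∫ K(z) (Lv)(x+τz) dz`, where `L = ∑ a_i ∂²_ii`;
the field `rel` is the pointwise form of this identity after integration by parts. -/
structure KPair (a : Fin I → ℝ) (N : ℕ) (K P : Euc I → ℝ) : Prop where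
  smoothK : ContDiff ℝ (⊤ : ℕ∞) K
  smoothP : ContDiff ℝ (⊤ : ℕ∞) P
  suppK : ∀ z, 1 < ‖z‖ → K z = 0
  suppP : ∀ z, 1 < ‖z‖ → P z = 0
  rel : ∀ z, ∑ i, a i * pd1 (pd1 K i) i z + (I + N) * P z + ∑ i, z i * pd1 P i z = 0

theorem pd1_zero_of_supp {f : Euc I → ℝ} (hf : ∀ z, 1 < ‖z‖ → f z = 0) (j : Fin I) :
    ∀ z, 1 < ‖z‖ → pd1 f j z = 0 := by
  intro z hz
  have : f =ᶠ[nhds z] fun _ => (0:ℝ) := by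
    filter_upwards [(isOpen_lt continuous_const continuous_norm).mem_nhds hz] with y hy
      using hf y hy
  rw [pd1_congr this]
  simp [pd1]

/-- Differentiating a kernel pair raises its order by one. -/
theorem KPair.deriv {a : Fin I → ℝ} {N : ℕ} {K P : Euc I → ℝ} (h : KPair a N K P) (j : Fin I) :
    KPair a (N + 1) (pd1 K j) (pd1 P j) where
  smoothK := contDiff_pd1 h.smoothK j (by simp)
  smoothP := contDiff_pd1 h.smoothP j (by simp)
  suppK := pd1_zero_of_supp h.suppK j
  suppP := pd1_zero_of_supp h.suppP j
  rel := by
    intro z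
    have hP1 : ∀ i, ContDiff ℝ (⊤ : ℕ∞) (pd1 P i) := fun i => contDiff_pd1 h.smoothP i (by simp)
    have hK1 : ∀ i, ContDiff ℝ (⊤ : ℕ∞) (pd1 K i) := fun i => contDiff_pd1 h.smoothK i (by simp)
    have hK2 : ∀ i, ContDiff ℝ (⊤ : ℕ∞) (pd1 (pd1 K i) i) :=
      fun i => contDiff_pd1 (hK1 i) i (by simp)
    have dP1 : ∀ i, DifferentiableAt ℝ (pd1 P i) z :=
      fun i => ((hP1 i).differentiable (by simp)).differentiableAt
    have dP : DifferentiableAt ℝ P z := (h.smoothP.differentiable (by simp)).differentiableAt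
    have dK2 : ∀ i, DifferentiableAt ℝ (pd1 (pd1 K i) i) z :=
      fun i => ((hK2 i).differentiable (by simp)).differentiableAt
    have dc : ∀ i, DifferentiableAt ℝ (fun z : Euc I => z i) z :=
      fun i => (hasFDerivAt_coord i z).differentiableAt
    have h0 : (fun z => (∑ i, a i * pd1 (pd1 K i) i z + (I + N) * P z)
        + ∑ i, z i * pd1 P i z) = fun _ => (0:ℝ) := by
      funext z; exact h.rel z
    have h1 : pd1 (fun z => (∑ i, a i * pd1 (pd1 K i) i z + (I + N) * P z)
        + ∑ i, z i * pd1 P i z) j z = 0 := by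
      rw [h0]; simp [pd1]
    have d1 : DifferentiableAt ℝ (fun z => ∑ i, a i * pd1 (pd1 K i) i z) z :=
      DifferentiableAt.fun_sum fun i _ => (dK2 i).const_mul _
    have d2 : DifferentiableAt ℝ (fun z : Euc I => ((I:ℝ) + N) * P z) z := dP.const_mul _
    have d3 : DifferentiableAt ℝ (fun z => ∑ i, z i * pd1 P i z) z :=
      DifferentiableAt.fun_sum fun i _ => (dc i).fun_mul (dP1 i)
    rw [pd1_add (d1.fun_add d2) d3, pd1_add d1 d2, pd1_const_mul dP,
      pd1_sum (fun i _ => (dK2 i).const_mul _), pd1_sum (fun i _ => (dc i).fun_mul (dP1 i))] at h1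
    have e1 : ∀ i, pd1 (fun z => a i * pd1 (pd1 K i) i z) j z
        = a i * pd1 (pd1 (pd1 K j) i) i z := by
      intro i
      rw [pd1_const_mul (dK2 i)]
      have c1 := pd1_comm (x := z) ((hK1 i).of_le two_le_top).contDiffAt i j
      rw [c1]
      have c2 : pd1 (pd1 K i) j = pd1 (pd1 K j) i := by
        funext y
        exact pd1_comm (h.smoothK.of_le two_le_top).contDiffAt i j
      rw [c2]
    have e2 : ∀ i, pd1 (fun z => z i * pd1 P i z) j z
        = z i * pd1 (pd1 P j) i z + (if i = j then 1 else 0) * pd1 P i z := by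
      intro i
      rw [pd1_mul (dc i) (dP1 i), pd1_coord,
        pd1_comm (h.smoothP.of_le two_le_top).contDiffAt i j]
    simp only [e1, e2, Finset.sum_add_distrib, ite_mul, one_mul, zero_mul,
      Finset.sum_ite_eq', Finset.mem_univ, if_true] at h1
    push_cast
    linarith

open MeasureTheory in
/-- Existence of a kernel pair of order `0` whose second kernel has positive mass. -/
theorem exists_base_kernel (hI : 0 < I) (a : Fin I → ℝ) (ha : ∀ i, 0 < a i) (ha1 : ∀ i, a i ≤ 1) :
    ∃ K P : Euc I → ℝ, KPair a 0 K P ∧ (∀ z, 0 ≤ P z) ∧ 0 < ∫ z, P z := by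
  set q : Euc I → ℝ := fun z => 1 - ∑ i, (a i)⁻¹ * (z i * z i) with hq
  have qs : ContDiff ℝ (⊤ : ℕ∞) q := by
    refine contDiff_const.sub (ContDiff.sum fun i _ => contDiff_const.mul ?_)
    exact (contDiff_coord i).mul (contDiff_coord i)
  have qd : ∀ z, DifferentiableAt ℝ q z := fun z => (qs.differentiable (by simp)).differentiableAt
  have pq : ∀ i z, pd1 q i z = -2 * (a i)⁻¹ * z i := by
    intro i z
    have dc : ∀ i, DifferentiableAt ℝ (fun z : Euc I => z i) z :=
      fun i => (hasFDerivAt_coord i z).differentiableAt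
    have dd : ∀ k, DifferentiableAt ℝ (fun z : Euc I => (a k)⁻¹ * (z k * z k)) z :=
      fun k => ((dc k).fun_mul (dc k)).const_mul _
    have : q = fun z => (1:ℝ) + (-1) * ∑ i, (a i)⁻¹ * (z i * z i) := by
      funext z; simp [hq]; ring
    rw [this, pd1_add (differentiableAt_const _)
      ((DifferentiableAt.fun_sum fun k _ => dd k).const_mul _),
      pd1_const_mul (DifferentiableAt.fun_sum fun k _ => dd k), pd1_sum (fun k _ => dd k)]
    have e : ∀ k, pd1 (fun z : Euc I => (a k)⁻¹ * (z k * z k)) i z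
        = if k = i then 2 * (a k)⁻¹ * z k else 0 := by
      intro k
      rw [pd1_const_mul ((dc k).fun_mul (dc k)), pd1_mul (dc k) (dc k), pd1_coord]
      split_ifs <;> ring
    simp only [e, Finset.sum_ite_eq', Finset.mem_univ, if_true]
    simp [pd1]
  have qneg : ∀ z : Euc I, 1 < ‖z‖ → q z < 0 := by
    intro z hz
    have h1 : 1 < ∑ i, z i * z i := by
      have h2 : ‖z‖ ^ 2 = ∑ i, z i * z i := by
        rw [EuclideanSpace.norm_sq_eq]; simp [sq]
      rw [← h2]; nlinarith
    have h3 : ∑ i, z i * z i ≤ ∑ i, (a i)⁻¹ * (z i * z i) := by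
      refine Finset.sum_le_sum fun i _ => ?_
      have : 1 ≤ (a i)⁻¹ := (one_le_inv₀ (ha i)).2 (ha1 i)
      nlinarith [mul_self_nonneg (z i)]
    simp only [hq]; linarith
  have gs : ContDiff ℝ (⊤ : ℕ∞) expNegInvGlue := expNegInvGlue.contDiff
  have gd : ∀ t, DifferentiableAt ℝ expNegInvGlue t :=
    fun t => (gs.differentiable (by simp)).differentiableAt
  have g's : ContDiff ℝ (⊤ : ℕ∞) (_root_.deriv expNegInvGlue) :=
    ((contDiff_infty_iff_deriv).1 gs).2
  have g'0 : ∀ t < 0, _root_.deriv expNegInvGlue t = 0 := by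
    intro t ht
    have : expNegInvGlue =ᶠ[nhds t] fun _ => (0:ℝ) := by
      filter_upwards [isOpen_Iio.mem_nhds ht] with s hs
        using expNegInvGlue.zero_of_nonpos (le_of_lt hs)
    rw [this.deriv_eq]; simp
  set K : Euc I → ℝ := fun z => expNegInvGlue (q z) with hK
  set P : Euc I → ℝ := fun z => 2 * _root_.deriv expNegInvGlue (q z) with hP
  have Ks : ContDiff ℝ (⊤ : ℕ∞) K := gs.comp qs
  have Ps : ContDiff ℝ (⊤ : ℕ∞) P := contDiff_const.mul (g's.comp qs)
  have pK : ∀ i z, pd1 K i z = -(a i)⁻¹ * (z i * P z) := by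
    intro i z
    have h1 : HasFDerivAt K _ z := (gd (q z)).hasDerivAt.comp_hasFDerivAt z (qd z).hasFDerivAt
    have h2 := pq i z
    rw [pd1] at h2
    rw [pd1, h1.fderiv]
    simp only [_root_.smul_apply, h2, hP, smul_eq_mul]
    ring
  have P0 : ∀ z, 0 ≤ P z := fun z =>
    mul_nonneg (by norm_num) (expNegInvGlue.monotone.deriv_nonneg)
  have Psupp : ∀ z : Euc I, 1 < ‖z‖ → P z = 0 := by
    intro z hz; simp [hP, g'0 _ (qneg z hz)]
  have Ksupp : ∀ z : Euc I, 1 < ‖z‖ → K z = 0 := by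
    intro z hz; simp only [hK]; exact expNegInvGlue.zero_of_nonpos (qneg z hz).le
  have hPc : HasCompactSupport P := by
    refine HasCompactSupport.intro (isCompact_closedBall (0 : Euc I) 1) fun z hz => Psupp z ?_
    simpa using hz
  refine ⟨K, P, ⟨Ks, Ps, Ksupp, Psupp, ?_⟩, P0, ?_⟩
  · intro z
    have dP : DifferentiableAt ℝ P z := (Ps.differentiable (by simp)).differentiableAt
    have e : ∀ i, a i * pd1 (pd1 K i) i z = -(P z) - z i * pd1 P i z := by
      intro i
      have dc : DifferentiableAt ℝ (fun z : Euc I => z i) z :=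
        (hasFDerivAt_coord i z).differentiableAt
      have : pd1 K i = fun z => -(a i)⁻¹ * (z i * P z) := funext (pK i)
      rw [this, pd1_const_mul (dc.fun_mul dP), pd1_mul dc dP, pd1_coord, if_pos rfl]
      have := (ha i).ne'
      field_simp
      ring
    simp only [e, Finset.sum_sub_distrib, Finset.sum_const, Finset.card_univ, Fintype.card_fin]
    simp
    ring
  · have hint : Integrable P := Ps.continuous.integrable_of_hasCompactSupport hPc
    refine lt_of_le_of_ne (integral_nonneg P0) fun h0 => ?_
    -- a kernel `P` of zero mass would vanish, making `K` constant
    have hP0 : P = 0 := by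
      have := (integral_eq_zero_iff_of_nonneg P0 hint).1 h0.symm
      exact (Ps.continuous.ae_eq_iff_eq volume continuous_const).1 this
    have hfd : ∀ z, fderiv ℝ K z = 0 := by
      intro z
      ext v
      rw [fderiv_eq_sum_pd1]
      simp [pK, hP0]
    have hc := is_const_of_fderiv_eq_zero (Ks.differentiable (by simp)) hfd
      (0 : Euc I) (EuclideanSpace.single ⟨0, hI⟩ 2)
    rw [Ksupp (EuclideanSpace.single ⟨0, hI⟩ 2) (by simp)] at hc
    have : 0 < K 0 := expNegInvGlue.pos_of_pos (by simp [hq])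
    linarith

/-! ### Averages against a kernel pair -/

section
open MeasureTheory

theorem hasCompactSupport_of_supp {P : Euc I → ℝ} (hP : ∀ z, 1 < ‖z‖ → P z = 0) :
    HasCompactSupport P :=
  HasCompactSupport.intro (isCompact_closedBall (0 : Euc I) 1) fun z hz => hP z (by simpa using hz)

theorem integrable_supp_mul {P g : Euc I → ℝ} (hPc : Continuous P)
    (hP : ∀ z, 1 < ‖z‖ → P z = 0) (hg : Continuous g) : Integrable (fun z => P z * g z) :=
  (hPc.mul hg).integrable_of_hasCompactSupport (hasCompactSupport_of_supp hP).mul_right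

theorem integral_by_parts {f g : Euc I → ℝ} (hf : ContDiff ℝ 1 f)
    (hs : ∀ z, 1 < ‖z‖ → f z = 0) (hg : ContDiff ℝ 1 g) (i : Fin I) :
    ∫ z, f z * pd1 g i z = - ∫ z, pd1 f i z * g z := by
  have c1 : Continuous (pd1 g i) := (contDiff_pd1 (n := 1) (m := 0) hg i (by simp)).continuous
  have c2 : Continuous (pd1 f i) := (contDiff_pd1 (n := 1) (m := 0) hf i (by simp)).continuous
  exact integral_mul_fderiv_eq_neg_fderiv_mul_of_integrable
    (integrable_supp_mul c2 (pd1_zero_of_supp hs i) hg.continuous)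
    (integrable_supp_mul hf.continuous hs c1)
    (integrable_supp_mul hf.continuous hs hg.continuous)
    (fun x _ => (hf.differentiable (by simp)).differentiableAt)
    (fun x _ => (hg.differentiable (by simp)).differentiableAt)

/-- Differentiation under the integral sign along an affine family of arguments. -/
theorem hasDerivAt_integral_affine {P v : Euc I → ℝ} (hPc : Continuous P)
    (hP : ∀ z, 1 < ‖z‖ → P z = 0) (hv : ContDiff ℝ 1 v) {X Y : Euc I → Euc I}
    (hX : Continuous X) (hY : Continuous Y) (t₀ : ℝ) :
    HasDerivAt (fun t : ℝ => ∫ z, P z * v (X z + t • Y z))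
      (∫ z, P z * fderiv ℝ v (X z + t₀ • Y z) (Y z)) t₀ := by
  have hvd : Differentiable ℝ v := hv.differentiable (by simp)
  have hdc : Continuous (fderiv ℝ v) := hv.continuous_fderiv (by simp)
  have hF' : Continuous fun p : ℝ × Euc I =>
      P p.2 * fderiv ℝ v (X p.2 + p.1 • Y p.2) (Y p.2) := by fun_prop
  have hcomp : IsCompact (closedBall t₀ 1 ×ˢ closedBall (0 : Euc I) 1) :=
    (isCompact_closedBall _ _).prod (isCompact_closedBall _ _)
  obtain ⟨C, hC⟩ := hcomp.exists_bound_of_continuousOn hF'.continuousOn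
  refine (hasDerivAt_integral_of_dominated_loc_of_deriv_le (μ := volume)
    (F := fun (t : ℝ) z => P z * v (X z + t • Y z))
    (F' := fun (t : ℝ) z => P z * fderiv ℝ v (X z + t • Y z) (Y z))
    (bound := (closedBall (0 : Euc I) 1).indicator fun _ => C)
    (closedBall_mem_nhds t₀ one_pos) ?_ ?_ ?_ ?_ ?_ ?_).2
  · refine Filter.Eventually.of_forall fun t => ?_
    have : Continuous fun z => P z * v (X z + t • Y z) := by
      have := hv.continuous; fun_prop
    exact this.aestronglyMeasurable
  · refine integrable_supp_mul hPc hP ?_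
    have := hv.continuous; fun_prop
  · have : Continuous fun z => P z * fderiv ℝ v (X z + t₀ • Y z) (Y z) := by fun_prop
    exact this.aestronglyMeasurable
  · refine Filter.Eventually.of_forall fun z t ht => ?_
    by_cases hz : ‖z‖ ≤ 1
    · rw [Set.indicator_of_mem (by simpa using hz)]
      exact hC (t, z) ⟨ht, by simpa using hz⟩
    · rw [hP z (not_le.1 hz), Set.indicator_of_notMem (by simpa using hz)]
      simp
  · exact (integrable_indicator_iff measurableSet_closedBall).2
      (integrableOn_const (measure_closedBall_lt_top).ne)
  · refine Filter.Eventually.of_forall fun z t _ => ?_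
    have h1 : HasDerivAt (fun t : ℝ => X z + t • Y z) (Y z) t := by
      simpa using ((hasDerivAt_id t).smul_const (Y z)).const_add (X z)
    exact ((hvd _).hasFDerivAt.comp_hasDerivAt t h1).const_mul (P z)

/-- The averages of `v` against the rescaled kernel `P`, normalised for a kernel of order `N`. -/
def avg (N : ℕ) (P v : Euc I → ℝ) (x : Euc I) (τ : ℝ) : ℝ :=
  (τ ^ N)⁻¹ * ∫ z, P z * v (x + τ • z)

/-- The constant coefficient operator `∑ a_i ∂²_ii`. -/
def Lop (a : Fin I → ℝ) (v : Euc I → ℝ) (y : Euc I) : ℝ := ∑ i, a i * pd1 (pd1 v i) i y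

/-- The scale derivative of an average against `P` is an average of `∑ a_i ∂²_ii v` against `K`,
by two integrations by parts and the kernel relation. -/
theorem KPair.hasDerivAt_avg {a : Fin I → ℝ} {N : ℕ} {K P : Euc I → ℝ} (h : KPair a N K P)
    {v : Euc I → ℝ} (hv : ContDiff ℝ 2 v) (x : Euc I) {τ : ℝ} (hτ : 0 < τ) :
    HasDerivAt (avg N P v x) (τ * (τ ^ N)⁻¹ * ∫ z, K z * Lop a v (x + τ • z)) τ := by
  have hv1 : ContDiff ℝ 1 v := hv.of_le (by norm_num)
  have hvd : Differentiable ℝ v := hv.differentiable (by simp)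
  have hJ := hasDerivAt_integral_affine h.smoothP.continuous h.suppP hv1
    (X := fun _ => x) (Y := fun z => z) continuous_const continuous_id τ
  have hp : HasDerivAt (fun τ : ℝ => (τ ^ N)⁻¹) (-(N * τ ^ (N - 1)) / (τ ^ N) ^ 2) τ :=
    (hasDerivAt_pow N τ).inv (pow_ne_zero _ hτ.ne')
  refine (hp.mul hJ).congr_deriv ?_
  -- `V` is the rescaled function
  set V : Euc I → ℝ := fun z => v (x + τ • z) with hV
  have hVs : ContDiff ℝ 2 V := hv.comp (contDiff_const.add (contDiff_id.const_smul τ))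
  have hV1 : ContDiff ℝ 1 V := hVs.of_le (by norm_num)
  have hpV : ∀ i, pd1 V i = fun z => τ * pd1 v i (x + τ • z) := fun i => pd1_affine hvd x τ i
  have hvi : ∀ i, ContDiff ℝ 1 (pd1 v i) := fun i => contDiff_pd1 (n := 2) (m := 1) hv i (by norm_num)
  have hVi : ∀ i, ContDiff ℝ 1 (pd1 V i) := fun i => contDiff_pd1 (n := 2) (m := 1) hVs i (by norm_num)
  have hVii : ∀ i, Continuous (pd1 (pd1 V i) i) :=
    fun i => (contDiff_pd1 (n := 1) (m := 0) (hVi i) i (by simp)).continuous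
  have hppV : ∀ i z, pd1 (pd1 V i) i z = τ ^ 2 * pd1 (pd1 v i) i (x + τ • z) := by
    intro i z
    have hd : Differentiable ℝ (fun z : Euc I => pd1 v i (x + τ • z)) :=
      ((hvi i).comp (contDiff_const.add (contDiff_id.const_smul τ))).differentiable (by simp)
    rw [hpV i, pd1_const_mul hd.differentiableAt,
      pd1_affine ((hvi i).differentiable (by simp)) x τ i]
    ring
  have sP1 : ContDiff ℝ 1 P := (h.smoothP.of_le two_le_top).of_le (by norm_num)
  have sK2 : ContDiff ℝ 2 K := h.smoothK.of_le two_le_top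
  have sKi : ∀ i, ContDiff ℝ 1 (pd1 K i) := fun i => contDiff_pd1 (n := 2) (m := 1) sK2 i (by norm_num)
  have cP1 : ∀ i, Continuous (pd1 P i) :=
    fun i => (contDiff_pd1 (n := 1) (m := 0) sP1 i (by simp)).continuous
  have cK2 : ∀ i, Continuous (pd1 (pd1 K i) i) :=
    fun i => (contDiff_pd1 (n := 1) (m := 0) (sKi i) i (by simp)).continuous
  have ccoord : ∀ i, Continuous fun z : Euc I => z i := fun i => (contDiff_coord (n := 0) i).continuous
  have iPV : Integrable fun z => P z * V z :=
    integrable_supp_mul sP1.continuous h.suppP hV1.continuous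
  have izPV : ∀ i, Integrable fun z => (z i * pd1 P i z) * V z := fun i =>
    integrable_supp_mul ((ccoord i).mul (cP1 i))
      (fun z hz => by rw [pd1_zero_of_supp h.suppP i z hz, mul_zero]) hV1.continuous
  have iKV : ∀ i, Integrable fun z => (a i * pd1 (pd1 K i) i z) * V z := fun i =>
    integrable_supp_mul (continuous_const.mul (cK2 i))
      (fun z hz => by
        rw [pd1_zero_of_supp (pd1_zero_of_supp h.suppK i) i z hz, mul_zero]) hV1.continuous
  -- first order term
  have e1 : τ * ∫ z, P z * fderiv ℝ v (x + τ • z) z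
      = - (∑ i, ∫ z, (P z + z i * pd1 P i z) * V z) := by
    have s1 : ∀ z, τ * (P z * fderiv ℝ v (x + τ • z) z) = ∑ i, (z i * P z) * pd1 V i z := by
      intro z
      rw [fderiv_eq_sum_pd1, Finset.mul_sum, Finset.mul_sum]
      refine Finset.sum_congr rfl fun i _ => ?_
      rw [hpV i]; ring
    rw [← integral_const_mul]
    simp_rw [s1]
    have czP : ∀ i, ContDiff ℝ 1 fun z : Euc I => z i * P z := fun i => (contDiff_coord i).mul sP1
    have szP : ∀ i, ∀ z : Euc I, 1 < ‖z‖ → z i * P z = 0 := fun i z hz => by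
      rw [h.suppP z hz, mul_zero]
    rw [integral_finsetSum _ fun i _ => integrable_supp_mul (czP i).continuous (szP i)
      (hVi i).continuous, ← Finset.sum_neg_distrib]
    refine Finset.sum_congr rfl fun i _ => ?_
    rw [integral_by_parts (czP i) (szP i) hV1 i]
    congr 1
    refine integral_congr_ae (Filter.Eventually.of_forall fun z => ?_)
    have := pd1_mul (hasFDerivAt_coord i z).differentiableAt
      (sP1.differentiable (by simp)).differentiableAt (x := z) (g := P) i
    simp only [this, pd1_coord, if_true]
    ring
  -- second order term
  have e2 : τ ^ 2 * ∫ z, K z * Lop a v (x + τ • z)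
      = ∑ i, ∫ z, (a i * pd1 (pd1 K i) i z) * V z := by
    have s1 : ∀ z, τ ^ 2 * (K z * Lop a v (x + τ • z)) = ∑ i, a i * (K z * pd1 (pd1 V i) i z) := by
      intro z
      rw [Lop, Finset.mul_sum, Finset.mul_sum]
      refine Finset.sum_congr rfl fun i _ => ?_
      rw [hppV i]; ring
    rw [← integral_const_mul]
    simp_rw [s1]
    rw [integral_finsetSum _ fun i _ => (integrable_supp_mul sK2.continuous h.suppK
      (hVii i)).const_mul _]
    refine Finset.sum_congr rfl fun i _ => ?_
    rw [integral_const_mul, integral_by_parts (sK2.of_le (by norm_num)) h.suppK (hVi i) i,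
      integral_by_parts (sKi i) (pd1_zero_of_supp h.suppK i) hV1 i, neg_neg, ← integral_const_mul]
    refine integral_congr_ae (Filter.Eventually.of_forall fun z => ?_)
    simp only; ring
  -- the pointwise kernel relation, integrated
  have e3 : ∑ i, ∫ z, (a i * pd1 (pd1 K i) i z) * V z
      = - ((N : ℝ) * ∫ z, P z * V z) - ∑ i, ∫ z, (P z + z i * pd1 P i z) * V z := by
    have t1 : ∑ i, ∫ z, (P z + z i * pd1 P i z) * V z
        = ∑ i : Fin I, ((∫ z, P z * V z) + ∫ z, (z i * pd1 P i z) * V z) := by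
      refine Finset.sum_congr rfl fun i _ => ?_
      rw [← integral_add iPV (izPV i)]
      simp_rw [add_mul]
    rw [t1, Finset.sum_add_distrib, ← integral_finsetSum _ fun i _ => izPV i,
      ← integral_finsetSum _ fun i _ => iKV i]
    simp only [Finset.sum_const, Finset.card_univ, Fintype.card_fin, nsmul_eq_mul]
    rw [← integral_const_mul, ← integral_const_mul, ← integral_neg]
    have i1 : Integrable (fun z => -((N : ℝ) * (P z * V z))) := (iPV.const_mul _).neg
    have i3 : Integrable (fun z => ∑ i, z i * pd1 P i z * V z) :=
      integrable_finsetSum _ fun i _ => izPV i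
    have i2 : Integrable (fun z => (I : ℝ) * (P z * V z) + ∑ i, z i * pd1 P i z * V z) :=
      (iPV.const_mul _).add i3
    rw [← integral_add (iPV.const_mul _) i3, ← integral_sub i1 i2]
    refine integral_congr_ae (Filter.Eventually.of_forall fun z => ?_)
    have := h.rel z
    simp only [← Finset.sum_mul]
    linear_combination (V z) * this
  have e4 : τ ^ 2 * ∫ z, K z * Lop a v (x + τ • z)
      = - ((N : ℝ) * ∫ z, P z * V z) + τ * ∫ z, P z * fderiv ℝ v (x + τ • z) z := by
    rw [e2, e3, e1]; ring
  have hne := hτ.ne'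
  have hN : (N : ℝ) * τ ^ (N - 1) = N * τ ^ N / τ := by
    rcases N with _ | N
    · simp
    · simp only [Nat.add_sub_cancel]; field_simp; ring
  rw [hN]
  apply mul_left_cancel₀ hne
  field_simp
  linear_combination -e4

end

/-! ### Interior Schauder estimate for `∑ a_i ∂²_ii` on the unit ball -/

section
open MeasureTheory

/-- Mean value inequality against a scalar majorant, on a compact interval. -/
theorem abs_sub_le_of_deriv_le {f f' g g' : ℝ → ℝ} {s h : ℝ} (hsh : s ≤ h)
    (hf : ∀ t ∈ Icc s h, HasDerivAt f (f' t) t) (hg : ∀ t ∈ Icc s h, HasDerivAt g (g' t) t)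
    (hb : ∀ t ∈ Icc s h, |f' t| ≤ g' t) : |f h - f s| ≤ g h - g s := by
  have key := image_norm_le_of_norm_deriv_right_le_deriv_boundary' (a := s) (b := h)
    (f := fun t => f t - f s) (f' := f') (B := fun t => g t - g s) (B' := g')
    (fun t ht => ((hf t ht).continuousAt.sub continuousAt_const).continuousWithinAt)
    (fun t ht => ((hf t (Ico_subset_Icc_self ht)).sub_const _).hasDerivWithinAt)
    (by simp)
    (fun t ht => ((hg t ht).continuousAt.sub continuousAt_const).continuousWithinAt)
    (fun t ht => ((hg t (Ico_subset_Icc_self ht)).sub_const _).hasDerivWithinAt)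
    (fun t ht => by simpa using hb t (Ico_subset_Icc_self ht))
  simpa using key (right_mem_Icc.2 hsh)

theorem integral_pd1_eq_zero {K : Euc I → ℝ} (hK : ContDiff ℝ 1 K)
    (hs : ∀ z, 1 < ‖z‖ → K z = 0) (j : Fin I) : ∫ z, pd1 K j z = 0 := by
  have := integral_by_parts hK hs (contDiff_const (c := (1:ℝ))) j
  simp [pd1] at this
  simpa [pd1] using this

theorem abs_integral_supp_le {P g : Euc I → ℝ} (hPc : Continuous P)
    (hP : ∀ z, 1 < ‖z‖ → P z = 0) {B : ℝ} (hg : ∀ z, ‖z‖ ≤ 1 → |g z| ≤ B) :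
    |∫ z, P z * g z| ≤ (∫ z, |P z|) * B := by
  have hPi : Integrable P := hPc.integrable_of_hasCompactSupport (hasCompactSupport_of_supp hP)
  rw [← integral_mul_const, ← Real.norm_eq_abs]
  refine norm_integral_le_of_norm_le (hPi.abs.mul_const B) (Filter.Eventually.of_forall fun z => ?_)
  rw [Real.norm_eq_abs, abs_mul]
  by_cases hz : ‖z‖ ≤ 1
  · exact mul_le_mul_of_nonneg_left (hg z hz) (abs_nonneg _)
  · rw [hP z (not_le.1 hz)]; simp

theorem norm_add_smul_le {x z : Euc I} {τ : ℝ} (hx : ‖x‖ ≤ 1) (hz : ‖z‖ ≤ 1) (h0 : 0 ≤ τ)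
    (h1 : τ ≤ 1) : ‖x + τ • z‖ ≤ 2 := by
  calc ‖x + τ • z‖ ≤ ‖x‖ + ‖τ • z‖ := norm_add_le _ _
    _ = ‖x‖ + τ * ‖z‖ := by rw [norm_smul, Real.norm_of_nonneg h0]
    _ ≤ 2 := by nlinarith [norm_nonneg z]

/-- A mean-zero kernel averages a Hölder function at scale `τ` to something of size `τ^α`. -/
theorem abs_integral_meanzero_le {K F : Euc I → ℝ} (hKc : Continuous K)
    (hK : ∀ z, 1 < ‖z‖ → K z = 0) (hK0 : ∫ z, K z = 0) (hF : Continuous F) {α H : ℝ}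
    (hα : 0 < α) (hH : 0 ≤ H)
    (hFH : ∀ y y' : Euc I, ‖y‖ ≤ 2 → ‖y'‖ ≤ 2 → |F y - F y'| ≤ H * ‖y - y'‖ ^ α)
    {x : Euc I} (hx : ‖x‖ ≤ 1) {τ : ℝ} (h0 : 0 < τ) (h1 : τ ≤ 1) :
    |∫ z, K z * F (x + τ • z)| ≤ (∫ z, |K z|) * (H * τ ^ α) := by
  have hKi : Integrable K := hKc.integrable_of_hasCompactSupport (hasCompactSupport_of_supp hK)
  have hKF : Integrable fun z => K z * F (x + τ • z) :=
    integrable_supp_mul hKc hK (hF.comp (by fun_prop))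
  have e : ∫ z, K z * F (x + τ • z) = ∫ z, K z * (F (x + τ • z) - F x) := by
    simp_rw [mul_sub]
    rw [integral_sub hKF (hKi.mul_const _), integral_mul_const, hK0]
    simp
  rw [e]
  refine abs_integral_supp_le hKc hK fun z hz => ?_
  refine (hFH _ _ (norm_add_smul_le hx hz h0.le h1) (by linarith)).trans ?_
  refine mul_le_mul_of_nonneg_left ?_ hH
  refine Real.rpow_le_rpow (norm_nonneg _) ?_ hα.le
  rw [add_sub_cancel_left, norm_smul, Real.norm_of_nonneg h0.le]
  nlinarith

/-- Averages against the twice differentiated kernel are averages of second derivatives. -/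
theorem avg_two_eq {P v : Euc I → ℝ} (hP : ContDiff ℝ (⊤ : ℕ∞) P)
    (hs : ∀ z, 1 < ‖z‖ → P z = 0) (hv : ContDiff ℝ 2 v) (x : Euc I) {τ : ℝ} (hτ : 0 < τ)
    (i j : Fin I) :
    avg 2 (pd1 (pd1 P i) j) v x τ = ∫ z, P z * pd1 (pd1 v j) i (x + τ • z) := by
  have hvj : ContDiff ℝ 1 (pd1 v j) := contDiff_pd1 (n := 2) (m := 1) hv j (by norm_num)
  have hP2 : ContDiff ℝ 2 P := hP.of_le two_le_top
  have hPi : ContDiff ℝ 1 (pd1 P i) := contDiff_pd1 (n := 2) (m := 1) hP2 i (by norm_num)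
  have hP1 : ContDiff ℝ 1 P := hP2.of_le (by norm_num)
  have haff : ContDiff ℝ 2 fun z : Euc I => x + τ • z := contDiff_const.add (contDiff_id.const_smul τ)
  have e1 := integral_by_parts hPi (pd1_zero_of_supp hs i)
    ((hv.comp haff).of_le (by norm_num)) j
  have e2 := integral_by_parts hP1 hs (hvj.comp (haff.of_le (by norm_num))) i
  have d1 : pd1 (v ∘ fun z => x + τ • z) j = fun z => τ * pd1 v j (x + τ • z) :=
    pd1_affine (hv.differentiable (by simp)) x τ j
  have d2 : pd1 (pd1 v j ∘ fun z => x + τ • z) i = fun z => τ * pd1 (pd1 v j) i (x + τ • z) :=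
    pd1_affine (hvj.differentiable (by simp)) x τ i
  rw [d1] at e1
  rw [d2] at e2
  have f1 : ∫ z, pd1 P i z * (τ * pd1 v j (x + τ • z)) = τ * ∫ z, pd1 P i z * pd1 v j (x + τ • z) := by
    rw [← integral_const_mul]; congr 1; funext z; ring
  have f2 : ∫ z, P z * (τ * pd1 (pd1 v j) i (x + τ • z))
      = τ * ∫ z, P z * pd1 (pd1 v j) i (x + τ • z) := by
    rw [← integral_const_mul]; congr 1; funext z; ring
  rw [f1] at e1
  rw [f2] at e2
  simp only [Function.comp] at e1 e2
  rw [avg, inv_mul_eq_iff_eq_mul₀ (by positivity)]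
  linear_combination e1 - τ * e2

theorem schauder_const_aux {p q r s A H : ℝ} (hp : 0 ≤ p) (hq : 0 ≤ q) (hr : 0 ≤ r) (hs : 0 ≤ s)
    (hA : 0 ≤ A) (hH : 0 ≤ H) :
    2 * q * H + r * A + s * H ≤ (p + 2 * q + r + s + 1) * (A + H) := by
  have e : (p + 2 * q + r + s + 1) * (A + H) - (2 * q * H + r * A + s * H)
      = p * (A + H) + 2 * q * A + r * H + s * A + A + H := by ring
  have : 0 ≤ p * (A + H) + 2 * q * A + r * H + s * A + A + H := by positivity
  linarith

/-- Interior Schauder estimate on the unit ball for one second derivative. -/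
theorem schauder_unit_ij (hI : 0 < I) (a : Fin I → ℝ) (ha : ∀ i, 0 < a i) (ha1 : ∀ i, a i ≤ 1)
    (α : ℝ) (hα : 0 < α) (hα1 : α < 1) (i j : Fin I) :
    ∃ C : ℝ, 0 < C ∧ ∀ v : Euc I → ℝ, ContDiff ℝ 2 v → ∀ A H : ℝ, 0 ≤ A → 0 ≤ H →
      (∀ y, ‖y‖ ≤ 2 → |v y| ≤ A) →
      (∀ y y', ‖y‖ ≤ 2 → ‖y'‖ ≤ 2 → |Lop a v y - Lop a v y'| ≤ H * ‖y - y'‖ ^ α) →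
      (∀ x, ‖x‖ ≤ 1 → |pd1 (pd1 v j) i x| ≤ C * (A + H)) ∧
      (∀ x y, ‖x‖ ≤ 1 → ‖y‖ ≤ 1 → ‖x - y‖ ≤ 1 →
        |pd1 (pd1 v j) i x - pd1 (pd1 v j) i y| ≤ C * (A + H) * ‖x - y‖ ^ α) := by
  obtain ⟨K, P, hKP, hP0, hm⟩ := exists_base_kernel hI a ha ha1
  have h1 := hKP.deriv i
  have h2 := h1.deriv j
  have h3 : ∀ l, KPair a 3 (pd1 (pd1 (pd1 K i) j) l) (pd1 (pd1 (pd1 P i) j) l) :=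
    fun l => h2.deriv l
  have hle : (1 : WithTop ℕ∞) ≤ ((⊤ : ℕ∞) : WithTop ℕ∞) := le_trans (by norm_num) two_le_top
  set K2 := pd1 (pd1 K i) j with hK2
  set P2 := pd1 (pd1 P i) j with hP2
  have z2 : ∫ z, K2 z = 0 := integral_pd1_eq_zero (h1.smoothK.of_le hle) h1.suppK j
  have z3 : ∀ l, ∫ z, pd1 K2 l z = 0 :=
    fun l => integral_pd1_eq_zero (h2.smoothK.of_le hle) h2.suppK l
  set m := ∫ z, P z with hmdef
  set c2 := ∫ z, |K2 z| with hc2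
  set p2 := ∫ z, |P2 z| with hp2
  set c3 := ∑ l, ∫ z, |pd1 K2 l z| with hc3
  set p3 := ∑ l, ∫ z, |pd1 P2 l z| with hp3
  have c2n : 0 ≤ c2 := integral_nonneg fun z => abs_nonneg _
  have p2n : 0 ≤ p2 := integral_nonneg fun z => abs_nonneg _
  have c3n : 0 ≤ c3 := Finset.sum_nonneg fun l _ => integral_nonneg fun z => abs_nonneg _
  have p3n : 0 ≤ p3 := Finset.sum_nonneg fun l _ => integral_nonneg fun z => abs_nonneg _
  have hβ : 0 < 1 - α := by linarith
  refine ⟨(p2 + 2 * (c2 / α) + p3 + c3 / (1 - α) + 1) / m, by positivity, ?_⟩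
  intro v hv A H hA hH hvA hvH
  have hvj : ContDiff ℝ 1 (pd1 v j) := contDiff_pd1 (n := 2) (m := 1) hv j (by norm_num)
  have hLc : Continuous (Lop a v) := by
    refine continuous_finsetSum _ fun k _ => continuous_const.mul ?_
    exact (contDiff_pd1 (n := 1) (m := 0)
      (contDiff_pd1 (n := 2) (m := 1) hv k (by norm_num)) k (by simp)).continuous
  set D := pd1 (pd1 v j) i with hD
  have hDc : Continuous D := (contDiff_pd1 (n := 1) (m := 0) hvj i (by simp)).continuous
  -- bound of averages against order two kernels, uniformly down to scale zero
  have g2 : ∀ x, ‖x‖ ≤ 1 → ∀ s h, 0 < s → s ≤ h → h ≤ 1 →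
      |avg 2 P2 v x h - avg 2 P2 v x s| ≤ c2 / α * H * h ^ α := by
    intro x hx s h hs hsh hh
    have := abs_sub_le_of_deriv_le (f := avg 2 P2 v x)
      (f' := fun τ => τ * (τ ^ 2)⁻¹ * ∫ z, K2 z * Lop a v (x + τ • z))
      (g := fun τ => c2 / α * H * τ ^ α) (g' := fun τ => c2 / α * H * (α * τ ^ (α - 1))) hsh
      (fun t ht => h2.hasDerivAt_avg hv x (hs.trans_le ht.1))
      (fun t ht => (Real.hasDerivAt_rpow_const (Or.inl (hs.trans_le ht.1).ne')).const_mul _)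
      (fun t ht => by
        have t0 : 0 < t := hs.trans_le ht.1
        have b := abs_integral_meanzero_le h2.smoothK.continuous h2.suppK z2 hLc hα hH hvH hx t0
          (ht.2.trans hh)
        rw [abs_mul, abs_of_pos (by positivity)]
        rw [← hc2] at b
        refine (mul_le_mul_of_nonneg_left b (by positivity)).trans (le_of_eq ?_)
        rw [Real.rpow_sub_one t0.ne']
        field_simp)
    refine this.trans ?_
    have : 0 ≤ c2 / α * H * s ^ α := by positivity
    linarith
  have lim : ∀ x, ‖x‖ ≤ 1 → ∀ h, 0 < h → h ≤ 1 →
      |avg 2 P2 v x h - m * D x| ≤ c2 / α * H * h ^ α := by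
    intro x hx h h0 hh
    refine le_of_forall_pos_le_add fun ε hε => ?_
    obtain ⟨δ, hδ, hδD⟩ := Metric.continuous_iff.1 hDc x (ε / m) (by positivity)
    set s := min h (δ / 2) with hs
    have s0 : 0 < s := lt_min h0 (by positivity)
    have b1 := g2 x hx s h s0 (min_le_left _ _) hh
    have b2 : |avg 2 P2 v x s - m * D x| ≤ ε := by
      rw [hP2, avg_two_eq hKP.smoothP hKP.suppP hv x s0 i j]
      have hi : Integrable fun z => P z * D (x + s • z) :=
        integrable_supp_mul hKP.smoothP.continuous hKP.suppP (hDc.comp (by fun_prop))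
      have hPi : Integrable P := hKP.smoothP.continuous.integrable_of_hasCompactSupport
        (hasCompactSupport_of_supp hKP.suppP)
      rw [hmdef, ← integral_mul_const, ← integral_sub hi (hPi.mul_const _)]
      simp_rw [← mul_sub]
      refine (abs_integral_supp_le (g := fun z => D (x + s • z) - D x) (B := ε / m)
        hKP.smoothP.continuous hKP.suppP fun z hz => ?_).trans (le_of_eq ?_)
      · refine (hδD (x + s • z) ?_).le
        rw [dist_eq_norm, add_sub_cancel_left, norm_smul, Real.norm_of_nonneg s0.le]
        have : s ≤ δ / 2 := min_le_right _ _
        nlinarith [norm_nonneg z]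
      · simp_rw [abs_of_nonneg (hP0 _)]
        rw [← hmdef]; field_simp
    calc |avg 2 P2 v x h - m * D x|
        ≤ |avg 2 P2 v x h - avg 2 P2 v x s| + |avg 2 P2 v x s - m * D x| := abs_sub_le _ _ _
      _ ≤ _ := add_le_add b1 b2
  -- third order averages blow up at most like `h ^ (α - 1)`
  have g3 : ∀ x, ‖x‖ ≤ 1 → ∀ h, 0 < h → h ≤ 1 → ∀ l,
      |avg 3 (pd1 P2 l) v x h| ≤ (∫ z, |pd1 P2 l z|) * A
        + (∫ z, |pd1 K2 l z|) / (1 - α) * H * h ^ (α - 1) := by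
    intro x hx h h0 hh l
    set ck := ∫ z, |pd1 K2 l z| with hck
    have ckn : 0 ≤ ck := integral_nonneg fun z => abs_nonneg _
    have b1 := abs_sub_le_of_deriv_le (f := avg 3 (pd1 P2 l) v x)
      (f' := fun τ => τ * (τ ^ 3)⁻¹ * ∫ z, pd1 K2 l z * Lop a v (x + τ • z))
      (g := fun τ => -(ck / (1 - α) * H) * τ ^ (α - 1))
      (g' := fun τ => -(ck / (1 - α) * H) * ((α - 1) * τ ^ (α - 1 - 1))) hh
      (fun t ht => (h3 l).hasDerivAt_avg hv x (h0.trans_le ht.1))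
      (fun t ht => (Real.hasDerivAt_rpow_const (Or.inl (h0.trans_le ht.1).ne')).const_mul _)
      (fun t ht => by
        have t0 : 0 < t := h0.trans_le ht.1
        have b := abs_integral_meanzero_le (h3 l).smoothK.continuous (h3 l).suppK (z3 l) hLc hα hH
          hvH hx t0 ht.2
        rw [abs_mul, abs_of_pos (by positivity)]
        refine (mul_le_mul_of_nonneg_left b (by positivity)).trans (le_of_eq ?_)
        rw [Real.rpow_sub_one t0.ne', Real.rpow_sub_one t0.ne']
        field_simp
        ring)
    have b2 : |avg 3 (pd1 P2 l) v x 1| ≤ (∫ z, |pd1 P2 l z|) * A := by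
      rw [avg]
      simp only [one_pow, inv_one, one_mul]
      exact abs_integral_supp_le (h3 l).smoothP.continuous (h3 l).suppP fun z hz =>
        hvA _ (norm_add_smul_le hx hz zero_le_one le_rfl)
    have b3 : 0 ≤ ck / (1 - α) * H := by positivity
    simp only [Real.one_rpow] at b1
    have b4 : |avg 3 (pd1 P2 l) v x h| ≤ |avg 3 (pd1 P2 l) v x 1|
        + |avg 3 (pd1 P2 l) v x 1 - avg 3 (pd1 P2 l) v x h| := by
      have := abs_sub_abs_le_abs_sub (avg 3 (pd1 P2 l) v x h) (avg 3 (pd1 P2 l) v x 1)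
      rw [abs_sub_comm] at this
      linarith
    linarith
  constructor
  · intro x hx
    have b1 := lim x hx 1 one_pos le_rfl
    have b2 : |avg 2 P2 v x 1| ≤ p2 * A := by
      rw [avg]
      simp only [one_pow, inv_one, one_mul]
      exact abs_integral_supp_le h2.smoothP.continuous h2.suppP fun z hz =>
        hvA _ (norm_add_smul_le hx hz zero_le_one le_rfl)
    rw [Real.one_rpow, mul_one] at b1
    have b3 : m * |D x| ≤ p2 * A + c2 / α * H := by
      have em : m * |D x| = |m * D x| := by rw [abs_mul, abs_of_pos hm]
      rw [em]
      have := abs_sub_abs_le_abs_sub (m * D x) (avg 2 P2 v x 1)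
      rw [abs_sub_comm] at this
      linarith
    rw [div_mul_eq_mul_div, le_div_iff₀ hm, mul_comm]
    refine b3.trans ?_
    have q1 : 0 ≤ c2 / α := by positivity
    have q2 : 0 ≤ c3 / (1 - α) := by positivity
    nlinarith [mul_nonneg q1 hA, mul_nonneg q2 hA, mul_nonneg p3n hA, mul_nonneg p2n hH,
      mul_nonneg q1 hH, mul_nonneg q2 hH, mul_nonneg p3n hH]
  · intro x y hx hy hxy
    set h := ‖x - y‖ with hh
    rcases (norm_nonneg (x - y)).eq_or_lt with h0 | h0
    · have : x = y := sub_eq_zero.1 (norm_eq_zero.1 h0.symm)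
      rw [this, sub_self, abs_zero]; positivity
    rw [← hh] at h0
    have hα' : 0 ≤ h ^ α := by positivity
    have lx := lim x hx h h0 hxy
    have ly := lim y hy h h0 hxy
    -- the averages at scale `h` vary with the centre through the third order kernels
    have mid : |avg 2 P2 v y h - avg 2 P2 v x h| ≤ (p3 * A + c3 / (1 - α) * H) * h ^ α := by
      have hder : ∀ t : ℝ, HasDerivAt (fun t : ℝ => (h ^ 2)⁻¹ * ∫ z, P2 z * v ((x + h • z) + t • (y - x)))
          ((h ^ 2)⁻¹ * ∫ z, P2 z * fderiv ℝ v ((x + h • z) + t • (y - x)) (y - x)) t := fun t =>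
        (hasDerivAt_integral_affine h2.smoothP.continuous h2.suppP (hv.of_le (by norm_num))
          (X := fun z => x + h • z) (Y := fun _ => y - x) (by fun_prop) continuous_const t).const_mul _
      have hb : ∀ t ∈ Icc (0:ℝ) 1,
          |(h ^ 2)⁻¹ * ∫ z, P2 z * fderiv ℝ v ((x + h • z) + t • (y - x)) (y - x)|
            ≤ (p3 * A + c3 / (1 - α) * H) * h ^ α := by
        intro t ht
        set p := x + t • (y - x) with hp
        have hpn : ‖p‖ ≤ 1 := by
          have : p = (1 - t) • x + t • y := by rw [hp]; module
          rw [this]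
          refine (norm_add_le _ _).trans ?_
          rw [norm_smul, norm_smul, Real.norm_of_nonneg ht.1, Real.norm_of_nonneg (by linarith [ht.2])]
          nlinarith [ht.1, ht.2]
        have e1 : ∀ z, P2 z * fderiv ℝ v ((x + h • z) + t • (y - x)) (y - x)
            = ∑ l, (y - x) l * (P2 z * pd1 v l (p + h • z)) := by
          intro z
          have : (x + h • z) + t • (y - x) = p + h • z := by rw [hp]; module
          rw [this, fderiv_eq_sum_pd1, Finset.mul_sum]
          exact Finset.sum_congr rfl fun l _ => by ring
        have cl : ∀ l, Continuous (pd1 v l) := fun l =>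
          (contDiff_pd1 (n := 2) (m := 1) hv l (by norm_num)).continuous
        have e2 : ∀ l, ∫ z, P2 z * pd1 v l (p + h • z) = -(h ^ 2 * avg 3 (pd1 P2 l) v p h) := by
          intro l
          have haff : ContDiff ℝ 2 fun z : Euc I => p + h • z :=
            contDiff_const.add (contDiff_id.const_smul h)
          have := integral_by_parts (h2.smoothP.of_le hle) h2.suppP
            ((hv.comp haff).of_le (by norm_num)) l
          have d1 : pd1 (v ∘ fun z => p + h • z) l = fun z => h * pd1 v l (p + h • z) :=
            pd1_affine (hv.differentiable (by simp)) p h l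
          rw [d1] at this
          have f1 : ∫ z, P2 z * (h * pd1 v l (p + h • z)) = h * ∫ z, P2 z * pd1 v l (p + h • z) := by
            rw [← integral_const_mul]; congr 1; funext z; ring
          rw [f1] at this
          simp only [Function.comp] at this
          rw [avg]
          apply mul_left_cancel₀ h0.ne'
          rw [this]
          field_simp
        simp_rw [e1]
        have il : ∀ l, Integrable fun z => (y - x) l * (P2 z * pd1 v l (p + h • z)) := fun l =>
          (integrable_supp_mul h2.smoothP.continuous h2.suppP
            (show Continuous fun z => pd1 v l (p + h • z) from (cl l).comp (by fun_prop))).const_mul _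
        rw [integral_finsetSum _ fun l _ => il l]
        simp_rw [integral_const_mul, e2]
        rw [Finset.mul_sum]
        refine (Finset.abs_sum_le_sum_abs _ _).trans ?_
        have e3 : ∀ l ∈ Finset.univ, |(h ^ 2)⁻¹ * ((y - x) l * -(h ^ 2 * avg 3 (pd1 P2 l) v p h))|
            ≤ ((∫ z, |pd1 P2 l z|) * A + (∫ z, |pd1 K2 l z|) / (1 - α) * H) * h ^ α := by
          intro l _
          have q1 : (h ^ 2)⁻¹ * ((y - x) l * -(h ^ 2 * avg 3 (pd1 P2 l) v p h))
              = -((y - x) l * avg 3 (pd1 P2 l) v p h) := by field_simp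
          have q2 : |(y - x) l| ≤ h := by
            rw [hh, norm_sub_rev]; exact abs_coord_le _ _
          rw [q1, abs_neg, abs_mul]
          have q3 := g3 p hpn h h0 hxy l
          have q4 : h * h ^ (α - 1) = h ^ α := by
            rw [Real.rpow_sub_one h0.ne']; field_simp
          have q5 : h ≤ h ^ α := by
            simpa using Real.rpow_le_rpow_of_exponent_ge h0 hxy hα1.le
          calc |(y - x) l| * |avg 3 (pd1 P2 l) v p h|
              ≤ h * ((∫ z, |pd1 P2 l z|) * A
                + (∫ z, |pd1 K2 l z|) / (1 - α) * H * h ^ (α - 1)) :=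
                mul_le_mul q2 q3 (abs_nonneg _) h0.le
            _ = h * ((∫ z, |pd1 P2 l z|) * A)
                + (∫ z, |pd1 K2 l z|) / (1 - α) * H * (h * h ^ (α - 1)) := by ring
            _ ≤ h ^ α * ((∫ z, |pd1 P2 l z|) * A)
                + (∫ z, |pd1 K2 l z|) / (1 - α) * H * (h * h ^ (α - 1)) := by
                have : 0 ≤ (∫ z, |pd1 P2 l z|) * A :=
                  mul_nonneg (integral_nonneg fun z => abs_nonneg _) hA
                nlinarith
            _ = _ := by rw [q4]; ring
        refine (Finset.sum_le_sum e3).trans (le_of_eq ?_)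
        rw [hp3, hc3, ← Finset.sum_mul, Finset.sum_add_distrib, Finset.sum_mul, Finset.sum_div,
          Finset.sum_mul]
      have := abs_sub_le_of_deriv_le (s := 0) (h := 1) zero_le_one
        (g := fun t => (p3 * A + c3 / (1 - α) * H) * h ^ α * t)
        (g' := fun t => (p3 * A + c3 / (1 - α) * H) * h ^ α) (fun t _ => hder t)
        (fun t _ => by simpa using (hasDerivAt_id t).const_mul ((p3 * A + c3 / (1 - α) * H) * h ^ α)) hb
      have e0 : ∀ z : Euc I, x + h • z + (1:ℝ) • (y - x) = y + h • z := fun z => by module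
      simp only [e0, zero_smul, add_zero, mul_one, mul_zero, sub_zero, ← mul_sub] at this
      rw [avg, avg, ← mul_sub]
      exact this
    have fin : m * |D x - D y| ≤ (2 * (c2 / α) * H + p3 * A + c3 / (1 - α) * H) * h ^ α := by
      have em : m * |D x - D y| = |m * (D x - D y)| := by rw [abs_mul, abs_of_pos hm]
      rw [em]
      have : m * (D x - D y) = (avg 2 P2 v y h - m * D y) - (avg 2 P2 v x h - m * D x)
          - (avg 2 P2 v y h - avg 2 P2 v x h) := by ring
      rw [this]
      refine (abs_sub _ _).trans ?_
      have := abs_sub (avg 2 P2 v y h - m * D y) (avg 2 P2 v x h - m * D x)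
      linarith
    rw [div_mul_eq_mul_div, div_mul_eq_mul_div, le_div_iff₀ hm, mul_comm]
    refine fin.trans ?_
    refine mul_le_mul_of_nonneg_right ?_ hα'
    have q1 : 0 ≤ c2 / α := by positivity
    have q2 : 0 ≤ c3 / (1 - α) := by positivity
    exact schauder_const_aux p2n q1 p3n q2 hA hH

end

/-! ### Interior Schauder estimate on a general ball -/

/-- A function that is `C²` on a ball agrees, near each point of a smaller closed ball, with a
globally `C²` function. -/
theorem exists_cutoff {φ : Euc I → ℝ} {x0 : Euc I} {r : ℝ} (hr : 0 < r)
    (hφ : ContDiffOn ℝ 2 φ (ball x0 (4 * r))) :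
    ∃ ψ : Euc I → ℝ, ContDiff ℝ 2 ψ ∧ ∀ y ∈ closedBall x0 (2 * r), ψ =ᶠ[nhds y] φ := by
  let χ : ContDiffBump x0 := ⟨3 * r, 7 / 2 * r, by positivity, by linarith⟩
  refine ⟨fun z => χ z * φ z, ?_, ?_⟩
  · rw [contDiff_iff_contDiffAt]
    intro z
    by_cases hz : z ∈ ball x0 (4 * r)
    · exact χ.contDiffAt.mul (hφ.contDiffAt (isOpen_ball.mem_nhds hz))
    · have hz' : z ∈ (closedBall x0 (7 / 2 * r))ᶜ := by
        simp only [mem_ball, not_lt, mem_compl_iff, mem_closedBall, not_le] at hz ⊢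
        linarith
      have : (fun z => χ z * φ z) =ᶠ[nhds z] fun _ => 0 := by
        filter_upwards [isClosed_closedBall.isOpen_compl.mem_nhds hz'] with w hw
        have : χ w = 0 := by
          apply χ.zero_of_le_dist
          simp only [mem_compl_iff, mem_closedBall, not_le] at hw
          exact hw.le
        rw [this, zero_mul]
      exact contDiffAt_const.congr_of_eventuallyEq this
  · intro y hy
    have : y ∈ ball x0 (3 * r) := by
      simp only [mem_closedBall, mem_ball] at hy ⊢
      linarith
    filter_upwards [isOpen_ball.mem_nhds this] with w hw
    have : χ w = 1 := χ.one_of_mem_closedBall (ball_subset_closedBall hw)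
    rw [this, one_mul]

/-- Interior Schauder estimate at the centre of a ball of radius `4 r`, for all second
derivatives at once. -/
theorem schauder_local (hI : 0 < I) (a : Fin I → ℝ) (ha : ∀ i, 0 < a i) (ha1 : ∀ i, a i ≤ 1)
    (α : ℝ) (hα : 0 < α) (hα1 : α < 1) :
    ∃ C : ℝ, 0 < C ∧ ∀ (φ : Euc I → ℝ) (x0 : Euc I) (r : ℝ), 0 < r →
      ContDiffOn ℝ 2 φ (ball x0 (4 * r)) → ∀ A H : ℝ, 0 ≤ A → 0 ≤ H →
      (∀ y, ‖y - x0‖ ≤ 2 * r → |φ y| ≤ A) →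
      (∀ y y', ‖y - x0‖ ≤ 2 * r → ‖y' - x0‖ ≤ 2 * r →
        |Lop a φ y - Lop a φ y'| ≤ H * (‖y - y'‖ / r) ^ α) → ∀ i j,
      |pd1 (pd1 φ j) i x0| ≤ C * (A / r ^ 2 + H) ∧
      ∀ y, ‖y - x0‖ ≤ r →
        |pd1 (pd1 φ j) i x0 - pd1 (pd1 φ j) i y| ≤ C * (A / r ^ 2 + H) * (‖x0 - y‖ / r) ^ α := by
  choose C hC0 hC using fun i j => schauder_unit_ij hI a ha ha1 α hα hα1 i j
  have hCle : ∀ i j, C i j ≤ ∑ i, ∑ j, C i j := fun i j =>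
    (Finset.single_le_sum (f := fun j => C i j) (fun j _ => (hC0 i j).le) (mem_univ j)).trans
      (Finset.single_le_sum (f := fun i => ∑ j, C i j)
        (fun i _ => Finset.sum_nonneg fun j _ => (hC0 i j).le) (mem_univ i))
  refine ⟨∑ i, ∑ j, C i j, (hC0 ⟨0, hI⟩ ⟨0, hI⟩).trans_le (hCle _ _), ?_⟩
  intro φ x0 r hr hφ A H hA hH hφA hφH i j
  obtain ⟨ψ, hψ, hψφ⟩ := exists_cutoff hr hφ
  set v : Euc I → ℝ := fun z => (r ^ 2)⁻¹ * ψ (x0 + r • z) with hv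
  have hvC : ContDiff ℝ 2 v := contDiff_const.mul (hψ.comp (by fun_prop))
  have hmem : ∀ z : Euc I, ‖z‖ ≤ 2 → ‖x0 + r • z - x0‖ ≤ 2 * r := by
    intro z hz
    rw [add_sub_cancel_left, norm_smul, Real.norm_of_nonneg hr.le]
    nlinarith
  have hev : ∀ z : Euc I, ‖z‖ ≤ 2 → ψ =ᶠ[nhds (x0 + r • z)] φ := fun z hz =>
    hψφ _ (by rw [mem_closedBall, dist_eq_norm]; exact hmem z hz)
  have hψ1 : ∀ j, ContDiff ℝ 1 (pd1 ψ j) :=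
    fun j => contDiff_pd1 (n := 2) (m := 1) hψ j (by norm_num)
  have hv2 : ∀ i j, pd1 (pd1 v j) i = fun z => pd1 (pd1 ψ j) i (x0 + r • z) := by
    intro i j
    have e1 : pd1 v j = fun z => r⁻¹ * pd1 ψ j (x0 + r • z) := by
      funext z
      have hd : Differentiable ℝ ψ := hψ.differentiable (by norm_num)
      have := congrFun (pd1_affine hd x0 r j) z
      rw [hv, pd1_const_mul (by fun_prop), this]
      field_simp
    have hd : Differentiable ℝ (pd1 ψ j) := (hψ1 j).differentiable (by norm_num)
    rw [e1]
    funext z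
    have := congrFun (pd1_affine hd x0 r i) z
    rw [pd1_const_mul (by fun_prop), this]
    field_simp
  have hv3 : ∀ i j z, ‖z‖ ≤ 2 → pd1 (pd1 v j) i z = pd1 (pd1 φ j) i (x0 + r • z) := by
    intro i j z hz
    rw [hv2]
    exact pd1_congr (pd1_congr_nhds (hev z hz) j) i
  have hL : ∀ z, ‖z‖ ≤ 2 → Lop a v z = Lop a φ (x0 + r • z) := fun z hz =>
    Finset.sum_congr rfl fun k _ => by rw [hv3 k k z hz]
  have hAr : 0 ≤ A / r ^ 2 := by positivity
  obtain ⟨k1, k2⟩ := hC i j v hvC (A / r ^ 2) H hAr hH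
    (fun z hz => by
      rw [hv]
      dsimp only
      rw [(hev z hz).eq_of_nhds, abs_mul, abs_of_pos (by positivity), inv_mul_eq_div]
      exact div_le_div_of_nonneg_right (hφA _ (hmem z hz)) (by positivity))
    (fun z z' hz hz' => by
      rw [hL z hz, hL z' hz']
      refine (hφH _ _ (hmem z hz) (hmem z' hz')).trans (le_of_eq ?_)
      rw [add_sub_add_left_eq_sub, ← smul_sub, norm_smul, Real.norm_of_nonneg hr.le,
        mul_div_cancel_left₀ _ hr.ne'])
  have hn : 0 ≤ A / r ^ 2 + H := by positivity
  have h0 : pd1 (pd1 v j) i 0 = pd1 (pd1 φ j) i x0 := by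
    rw [hv3 i j 0 (by simp)]; simp
  constructor
  · rw [← h0]
    exact (k1 0 (by simp)).trans (mul_le_mul_of_nonneg_right (hCle i j) hn)
  · intro y hy
    set z := r⁻¹ • (y - x0) with hz
    have hz1 : ‖z‖ = ‖y - x0‖ / r := by
      rw [hz, norm_smul, norm_inv, Real.norm_of_nonneg hr.le, inv_mul_eq_div]
    have hz2 : ‖z‖ ≤ 1 := by rw [hz1]; exact (div_le_one hr).2 hy
    have hz3 : x0 + r • z = y := by rw [hz, smul_inv_smul₀ hr.ne']; abel
    have := k2 0 z (by simp) hz2 (by simpa using hz2)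
    rw [h0, hv3 i j z (by linarith), hz3, zero_sub, norm_neg, hz1, norm_sub_rev] at this
    refine this.trans (mul_le_mul_of_nonneg_right ?_ (by positivity))
    exact mul_le_mul_of_nonneg_right (hCle i j) hn

/-! ### Maximum principle for the HJB equation -/

theorem hasDerivAt_line {f : Euc I → ℝ} {x : Euc I} {i : Fin I} {t : ℝ}
    (hf : DifferentiableAt ℝ f (x + t • EuclideanSpace.single i (1 : ℝ))) :
    HasDerivAt (fun s : ℝ => f (x + s • EuclideanSpace.single i (1 : ℝ)))
      (pd1 f i (x + t • EuclideanSpace.single i (1 : ℝ))) t := by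
  have h1 : HasDerivAt (fun s : ℝ => x + s • EuclideanSpace.single i (1 : ℝ))
      (EuclideanSpace.single i (1 : ℝ)) t := by
    simpa using ((hasDerivAt_id t).smul_const (EuclideanSpace.single i (1 : ℝ))).const_add x
  exact hf.hasFDerivAt.comp_hasDerivAt t h1

/-- `pd1 f i` is `C¹` at points where `f` is `C²`. -/
theorem contDiffAt_pd1 {f : Euc I → ℝ} {x : Euc I} (hf : ContDiffAt ℝ 2 f x) (i : Fin I) :
    ContDiffAt ℝ 1 (pd1 f i) x :=
  (hf.fderiv_right (m := 1) (by norm_num)).clm_apply contDiffAt_const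

/-- Second derivative test at an interior maximum, in the coordinate directions. -/
theorem pd2_nonpos_of_isLocalMax {f : Euc I → ℝ} {x : Euc I} (hf : ContDiffAt ℝ 2 f x)
    (hm : IsLocalMax f x) (i : Fin I) : pd1 f i x = 0 ∧ pd2 f i x ≤ 0 := by
  have h0 : pd1 f i x = 0 := by rw [pd1, hm.fderiv_eq_zero]; rfl
  refine ⟨h0, ?_⟩
  by_contra hpos
  rw [not_le] at hpos
  set e : Euc I := EuclideanSpace.single i (1 : ℝ) with he
  set h : ℝ → ℝ := fun s => f (x + s • e) with hh
  have hcont : Continuous fun s : ℝ => x + s • e := by fun_prop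
  have hx0 : x + (0 : ℝ) • e = x := by simp
  have htend : Filter.Tendsto (fun s : ℝ => x + s • e) (nhds 0) (nhds x) := by
    have := hcont.tendsto 0
    rwa [hx0] at this
  have hev : ∀ᶠ y in nhds x, DifferentiableAt ℝ f y := by
    have := hf.eventually (by simp)
    filter_upwards [this] with y hy using hy.differentiableAt (by norm_num)
  have hd1 : deriv h =ᶠ[nhds 0] fun s => pd1 f i (x + s • e) := by
    filter_upwards [htend.eventually hev] with s hs using (hasDerivAt_line hs).deriv
  have hd2 : deriv (deriv h) 0 = pd2 f i x := by
    rw [hd1.deriv_eq]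
    have : DifferentiableAt ℝ (pd1 f i) (x + (0 : ℝ) • e) := by
      rw [hx0]; exact (contDiffAt_pd1 hf i).differentiableAt (by norm_num)
    have := (hasDerivAt_line this).deriv
    rw [this, hx0]; rfl
  have hd0 : deriv h 0 = 0 := by
    rw [hd1.eq_of_nhds, hx0, h0]
  have hc : ContinuousAt h 0 := by
    have : ContinuousAt f (x + (0:ℝ) • e) := by rw [hx0]; exact hf.continuousAt
    exact ContinuousAt.comp (f := fun s : ℝ => x + s • e) this hcont.continuousAt
  have hmin : IsLocalMin h 0 := isLocalMin_of_deriv_deriv_pos (by rw [hd2]; exact hpos) hd0 hc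
  have hmax : IsLocalMax h 0 := by
    have := htend.eventually hm
    filter_upwards [this] with s hs
    simpa [hh] using hs
  have hconst : h =ᶠ[nhds 0] fun _ => h 0 := by
    filter_upwards [hmin, hmax] with s h1 h2 using le_antisymm h2 h1
  have : deriv (deriv h) 0 = 0 := by
    have h1 : deriv h =ᶠ[nhds 0] fun _ => 0 := by
      filter_upwards [hconst.eventuallyEq_nhds] with s hs
      rw [hs.deriv_eq]; simp
    rw [h1.deriv_eq]; simp
  rw [hd2] at this
  linarith

/-- A function continuous on a closed ball that vanishes on the sphere and is positive somewhere
has a positive interior local maximum. -/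
theorem exists_interior_max {f : Euc I → ℝ} {R : ℝ} (hf : ContinuousOn f (closedBall 0 R))
    (hb : ∀ x : Euc I, ‖x‖ = R → f x ≤ 0) {x : Euc I} (hx : ‖x‖ ≤ R) (hpos : 0 < f x) :
    ∃ y : Euc I, ‖y‖ < R ∧ 0 < f y ∧ IsLocalMax f y := by
  obtain ⟨y, hy, hmax⟩ := (isCompact_closedBall (0 : Euc I) R).exists_isMaxOn
    ⟨x, by simpa using hx⟩ hf
  have hyR : ‖y‖ ≤ R := by simpa using hy
  have hfy : 0 < f y := hpos.trans_le (hmax (by simpa using hx))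
  have hlt : ‖y‖ < R := lt_of_le_of_ne hyR fun h => absurd (hb y h) (not_le.2 hfy)
  refine ⟨y, hlt, hfy, ?_⟩
  have : closedBall (0 : Euc I) R ∈ nhds y :=
    Filter.mem_of_superset (isOpen_ball.mem_nhds (by simpa using hlt)) ball_subset_closedBall
  exact hmax.isLocalMax this

/-- Diffusion coefficient of `∂²_ii` in the HJB equation when no control is exerted. -/
def dcoef (μ a : Fin I → ℝ) (lam : ℝ) (n : ℕ) (x : Euc I) (i : Fin I) : ℝ :=
  a i * lam + μ i * (nu μ a i * n + x i)

/-- Uncontrolled drift coefficient in the HJB equation. -/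
def drift (μ a : Fin I → ℝ) (lam : ℝ) (n : ℕ) (x : Euc I) (i : Fin I) : ℝ :=
  (a i * lam - μ i * nu μ a i * n) - μ i * x i

/-- Positive part of the total `e · x`. -/
def pos (x : Euc I) : ℝ := max (∑ j, x j) 0

theorem pos_nonneg (x : Euc I) : 0 ≤ pos x := le_max_right _ _

/-- The linear operator obtained from the HJB operator by always using the index `i₀`. -/
theorem linear_form (μ c d l φ1 φ2 : Fin I → ℝ) (g : ℝ) (i₀ : Fin I) :
    g * (c i₀ + μ i₀ * φ1 i₀ - (1 / 2) * μ i₀ * φ2 i₀) + ∑ i, l i * φ1 i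
      + (1 / 2) * ∑ i, d i * φ2 i
      = g * c i₀ + ∑ i, (l i + if i = i₀ then μ i * g else 0) * φ1 i
        + (1 / 2) * ∑ i, (d i - if i = i₀ then μ i * g else 0) * φ2 i := by
  simp only [add_mul, sub_mul, Finset.sum_add_distrib, Finset.sum_sub_distrib, ite_mul, zero_mul,
    Finset.sum_ite_eq', Finset.mem_univ, if_true]
  ring

section maxprinciple
variable {μ a c : Fin I → ℝ} {γ lam R : ℝ} {n : ℕ} {φ : Euc I → ℝ}

/-- Solutions are nonnegative: at a negative interior minimum the running cost `c` and the
discounting give the wrong sign. -/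
theorem sol_nonneg (hI : 0 < I) (hc : ∀ i, 0 < c i) (hγ : 0 < γ)
    (hμ : ∀ i, 0 < μ i)
    (hsol : IsSolGen μ a c γ lam n R (fun y => max y 0) φ)
    (hd : ∀ x : Euc I, ‖x‖ < R → ∀ i, μ i * pos x ≤ dcoef μ a lam n x i) :
    ∀ x : Euc I, ‖x‖ ≤ R → 0 ≤ φ x := by
  obtain ⟨⟨K, hK⟩, h2, hb, hE⟩ := hsol
  intro x hx
  by_contra hneg
  rw [not_le] at hneg
  obtain ⟨y, hy, hfy, hmax⟩ := exists_interior_max (f := fun z => -φ z) hK.continuousOn.neg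
    (fun z hz => by simp [hb z hz]) hx (by simpa using hneg)
  have hyb : y ∈ ball (0 : Euc I) R := by simpa using hy
  have hφy : ContDiffAt ℝ 2 φ y := h2.contDiffAt (isOpen_ball.mem_nhds hyb)
  have hmin : ∀ i, pd1 φ i y = 0 ∧ 0 ≤ pd2 φ i y := by
    intro i
    have := pd2_nonpos_of_isLocalMax hφy.neg hmax i
    have e : ∀ z, pd1 (fun z => -φ z) i z = -pd1 φ i z := fun z => by
      simp [pd1, fderiv_fun_neg]
    have e2 : pd2 (fun z => -φ z) i y = -pd2 φ i y := by
      rw [pd2, show pd1 (fun z => -φ z) i = fun z => -pd1 φ i z from funext e]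
      simp [pd2, fderiv_fun_neg]
    rw [e, e2] at this
    exact ⟨by linarith [this.1], by linarith [this.2]⟩
  have : Nonempty (Fin I) := ⟨⟨0, hI⟩⟩
  have eq := hE y hyb
  rw [HJBgen] at eq
  obtain ⟨i₀, hi₀⟩ := exists_eq_ciInf_of_finite
    (f := fun i => c i + μ i * pd1 φ i y - (1 / 2) * μ i * pd2 φ i y)
  rw [← hi₀] at eq
  have lf := linear_form μ c (dcoef μ a lam n y) (drift μ a lam n y) (fun i => pd1 φ i y)
    (fun i => pd2 φ i y) (pos y) i₀
  simp only [dcoef, drift, pos] at lf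
  have s1 : ∑ i, (((a i * lam - μ i * nu μ a i * n) - μ i * y i)
      + if i = i₀ then μ i * max (∑ j, y j) 0 else 0) * pd1 φ i y = 0 :=
    Finset.sum_eq_zero fun i _ => by rw [(hmin i).1, mul_zero]
  have s2 : 0 ≤ ∑ i, (a i * lam + μ i * (nu μ a i * n + y i)
      - if i = i₀ then μ i * max (∑ j, y j) 0 else 0) * pd2 φ i y := by
    refine Finset.sum_nonneg fun i _ => mul_nonneg ?_ (hmin i).2
    have h1 := hd y hy i
    have h2 : 0 ≤ μ i * pos y := mul_nonneg (hμ i).le (pos_nonneg y)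
    simp only [dcoef, pos] at h1 h2
    split_ifs
    · linarith
    · linarith
  have s3 : 0 ≤ max (∑ j, y j) 0 * c i₀ := mul_nonneg (pos_nonneg y) (hc i₀).le
  have s4 : 0 < γ * (-φ y) := mul_pos hγ hfy
  linarith

/-- Comparison with a strict supersolution of the equation with the index frozen at `i₀`. -/
theorem sol_le_of_super (hγ : 0 < γ) (hμ : ∀ i, 0 < μ i)
    (hsol : IsSolGen μ a c γ lam n R (fun y => max y 0) φ)
    (hd : ∀ x : Euc I, ‖x‖ < R → ∀ i, μ i * pos x ≤ dcoef μ a lam n x i)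
    (i₀ : Fin I) {V : Euc I → ℝ} (hV : ContDiff ℝ 2 V) (hV0 : ∀ x : Euc I, ‖x‖ = R → 0 ≤ V x)
    (hsup : ∀ x : Euc I, ‖x‖ < R → -γ * V x + (pos x * c i₀
      + ∑ i, (drift μ a lam n x i + if i = i₀ then μ i * pos x else 0) * pd1 V i x
      + (1 / 2) * ∑ i, (dcoef μ a lam n x i - if i = i₀ then μ i * pos x else 0) * pd2 V i x)
        < 0) :
    ∀ x : Euc I, ‖x‖ ≤ R → φ x ≤ V x := by
  obtain ⟨⟨K, hK⟩, h2, hb, hE⟩ := hsol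
  intro x hx
  by_contra hneg
  rw [not_le] at hneg
  obtain ⟨y, hy, hfy, hmax⟩ := exists_interior_max (f := fun z => φ z - V z)
    (hK.continuousOn.sub hV.continuous.continuousOn)
    (fun z hz => by simp [hb z hz, hV0 z hz]) hx (by simpa using hneg)
  have hyb : y ∈ ball (0 : Euc I) R := by simpa using hy
  have hφy : ContDiffAt ℝ 2 φ y := h2.contDiffAt (isOpen_ball.mem_nhds hyb)
  have hmin : ∀ i, pd1 φ i y = pd1 V i y ∧ pd2 φ i y ≤ pd2 V i y := by
    intro i
    have := pd2_nonpos_of_isLocalMax (hφy.sub hV.contDiffAt) hmax i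
    have e : ∀ z ∈ ball (0 : Euc I) R, pd1 (fun z => φ z - V z) i z = pd1 φ i z - pd1 V i z := by
      intro z hz
      have hφz : ContDiffAt ℝ 2 φ z := h2.contDiffAt (isOpen_ball.mem_nhds hz)
      rw [pd1, fderiv_fun_sub (hφz.differentiableAt (by norm_num))
        (hV.contDiffAt.differentiableAt (by norm_num))]
      rfl
    have e2 : pd2 (fun z => φ z - V z) i y = pd2 φ i y - pd2 V i y := by
      have : pd1 (fun z => φ z - V z) i =ᶠ[nhds y] fun z => pd1 φ i z - pd1 V i z := by
        filter_upwards [isOpen_ball.mem_nhds hyb] with z hz using e z hz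
      rw [pd2, this.fderiv_eq, fderiv_fun_sub
        ((contDiffAt_pd1 hφy i).differentiableAt (by norm_num))
        ((contDiffAt_pd1 hV.contDiffAt i).differentiableAt (by norm_num))]
      rfl
    have t1 := this.1
    have t2 := this.2
    rw [e y hyb] at t1
    rw [e2] at t2
    exact ⟨by linarith, by linarith⟩
  have : Nonempty (Fin I) := ⟨i₀⟩
  have eq := hE y hyb
  rw [HJBgen] at eq
  have hinf : (⨅ i, (c i + μ i * pd1 φ i y - (1 / 2) * μ i * pd2 φ i y))
      ≤ c i₀ + μ i₀ * pd1 φ i₀ y - (1 / 2) * μ i₀ * pd2 φ i₀ y :=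
    ciInf_le (Set.finite_range _).bddBelow i₀
  have hinf2 := mul_le_mul_of_nonneg_left hinf (pos_nonneg y)
  have lf := linear_form μ c (dcoef μ a lam n y) (drift μ a lam n y) (fun i => pd1 φ i y)
    (fun i => pd2 φ i y) (pos y) i₀
  have s1 : ∑ i, (drift μ a lam n y i + if i = i₀ then μ i * pos y else 0) * pd1 φ i y
      = ∑ i, (drift μ a lam n y i + if i = i₀ then μ i * pos y else 0) * pd1 V i y :=
    Finset.sum_congr rfl fun i _ => by rw [(hmin i).1]
  have s2 : ∑ i, (dcoef μ a lam n y i - if i = i₀ then μ i * pos y else 0) * pd2 φ i y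
      ≤ ∑ i, (dcoef μ a lam n y i - if i = i₀ then μ i * pos y else 0) * pd2 V i y := by
    refine Finset.sum_le_sum fun i _ => mul_le_mul_of_nonneg_left (hmin i).2 ?_
    have h1 := hd y hy i
    have h2 : 0 ≤ μ i * pos y := mul_nonneg (hμ i).le (pos_nonneg y)
    split_ifs
    · linarith
    · linarith
  have s4 : 0 < γ * (φ y - V y) := mul_pos hγ hfy
  have s5 := hsup y hy
  rw [s1] at lf
  simp only [dcoef, drift, pos] at *
  linarith

end maxprinciple

/-! ### The barrier and the growth of the solution at the boundary -/

/-- The barrier `T (1 - exp (-p (R² - |x|²)))`. -/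
def barrier (T p R : ℝ) (x : Euc I) : ℝ := T * (1 - Real.exp (-p * (R ^ 2 - ∑ j, x j * x j)))

theorem sum_sq_eq (x : Euc I) : ∑ j, x j * x j = ‖x‖ ^ 2 := by
  rw [EuclideanSpace.norm_sq_eq]
  exact Finset.sum_congr rfl fun j _ => by rw [Real.norm_eq_abs, sq_abs]; ring

theorem contDiff_barrier (T p R : ℝ) {k : WithTop ℕ∞} :
    ContDiff ℝ k (barrier T p R : Euc I → ℝ) := by
  refine contDiff_const.mul (contDiff_const.sub (Real.contDiff_exp.comp ?_))
  exact contDiff_const.mul (contDiff_const.sub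
    (ContDiff.sum fun j _ => (contDiff_coord j).mul (contDiff_coord j)))

theorem pd1_exp {f : Euc I → ℝ} {x : Euc I} (hf : DifferentiableAt ℝ f x) (i : Fin I) :
    pd1 (fun z => Real.exp (f z)) i x = Real.exp (f x) * pd1 f i x := by
  rw [pd1, hf.hasFDerivAt.exp.fderiv]; rfl

theorem diff_coord (j : Fin I) : Differentiable ℝ (fun z : Euc I => z j) :=
  (contDiff_coord (n := 1) j).differentiable (by norm_num)

theorem pd1_normsq (i : Fin I) (x : Euc I) :
    pd1 (fun z : Euc I => ∑ j, z j * z j) i x = 2 * x i := by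
  rw [pd1_sum fun j _ => ((diff_coord j).fun_mul (diff_coord j)) x]
  simp_rw [fun j => pd1_mul ((diff_coord j) x) ((diff_coord j) x) i, pd1_coord]
  simp [Finset.sum_add_distrib]
  ring

theorem diff_normsq : Differentiable ℝ (fun z : Euc I => ∑ j, z j * z j) :=
  (ContDiff.sum (n := 1) fun j _ => (contDiff_coord j).mul (contDiff_coord j)).differentiable
    (by norm_num)

/-- The exponential appearing in the barrier. -/
def bexp (p R : ℝ) (x : Euc I) : ℝ := Real.exp (-p * (R ^ 2 - ∑ j, x j * x j))

theorem bexp_eq (p R : ℝ) : (bexp p R : Euc I → ℝ)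
    = fun z => Real.exp (-p * R ^ 2 + p * ∑ j, z j * z j) := by
  funext z; rw [bexp]; congr 1; ring

theorem diff_bexp (p R : ℝ) : Differentiable ℝ (bexp p R : Euc I → ℝ) := by
  rw [bexp_eq]
  exact ((diff_normsq.const_mul p).const_add _).exp

theorem pd1_bexp (p R : ℝ) (i : Fin I) (x : Euc I) :
    pd1 (bexp p R) i x = bexp p R x * (2 * p * x i) := by
  have h1 : DifferentiableAt ℝ (fun z : Euc I => p * ∑ j, z j * z j) x :=
    (diff_normsq.const_mul p) x
  have h2 : pd1 (fun z : Euc I => -p * R ^ 2 + p * ∑ j, z j * z j) i x = 2 * p * x i := by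
    rw [pd1_add (differentiableAt_const _) h1, pd1_const_mul (diff_normsq x), pd1_normsq]
    simp [pd1]; ring
  rw [bexp_eq, pd1_exp (h1.const_add _), h2]

theorem pd1_barrier (T p R : ℝ) (i : Fin I) (x : Euc I) :
    pd1 (barrier T p R) i x = -T * (bexp p R x * (2 * p * x i)) := by
  have : (barrier T p R : Euc I → ℝ) = fun z => T + -T * bexp p R z := by
    funext z; rw [barrier, bexp]; ring
  rw [this, pd1_add (differentiableAt_const _) ((diff_bexp p R).const_mul _ x),
    pd1_const_mul (diff_bexp p R x), pd1_bexp]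
  simp [pd1]

theorem pd2_barrier (T p R : ℝ) (i : Fin I) (x : Euc I) :
    pd2 (barrier T p R) i x = -T * (bexp p R x * (2 * p + 4 * p ^ 2 * x i ^ 2)) := by
  change pd1 (pd1 (barrier T p R) i) i x = _
  have : pd1 (barrier T p R) i = fun z : Euc I => (-T * (2 * p)) * (bexp p R z * z i) := by
    funext z; rw [pd1_barrier]; ring
  rw [this, pd1_const_mul ((diff_bexp p R).fun_mul (diff_coord i) x),
    pd1_mul (diff_bexp p R x) (diff_coord i x), pd1_bexp, pd1_coord]
  simp
  ring

/-- Scalar part of the supersolution inequality: near the sphere the diffusion term wins, away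
from the sphere the discounting does. -/
theorem super_scalar {γ T D p R b S q E s : ℝ} (hγ : 0 < γ) (hT : 0 < T) (hD : 0 < D)
    (hp : 0 < p) (hR : 0 < R) (hb : 0 ≤ b) (hs0 : 0 ≤ s) (hsR : s < R)
    (hq : q = R ^ 2 - s ^ 2) (hE : E = Real.exp (-p * q))
    (h1 : 4 * b ≤ D * (p * R)) (h2 : 8 * S < T * (D * (p * R) ^ 2)) (h3 : 4 * S < γ * T)
    (h4 : 32 * b * (p * R) ≤ γ * (p * R ^ 2) ^ 2) (h5 : 2 ≤ p * R ^ 2) :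
    -γ * (T * (1 - E)) + (S + T * E * (p * s * (2 * b - 2 * D * (p * s)))) < 0 := by
  have hE0 : 0 < E := by rw [hE]; exact Real.exp_pos _
  have hq0 : 0 < q := by rw [hq]; nlinarith
  have hE1 : E < 1 := by
    rw [hE, Real.exp_lt_one_iff]
    nlinarith
  have hTE : 0 < T * E := mul_pos hT hE0
  have hpR : 0 < p * R := mul_pos hp hR
  rcases le_total (R / 2) s with hs | hs
  · have k1 : p * R / 2 ≤ p * s := by nlinarith
    have k2 : 2 * b - 2 * D * (p * s) ≤ -(D * (p * R) / 2) := by nlinarith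
    have k3 : p * s * (2 * b - 2 * D * (p * s)) ≤ p * R / 2 * (-(D * (p * R) / 2)) := by
      have : 0 ≤ D * (p * R) / 2 := by positivity
      nlinarith
    have k4 := mul_le_mul_of_nonneg_left k3 hTE.le
    have k5 : T * E * (p * R / 2 * (-(D * (p * R) / 2))) = -(E * (T * (D * (p * R) ^ 2)) / 4) := by
      ring
    have hW : 0 < T * (D * (p * R) ^ 2) := by positivity
    rcases le_total (1 / 2) E with hE2 | hE2
    · have : 0 < γ * (T * (1 - E)) := by
        have : 0 < 1 - E := by linarith
        positivity
      nlinarith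
    · have : γ * (T * (1 / 2)) ≤ γ * (T * (1 - E)) := by
        have : 1 / 2 ≤ 1 - E := by linarith
        gcongr
      have : 0 ≤ E * (T * (D * (p * R) ^ 2)) / 4 := by positivity
      nlinarith [mul_pos hγ hT]
  · have hs2 : s ^ 2 ≤ R ^ 2 / 4 := by
      have := pow_le_pow_left₀ hs0 hs 2
      linarith [show (R / 2) ^ 2 = R ^ 2 / 4 by ring]
    have hpq : 3 / 4 * (p * R ^ 2) ≤ p * q := by
      have := mul_le_mul_of_nonneg_left hs2 hp.le
      rw [hq]
      linarith
    have hX : (1 + p * q) * E ≤ 1 := by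
      have : p * q + 1 ≤ Real.exp (p * q) := Real.add_one_le_exp _
      have e : Real.exp (p * q) * E = 1 := by
        rw [hE, ← Real.exp_add]; simp
      have := mul_le_mul_of_nonneg_right this hE0.le
      linarith
    have hX1 : (1 + 3 / 4 * (p * R ^ 2)) * E ≤ 1 :=
      (mul_le_mul_of_nonneg_right (by linarith) hE0.le).trans hX
    -- quadratic decay of the exponential absorbs the drift term
    have hX2 : (p * R ^ 2) ^ 2 * E ≤ 32 / 9 := by
      have t1 : 0 ≤ 3 / 4 * (p * R ^ 2) := by positivity
      have t2 := Real.quadratic_le_exp_of_nonneg (t1.trans hpq)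
      have t3 := pow_le_pow_left₀ t1 hpq 2
      have e : Real.exp (p * q) * E = 1 := by
        rw [hE, ← Real.exp_add]; simp
      have t4 : (3 / 4 * (p * R ^ 2)) ^ 2 / 2 ≤ Real.exp (p * q) := by linarith
      have := mul_le_mul_of_nonneg_right t4 hE0.le
      rw [e] at this
      linarith [show (3 / 4 * (p * R ^ 2)) ^ 2 / 2 * E = 9 / 32 * ((p * R ^ 2) ^ 2 * E) by ring]
    have hE2 : E ≤ 2 / 5 := by
      have := mul_le_mul_of_nonneg_right h5 hE0.le
      linarith
    have k1 : p * s * (2 * b - 2 * D * (p * s)) ≤ p * R * b := by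
      have t1 := mul_le_mul_of_nonneg_left hs hp.le
      have t2 := mul_le_mul_of_nonneg_right t1 hb
      have : 0 ≤ D * (p * s) ^ 2 := by positivity
      linarith [show p * s * (2 * b - 2 * D * (p * s)) = 2 * (p * s * b) - 2 * (D * (p * s) ^ 2)
        by ring]
    have k2 : E * (p * R * b) ≤ γ / 6 := by
      have t1 := mul_le_mul_of_nonneg_left h4 hE0.le
      have t2 := mul_le_mul_of_nonneg_left hX2 hγ.le
      linarith
    have k3 := mul_le_mul_of_nonneg_left k1 hTE.le
    have k4 : T * E * (p * R * b) ≤ T * (γ / 6) := by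
      rw [mul_assoc]; exact mul_le_mul_of_nonneg_left k2 hT.le
    have k5 : γ * (T * (3 / 5)) ≤ γ * (T * (1 - E)) := by
      have : 3 / 5 ≤ 1 - E := by linarith
      gcongr
    have t3 := mul_pos hγ hT
    have t4 : T * E * (p * R * b) ≤ γ * T / 6 := by linarith
    linarith

/-- Two-sided control of the solution: it is nonnegative and grows at most linearly away from the
boundary, up to distance `r₀ = (p R)⁻¹`. -/
theorem sol_bound {μ a c : Fin I → ℝ} {γ lam R : ℝ} {n : ℕ} {φ : Euc I → ℝ} (hI : 0 < I)
    (hc : ∀ i, 0 < c i) (hγ : 0 < γ) (hμ : ∀ i, 0 < μ i)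
    (hsol : IsSolGen μ a c γ lam n R (fun y => max y 0) φ) (i₀ : Fin I)
    {D b S T r₀ : ℝ} (hD : 0 < D) (hR : 0 < R) (hT : 0 < T) (hr₀ : 0 < r₀) (hb : 0 ≤ b)
    (hd : ∀ x : Euc I, ‖x‖ < R → ∀ i, D + μ i * pos x ≤ dcoef μ a lam n x i)
    (hdr : ∀ x : Euc I, ‖x‖ < R → ∀ i, |drift μ a lam n x i| + μ i * pos x ≤ b)
    (hS : ∀ x : Euc I, ‖x‖ < R → pos x * c i₀ ≤ S)
    (h1 : 4 * (I * b) * r₀ ≤ D) (h2 : 8 * S * r₀ ^ 2 < T * D) (h3 : 4 * S < γ * T)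
    (h4 : 32 * (I * b) * r₀ ≤ γ * R ^ 2) (h5 : 2 * r₀ ≤ R) :
    ∀ x : Euc I, ‖x‖ ≤ R → |φ x| ≤ 2 * T / r₀ * min (R - ‖x‖) r₀ := by
  have hd' : ∀ x : Euc I, ‖x‖ < R → ∀ i, μ i * pos x ≤ dcoef μ a lam n x i :=
    fun x hx i => by linarith [hd x hx i]
  have hnn := sol_nonneg hI hc hγ hμ hsol hd'
  set p := (R * r₀)⁻¹ with hp
  have hp0 : 0 < p := by positivity
  have hpR : p * R = r₀⁻¹ := by rw [hp]; field_simp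
  have hpR2 : p * R ^ 2 = R / r₀ := by rw [hp]; field_simp
  have hle := sol_le_of_super hγ hμ hsol hd' i₀ (V := barrier T p R) (contDiff_barrier T p R)
    (fun x hx => by rw [barrier, sum_sq_eq, hx]; simp) ?_
  · intro x hx
    rw [abs_of_nonneg (hnn x hx)]
    refine (hle x hx).trans ?_
    rw [barrier, sum_sq_eq]
    have hx0 := norm_nonneg x
    rcases min_cases (R - ‖x‖) r₀ with ⟨h, _⟩ | ⟨h, _⟩ <;> rw [h]
    · have e1 := Real.one_sub_le_exp_neg (p * (R ^ 2 - ‖x‖ ^ 2))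
      rw [← neg_mul] at e1
      have e2 : p * (R ^ 2 - ‖x‖ ^ 2) ≤ 2 / r₀ * (R - ‖x‖) := by
        have : 2 / r₀ = p * (2 * R) := by rw [hp]; field_simp
        rw [this, mul_assoc]
        refine mul_le_mul_of_nonneg_left ?_ hp0.le
        nlinarith
      calc T * (1 - Real.exp (-p * (R ^ 2 - ‖x‖ ^ 2))) ≤ T * (2 / r₀ * (R - ‖x‖)) := by
            refine mul_le_mul_of_nonneg_left ?_ hT.le
            linarith
        _ = _ := by ring
    · rw [div_mul_cancel₀ _ hr₀.ne']
      have := Real.exp_pos (-p * (R ^ 2 - ‖x‖ ^ 2))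
      nlinarith
  · intro x hx
    have hE0 : 0 < bexp p R x := Real.exp_pos _
    have hTE : 0 < T * bexp p R x := mul_pos hT hE0
    have hsc := super_scalar (S := S) (E := bexp p R x) (D := D) (b := I * b) hγ hT hD hp0 hR
      (by positivity) (norm_nonneg x) hx rfl (by rw [bexp, sum_sq_eq])
      (by rw [hpR, ← div_eq_mul_inv, le_div_iff₀ hr₀]; exact h1)
      (by rw [hpR, inv_pow, ← mul_assoc, ← div_eq_mul_inv, lt_div_iff₀ (by positivity)]; exact h2)
      h3
      (by
        rw [hpR, hpR2, ← div_eq_mul_inv, div_pow, mul_div_assoc', div_le_div_iff₀ hr₀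
          (by positivity)]
        have := mul_le_mul_of_nonneg_right h4 hr₀.le
        linarith)
      (by rw [hpR2, le_div_iff₀ hr₀]; exact h5)
    have d1 : ∑ i, (drift μ a lam n x i + if i = i₀ then μ i * pos x else 0)
        * pd1 (barrier T p R) i x ≤ T * bexp p R x * (p * ‖x‖ * (2 * (I * b))) := by
      have : ∀ i ∈ (Finset.univ : Finset (Fin I)),
          (drift μ a lam n x i + if i = i₀ then μ i * pos x else 0) * pd1 (barrier T p R) i x
          ≤ T * bexp p R x * (p * ‖x‖ * (2 * b)) := by
        intro i _
        rw [pd1_barrier]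
        have k1 : |drift μ a lam n x i + if i = i₀ then μ i * pos x else 0| ≤ b := by
          have k0 : 0 ≤ μ i * pos x := mul_nonneg (hμ i).le (pos_nonneg x)
          refine (abs_add_le _ _).trans (le_trans ?_ (hdr x hx i))
          split_ifs
          · rw [abs_of_nonneg k0]
          · simpa using k0
        refine (le_abs_self _).trans ?_
        have e : |-T * (bexp p R x * (2 * p * x i))| = T * bexp p R x * (2 * p) * |x i| := by
          rw [show -T * (bexp p R x * (2 * p * x i)) = -(T * bexp p R x * (2 * p) * x i) by ring,
            abs_neg, abs_mul, abs_of_pos (by positivity)]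
        rw [abs_mul, e]
        calc _ ≤ b * (T * bexp p R x * (2 * p) * ‖x‖) := by
              gcongr
              exact abs_coord_le x i
          _ = _ := by ring
      refine (Finset.sum_le_sum this).trans (le_of_eq ?_)
      simp
      ring
    have d2 : ∑ i, (dcoef μ a lam n x i - if i = i₀ then μ i * pos x else 0)
        * pd2 (barrier T p R) i x ≤ -(T * bexp p R x * (4 * p ^ 2 * D * ‖x‖ ^ 2)) := by
      have : ∀ i ∈ (Finset.univ : Finset (Fin I)),
          (dcoef μ a lam n x i - if i = i₀ then μ i * pos x else 0) * pd2 (barrier T p R) i x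
          ≤ -(T * bexp p R x * (4 * p ^ 2 * D)) * (x i * x i) := by
        intro i _
        rw [pd2_barrier]
        have k1 : D ≤ dcoef μ a lam n x i - if i = i₀ then μ i * pos x else 0 := by
          have k0 : 0 ≤ μ i * pos x := mul_nonneg (hμ i).le (pos_nonneg x)
          have := hd x hx i
          split_ifs <;> linarith
        have k2 : D * (T * (bexp p R x * (4 * p ^ 2 * x i ^ 2)))
            ≤ (dcoef μ a lam n x i - if i = i₀ then μ i * pos x else 0)
              * (T * (bexp p R x * (2 * p + 4 * p ^ 2 * x i ^ 2))) := by
          have : 0 ≤ dcoef μ a lam n x i - if i = i₀ then μ i * pos x else 0 := hD.le.trans k1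
          gcongr
          linarith
        nlinarith
      refine (Finset.sum_le_sum this).trans (le_of_eq ?_)
      rw [← Finset.mul_sum, sum_sq_eq]
      ring
    have e0 : barrier T p R x = T * (1 - bexp p R x) := rfl
    have := hS x hx
    rw [e0]
    refine lt_of_le_of_lt ?_ hsc
    have : T * bexp p R x * (p * ‖x‖ * (2 * (I * b) - 2 * D * (p * ‖x‖)))
        = T * bexp p R x * (p * ‖x‖ * (2 * (I * b)))
          + 1 / 2 * -(T * bexp p R x * (4 * p ^ 2 * D * ‖x‖ ^ 2)) := by ring
    linarith

/-! ### The lower order part of the operator, and interpolation -/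

theorem abs_ciInf_sub_le (hI : 0 < I) {f f' : Fin I → ℝ} {δ : ℝ} (h : ∀ i, |f i - f' i| ≤ δ) :
    |(⨅ i, f i) - ⨅ i, f' i| ≤ δ := by
  have : Nonempty (Fin I) := ⟨⟨0, hI⟩⟩
  have key : ∀ {f f' : Fin I → ℝ}, (∀ i, |f i - f' i| ≤ δ) → (⨅ i, f i) - δ ≤ ⨅ i, f' i := by
    intro f f' h
    refine le_ciInf fun i => ?_
    have h1 : (⨅ i, f i) ≤ f i := ciInf_le (Set.finite_range _).bddBelow i
    have h2 := (abs_le.1 (h i)).2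
    linarith
  have h1 := key h
  have h2 := key (f := f') (f' := f) fun i => by rw [abs_sub_comm]; exact h i
  rw [abs_le]
  constructor <;> linarith

theorem abs_ciInf_le (hI : 0 < I) {f : Fin I → ℝ} {δ : ℝ} (h : ∀ i, |f i| ≤ δ) :
    |⨅ i, f i| ≤ δ := by
  have : Nonempty (Fin I) := ⟨⟨0, hI⟩⟩
  have := abs_ciInf_sub_le hI (f := f) (f' := fun _ => 0) (δ := δ) (by simpa using h)
  simpa using this

theorem abs_mul_sub_mul_le {x y x' y' b δ η Y : ℝ} (hx : |x| ≤ b) (hxx : |x - x'| ≤ δ)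
    (hyy : |y - y'| ≤ η) (hy' : |y'| ≤ Y) : |x * y - x' * y'| ≤ b * η + δ * Y := by
  have e : x * y - x' * y' = x * (y - y') + (x - x') * y' := by ring
  rw [e]
  refine (abs_add_le _ _).trans (add_le_add ?_ ?_)
  · rw [abs_mul]
    exact mul_le_mul hx hyy (abs_nonneg _) ((abs_nonneg _).trans hx)
  · rw [abs_mul]
    exact mul_le_mul hxx hy' (abs_nonneg _) ((abs_nonneg _).trans hxx)

/-- What remains of the HJB operator once the leading part `M ∑ a_i ∂²_ii` of the diffusion has
been moved to the other side, as a function of the values of the coefficients `g, l, e` and of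
`φ, ∂_i φ, ∂²_ii φ`. -/
def remainder (μ c : Fin I → ℝ) (γ g : ℝ) (l e : Fin I → ℝ) (p : ℝ) (p1 p2 : Fin I → ℝ) : ℝ :=
  γ * p - g * (⨅ i, (c i + μ i * p1 i - (1 / 2) * μ i * p2 i)) - ∑ i, l i * p1 i
    - (1 / 2) * ∑ i, e i * p2 i

/-- Differences of the remainder are controlled by the differences of its arguments; the infimum
over controls is nonexpansive, so no regularity of an optimal control is needed. -/
theorem remainder_diff (hI : 0 < I) {μ c : Fin I → ℝ} {γ Λ b dl d0 d1 d2 G Q : ℝ} (hγ : 0 ≤ γ)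
    (hΛ : 0 ≤ Λ)
    (hμ : ∀ i, |μ i| ≤ Λ) (hc : ∀ i, |c i| ≤ Λ)
    {g g' p p' : ℝ} {l l' e e' p1 p1' p2 p2' : Fin I → ℝ}
    (hg : |g| ≤ b) (hl : ∀ i, |l i| ≤ b) (he : ∀ i, |e i| ≤ b)
    (hgg : |g - g'| ≤ dl) (hll : ∀ i, |l i - l' i| ≤ dl) (hee : ∀ i, |e i - e' i| ≤ dl)
    (hp : |p - p'| ≤ d0) (hp1 : ∀ i, |p1 i - p1' i| ≤ d1) (hp2 : ∀ i, |p2 i - p2' i| ≤ d2)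
    (hG : ∀ i, |p1' i| ≤ G) (hQ : ∀ i, |p2' i| ≤ Q) :
    |remainder μ c γ g l e p p1 p2 - remainder μ c γ g' l' e' p' p1' p2'|
      ≤ γ * d0 + (b * (Λ * (d1 + d2)) + dl * (Λ * (1 + G + Q)))
        + I * (b * d1 + dl * G) + I * (b * d2 + dl * Q) := by
  have t0 : |γ * p - γ * p'| ≤ γ * d0 := by
    rw [← mul_sub, abs_mul, abs_of_nonneg hγ]
    exact mul_le_mul_of_nonneg_left hp hγ
  have t1 : |g * (⨅ i, (c i + μ i * p1 i - (1 / 2) * μ i * p2 i))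
      - g' * (⨅ i, (c i + μ i * p1' i - (1 / 2) * μ i * p2' i))|
      ≤ b * (Λ * (d1 + d2)) + dl * (Λ * (1 + G + Q)) := by
    refine abs_mul_sub_mul_le hg hgg (abs_ciInf_sub_le hI fun i => ?_) (abs_ciInf_le hI fun i => ?_)
    · have e1 : c i + μ i * p1 i - (1 / 2) * μ i * p2 i
          - (c i + μ i * p1' i - (1 / 2) * μ i * p2' i)
          = μ i * ((p1 i - p1' i) - (1 / 2) * (p2 i - p2' i)) := by ring
      rw [e1, abs_mul]
      refine mul_le_mul (hμ i) ?_ (abs_nonneg _) hΛ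
      refine (abs_sub _ _).trans (add_le_add (hp1 i) ?_)
      rw [abs_mul, abs_of_pos (by norm_num)]
      have := abs_nonneg (p2 i - p2' i)
      linarith [hp2 i]
    · have k1 : |μ i * p1' i| ≤ Λ * G := by
        rw [abs_mul]; exact mul_le_mul (hμ i) (hG i) (abs_nonneg _) hΛ
      have k2 : |(1 / 2) * μ i * p2' i| ≤ Λ * Q := by
        rw [mul_assoc, abs_mul, abs_mul, abs_of_pos (by norm_num : (0:ℝ) < 1 / 2)]
        have := mul_le_mul (hμ i) (hQ i) (abs_nonneg _) hΛ
        have k := mul_nonneg (abs_nonneg (μ i)) (abs_nonneg (p2' i))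
        linarith
      have k3 := abs_sub (c i + μ i * p1' i) ((1 / 2) * μ i * p2' i)
      have k4 := abs_add_le (c i) (μ i * p1' i)
      linarith [hc i, show Λ * (1 + G + Q) = Λ + Λ * G + Λ * Q by ring]
  have tsum : ∀ {u u' q q' : Fin I → ℝ} {D Y : ℝ}, (∀ i, |u i| ≤ b) → (∀ i, |u i - u' i| ≤ dl) →
      (∀ i, |q i - q' i| ≤ D) → (∀ i, |q' i| ≤ Y) →
      |∑ i, u i * q i - ∑ i, u' i * q' i| ≤ I * (b * D + dl * Y) := by
    intro u u' q q' D Y h1 h2 h3 h4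
    rw [← Finset.sum_sub_distrib]
    refine (Finset.abs_sum_le_sum_abs _ _).trans ?_
    refine (Finset.sum_le_sum fun i _ => abs_mul_sub_mul_le (h1 i) (h2 i) (h3 i) (h4 i)).trans ?_
    rw [Finset.sum_const, Finset.card_univ, Fintype.card_fin, nsmul_eq_mul]
  have t2 := tsum hl hll hp1 hG
  have t3 := tsum he hee hp2 hQ
  have t3n := abs_nonneg (∑ i, e i * p2 i - ∑ i, e' i * p2' i)
  rw [remainder, remainder]
  rw [abs_le] at *
  constructor <;> linarith [t0.1, t0.2, t1.1, t1.2, t2.1, t2.2, t3.1, t3.2]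

theorem abs_sub_le_of_pd1 {f : Euc I → ℝ} {s : Set (Euc I)} (hs : Convex ℝ s) {Q : ℝ}
    (hQ0 : 0 ≤ Q)
    (hf : ∀ x ∈ s, DifferentiableAt ℝ f x) (hQ : ∀ x ∈ s, ∀ i, |pd1 f i x| ≤ Q) {x y : Euc I}
    (hx : x ∈ s) (hy : y ∈ s) : |f x - f y| ≤ I * Q * ‖x - y‖ := by
  have := hs.norm_image_sub_le_of_norm_fderiv_le (𝕜 := ℝ) (f := f) (C := I * Q) hf (fun z hz => ?_)
    hy hx
  · simpa using this
  · refine ContinuousLinearMap.opNorm_le_bound _ (by positivity) fun v => ?_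
    rw [fderiv_eq_sum_pd1, Real.norm_eq_abs]
    refine (Finset.abs_sum_le_sum_abs _ _).trans ?_
    calc ∑ i, |v i * pd1 f i z| ≤ ∑ _i : Fin I, ‖v‖ * Q := Finset.sum_le_sum fun i _ => by
          rw [abs_mul]
          exact mul_le_mul (abs_coord_le v i) (hQ z hz i) (abs_nonneg _) (norm_nonneg _)
      _ = I * Q * ‖v‖ := by simp; ring

theorem norm_line (x : Euc I) (i : Fin I) (t : ℝ) :
    ‖x + t • EuclideanSpace.single i (1 : ℝ) - x‖ = |t| := by
  rw [add_sub_cancel_left, norm_smul]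
  simp

/-- Interpolation: a first derivative is controlled by the size of the function and of the second
derivatives on a ball. -/
theorem grad_interp {f : Euc I → ℝ} {x : Euc I} {h S Q : ℝ} (hh : 0 < h) (hQ0 : 0 ≤ Q)
    (hf : ∀ y ∈ closedBall x h, ContDiffAt ℝ 2 f y) (hS : ∀ y ∈ closedBall x h, |f y| ≤ S)
    (hQ : ∀ y ∈ closedBall x h, ∀ i j, |pd1 (pd1 f j) i y| ≤ Q) (i : Fin I) :
    |pd1 f i x| ≤ 2 * S / h + I * Q * h := by
  have hmem : ∀ t ∈ Icc (0 : ℝ) h, x + t • EuclideanSpace.single i (1 : ℝ) ∈ closedBall x h := by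
    intro t ht
    rw [mem_closedBall, dist_eq_norm, norm_line, abs_of_nonneg ht.1]
    exact ht.2
  have hder : ∀ t ∈ Icc (0 : ℝ) h, HasDerivAt
      (fun s : ℝ => f (x + s • EuclideanSpace.single i (1 : ℝ)))
      (pd1 f i (x + t • EuclideanSpace.single i (1 : ℝ))) t := fun t ht =>
    hasDerivAt_line ((hf _ (hmem t ht)).differentiableAt (by norm_num))
  obtain ⟨t, ht, hslope⟩ := exists_hasDerivAt_eq_slope
    (fun s : ℝ => f (x + s • EuclideanSpace.single i (1 : ℝ)))
    (fun t => pd1 f i (x + t • EuclideanSpace.single i (1 : ℝ))) hh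
    (fun t ht => (hder t ht).continuousAt.continuousWithinAt)
    (fun t ht => hder t (Ioo_subset_Icc_self ht))
  have htI := Ioo_subset_Icc_self ht
  have hx : x ∈ closedBall x h := mem_closedBall_self hh.le
  have k1 : |pd1 f i (x + t • EuclideanSpace.single i (1 : ℝ))| ≤ 2 * S / h := by
    rw [hslope, sub_zero, abs_div, abs_of_pos hh]
    refine div_le_div_of_nonneg_right ?_ hh.le
    refine (abs_sub _ _).trans ?_
    have := hS _ (hmem h ⟨hh.le, le_rfl⟩)
    have := hS _ (hmem 0 ⟨le_rfl, hh.le⟩)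
    linarith
  have k2 := abs_sub_le_of_pd1 (f := pd1 f i) (convex_closedBall x h) hQ0
    (fun y hy => (contDiffAt_pd1 (hf y hy) i).differentiableAt (by norm_num))
    (fun y hy j => hQ y hy j i) (hmem t htI) hx
  rw [norm_line, abs_of_nonneg htI.1] at k2
  have k3 : I * Q * t ≤ I * Q * h := mul_le_mul_of_nonneg_left htI.2 (by positivity)
  have k4 := abs_sub_abs_le_abs_sub (pd1 f i x) (pd1 f i (x + t • EuclideanSpace.single i (1 : ℝ)))
  rw [abs_sub_comm] at k4
  linarith

/-! ### Weighted interior bounds -/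

/-- Distance to the sphere of radius `R`, truncated at `r₀`. -/
def wt (R r₀ : ℝ) (x : Euc I) : ℝ := min (R - ‖x‖) r₀

/-- Reciprocal of the weight `w² / (w + s)`. -/
def th (s w : ℝ) : ℝ := (w + s) / w ^ 2

theorem wt_pos {R r₀ : ℝ} (hr₀ : 0 < r₀) {x : Euc I} (hx : ‖x‖ < R) : 0 < wt R r₀ x :=
  lt_min (by linarith) hr₀

theorem wt_le_add {R r₀ : ℝ} (x y : Euc I) : wt R r₀ x ≤ wt R r₀ y + ‖x - y‖ := by
  have h1 : ‖y‖ - ‖x‖ ≤ ‖x - y‖ := by rw [norm_sub_rev]; exact norm_sub_norm_le y x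
  have h2 := norm_nonneg (x - y)
  rw [wt, wt]
  rcases min_cases (R - ‖y‖) r₀ with ⟨h, _⟩ | ⟨h, _⟩ <;> rw [h]
  · exact (min_le_left _ _).trans (by linarith)
  · exact (min_le_right _ _).trans (by linarith)

theorem lt_of_near {R r₀ : ℝ} {x y : Euc I} (hr₀ : 0 < r₀) (hx : ‖x‖ < R)
    (hy : ‖y - x‖ ≤ wt R r₀ x / 2) : ‖y‖ < R := by
  have h1 : wt R r₀ x ≤ R - ‖x‖ := min_le_left _ _
  have h2 := wt_pos hr₀ hx
  have h3 : ‖y‖ ≤ ‖x‖ + ‖y - x‖ := by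
    have := norm_add_le x (y - x)
    rwa [add_sub_cancel] at this
  linarith

theorem one_le_th_mul {s w : ℝ} (hs : 0 < s) (hw : 0 < w) : 1 ≤ w * th s w := by
  have : w * th s w = (w + s) / w := by rw [th]; field_simp
  rw [this, le_div_iff₀ hw]
  linarith

theorem th_pos {s w : ℝ} (hs : 0 < s) (hw : 0 < w) : 0 < th s w := by rw [th]; positivity

theorem th_le {s w w₀ : ℝ} (hs : 0 < s) (hw₀ : 0 < w₀) (h : w₀ / 2 ≤ w) :
    th s w ≤ 4 * th s w₀ := by
  have hw : 0 < w := by linarith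
  have e : th s w = 1 / w + s / w ^ 2 := by rw [th]; field_simp
  have e0 : 4 * th s w₀ = 4 / w₀ + s / (w₀ / 2) ^ 2 := by rw [th]; field_simp; ring
  rw [e, e0]
  have h1 : 1 / w ≤ 1 / (w₀ / 2) := one_div_le_one_div_of_le (by positivity) h
  have h2 : 1 / (w₀ / 2) ≤ 4 / w₀ := by
    rw [div_le_div_iff₀ (by positivity) hw₀]; linarith
  have h3 : s / w ^ 2 ≤ s / (w₀ / 2) ^ 2 := by gcongr
  linarith

/-- Weighted interior `C^{2,α}` bound: second derivatives are at most `B (w + s) / w²`, and their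
Hölder quotients at scale `w` obey the same bound. The parameter `s > 0` makes the weight vanish
quadratically at the sphere, so that some finite `B` is available a priori. -/
def WB (φ : Euc I → ℝ) (R r₀ α s B : ℝ) : Prop :=
  ∀ x : Euc I, ‖x‖ < R → ∀ i j,
    |pd1 (pd1 φ j) i x| ≤ B * th s (wt R r₀ x) ∧
    ∀ y, ‖x - y‖ ≤ wt R r₀ x / 4 →
      |pd1 (pd1 φ j) i x - pd1 (pd1 φ j) i y|
        ≤ B * th s (wt R r₀ x) * (‖x - y‖ / wt R r₀ x) ^ α

/-- The equation `M ∑ a_i ∂²_ii φ = remainder` on the ball of radius `R`, with coefficients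
bounded by `b` and Lipschitz with constant `Λ`, and with `φ` of size at most `A w`. -/
structure LocEq (a μ c : Fin I → ℝ) (γ Λ b M R r₀ A : ℝ) (φ g : Euc I → ℝ)
    (l e : Euc I → Fin I → ℝ) : Prop where
  smooth : ContDiffOn ℝ 2 φ (ball 0 R)
  size : ∀ x, ‖x‖ < R → |φ x| ≤ A * wt R r₀ x
  eqn : ∀ x, ‖x‖ < R → M * Lop a φ x = remainder μ c γ (g x) (l x) (e x) (φ x)
    (fun i => pd1 φ i x) (fun i => pd1 (pd1 φ i) i x)
  bg : ∀ x, ‖x‖ < R → |g x| ≤ b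
  bl : ∀ x, ‖x‖ < R → ∀ i, |l x i| ≤ b
  be : ∀ x, ‖x‖ < R → ∀ i, |e x i| ≤ b
  lg : ∀ x y, |g x - g y| ≤ Λ * ‖x - y‖
  ll : ∀ x y i, |l x i - l y i| ≤ Λ * ‖x - y‖
  le : ∀ x y i, |e x i - e y i| ≤ Λ * ‖x - y‖

section
variable {a μ c : Fin I → ℝ} {γ Λ b M R r₀ A : ℝ} {φ g : Euc I → ℝ} {l e : Euc I → Fin I → ℝ}

theorem LocEq.contDiffAt (h : LocEq a μ c γ Λ b M R r₀ A φ g l e) {x : Euc I} (hx : ‖x‖ < R) :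
    ContDiffAt ℝ 2 φ x := h.smooth.contDiffAt (isOpen_ball.mem_nhds (by simpa using hx))

/-- Second derivatives near a point, from the weighted bound. -/
theorem WB.hess_near {α s B : ℝ} (hB : 0 ≤ B) (hs : 0 < s) (hr₀ : 0 < r₀)
    (h : WB φ R r₀ α s B) {x y : Euc I} (hx : ‖x‖ < R) (hy : ‖y - x‖ ≤ wt R r₀ x / 2) (i j) :
    |pd1 (pd1 φ j) i y| ≤ 4 * (B * th s (wt R r₀ x)) := by
  refine (h y (lt_of_near hr₀ hx hy) i j).1.trans ?_
  have h1 : wt R r₀ x / 2 ≤ wt R r₀ y := by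
    have := wt_le_add (R := R) (r₀ := r₀) x y
    rw [norm_sub_rev] at this
    linarith
  have := mul_le_mul_of_nonneg_left (th_le hs (wt_pos hr₀ hx) h1) hB
  linarith

/-- Gradient bound by interpolation between the size `A w` of the function and the weighted bound
on its second derivatives. -/
theorem LocEq.grad_bound (h : LocEq a μ c γ Λ b M R r₀ A φ g l e) {α s B : ℝ} (hA : 0 ≤ A)
    (hB : 0 ≤ B) (hs : 0 < s) (hr₀ : 0 < r₀) (hW : WB φ R r₀ α s B) {x : Euc I} (hx : ‖x‖ < R)
    (i : Fin I) :
    |pd1 φ i x| ≤ 10 * A + I * B * (wt R r₀ x * th s (wt R r₀ x)) := by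
  have hw := wt_pos hr₀ hx
  set w := wt R r₀ x with hwdef
  have hθ := th_pos hs hw
  have hnear : ∀ y ∈ closedBall x (w / 4), ‖y - x‖ ≤ w / 4 := fun y hy => by
    rwa [mem_closedBall, dist_eq_norm] at hy
  have hR : ∀ y ∈ closedBall x (w / 4), ‖y‖ < R := fun y hy =>
    lt_of_near hr₀ hx ((hnear y hy).trans (by linarith))
  have := grad_interp (f := φ) (x := x) (h := w / 4) (S := 5 / 4 * (A * w))
    (Q := 4 * (B * th s w)) (by positivity) (by positivity)
    (fun y hy => h.contDiffAt (hR y hy))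
    (fun y hy => by
      refine (h.size y (hR y hy)).trans ?_
      have h1 : wt R r₀ y ≤ 5 / 4 * w := by
        have := wt_le_add (R := R) (r₀ := r₀) y x
        have := hnear y hy
        linarith
      have := mul_le_mul_of_nonneg_left h1 hA
      linarith)
    (fun y hy i j => hW.hess_near hB hs hr₀ hx ((hnear y hy).trans (by linarith)) i j) i
  refine this.trans (le_of_eq ?_)
  field_simp
  ring

/-- Hölder control of second derivatives between any two points near a given one. -/
theorem WB.holder_near {α s B : ℝ} (hα : 0 < α) (hα1 : α ≤ 1) (hB : 0 ≤ B) (hs : 0 < s)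
    (hr₀ : 0 < r₀)
    (h : WB φ R r₀ α s B) {x y y' : Euc I} (hx : ‖x‖ < R) (hy : ‖y - x‖ ≤ wt R r₀ x / 2)
    (hy' : ‖y' - x‖ ≤ wt R r₀ x / 2) (i j) :
    |pd1 (pd1 φ j) i y - pd1 (pd1 φ j) i y'|
      ≤ 64 * (B * th s (wt R r₀ x)) * (‖y - y'‖ / wt R r₀ x) ^ α := by
  have hw := wt_pos hr₀ hx
  have hyR := lt_of_near hr₀ hx hy
  have h1 : wt R r₀ x / 2 ≤ wt R r₀ y := by
    have := wt_le_add (R := R) (r₀ := r₀) x y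
    rw [norm_sub_rev] at this
    linarith
  have hwy := wt_pos hr₀ hyR
  have hX : 0 ≤ B * th s (wt R r₀ x) := mul_nonneg hB (th_pos hs hw).le
  have hX2 : B * th s (wt R r₀ y) ≤ 4 * (B * th s (wt R r₀ x)) := by
    have := mul_le_mul_of_nonneg_left (th_le hs hw h1) hB
    linarith
  set X := B * th s (wt R r₀ x) with hXdef
  set w := wt R r₀ x with hwdef
  have hd := norm_nonneg (y - y')
  have hpow : ∀ k : ℝ, 1 ≤ k → (k * (‖y - y'‖ / w)) ^ α ≤ k * (‖y - y'‖ / w) ^ α := by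
    intro k hk
    rw [Real.mul_rpow (by linarith) (by positivity)]
    refine mul_le_mul_of_nonneg_right ?_ (by positivity)
    simpa using Real.rpow_le_rpow_of_exponent_le hk hα1
  have hρ : 0 ≤ (‖y - y'‖ / w) ^ α := by positivity
  by_cases hn : ‖y - y'‖ ≤ wt R r₀ y / 4
  · refine ((h y hyR i j).2 y' hn).trans ?_
    have k1 : ‖y - y'‖ / wt R r₀ y ≤ 2 * (‖y - y'‖ / w) := by
      rw [← mul_div_assoc, div_le_div_iff₀ hwy hw]
      nlinarith
    have k2 : (‖y - y'‖ / wt R r₀ y) ^ α ≤ 2 * (‖y - y'‖ / w) ^ α :=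
      (Real.rpow_le_rpow (by positivity) k1 hα.le).trans (hpow 2 (by norm_num))
    calc _ ≤ 4 * X * (2 * (‖y - y'‖ / w) ^ α) := by
          refine mul_le_mul hX2 k2 (by positivity) (by positivity)
      _ ≤ _ := by nlinarith [mul_nonneg hX hρ]
  · rw [not_le] at hn
    have k1 : 1 ≤ 8 * (‖y - y'‖ / w) := by
      rw [← mul_div_assoc, le_div_iff₀ hw]; linarith
    have k2 : 1 ≤ 8 * (‖y - y'‖ / w) ^ α :=
      (Real.one_le_rpow k1 hα.le).trans (hpow 8 (by norm_num))
    have k3 := h.hess_near hB hs hr₀ hx hy i j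
    have k4 := h.hess_near hB hs hr₀ hx hy' i j
    have k5 := abs_sub (pd1 (pd1 φ j) i y) (pd1 (pd1 φ j) i y')
    have k6 := mul_le_mul_of_nonneg_left k2 hX
    linarith

/-- Collecting the terms of the Hölder bound of the remainder. -/
theorem collect_terms {k γ Λ b w X Y S : ℝ} (hk : 0 ≤ k) (hγ : 0 ≤ γ) (hΛ : 0 ≤ Λ) (hb : 0 ≤ b)
    (hw : 0 < w) (hX : 0 ≤ X) (hY : 0 ≤ Y) (h1 : 1 ≤ w * Y)
    (hS : w ^ 2 + w + b * w + b ≤ S) :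
    γ * (k * (w * (10 * Y + 3 * k * X)) * w)
      + (b * (Λ * (4 * k * X * w + 64 * X)) + Λ * w * (Λ * (1 + w * (10 * Y + 3 * k * X) + 4 * X)))
      + k * (b * (4 * k * X * w) + Λ * w * (w * (10 * Y + 3 * k * X)))
      + k * (b * (64 * X) + Λ * w * (4 * X))
      ≤ ((γ * k + Λ ^ 2 + k * Λ) * (10 + 3 * k) + 5 * Λ ^ 2 + 8 * k * Λ + 4 * k ^ 2 + 64 * Λ
          + 64 * k) * (S * (X + Y)) := by
  have q1 : w ^ 2 * (X + Y) ≤ S * (X + Y) :=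
    mul_le_mul_of_nonneg_right (by nlinarith [mul_nonneg hb hw.le]) (by positivity)
  have q2 : w * X ≤ S * (X + Y) := by
    refine mul_le_mul (by nlinarith [mul_nonneg hb hw.le, sq_nonneg w]) (by linarith) hX ?_
    nlinarith [mul_nonneg hb hw.le, sq_nonneg w]
  have q3 : b * w * X ≤ S * (X + Y) := by
    refine mul_le_mul (by nlinarith [mul_nonneg hb hw.le, sq_nonneg w]) (by linarith) hX ?_
    nlinarith [mul_nonneg hb hw.le, sq_nonneg w]
  have q4 : b * X ≤ S * (X + Y) := by
    refine mul_le_mul (by nlinarith [mul_nonneg hb hw.le, sq_nonneg w]) (by linarith) hX ?_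
    nlinarith [mul_nonneg hb hw.le, sq_nonneg w]
  have q0 : w ≤ w ^ 2 * (X + Y) := by
    have := mul_le_mul_of_nonneg_left h1 hw.le
    have := mul_nonneg (sq_nonneg w) hX
    linarith
  have q5 : w ^ 2 * (10 * Y + 3 * k * X) ≤ (10 + 3 * k) * (S * (X + Y)) := by
    have t1 := mul_nonneg hk (mul_nonneg (sq_nonneg w) hY)
    have t2 := mul_nonneg (sq_nonneg w) hX
    have t3 := mul_le_mul_of_nonneg_left q1 (show 0 ≤ 10 + 3 * k by positivity)
    linarith
  set Z := S * (X + Y) with hZ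
  have p1 := mul_le_mul_of_nonneg_left q5 (show 0 ≤ γ * k + Λ ^ 2 + k * Λ by positivity)
  have p2 := mul_le_mul_of_nonneg_left (q0.trans q1) (show 0 ≤ Λ ^ 2 by positivity)
  have p3 := mul_le_mul_of_nonneg_left q2 (show 0 ≤ 4 * Λ ^ 2 + 4 * k * Λ by positivity)
  have p4 := mul_le_mul_of_nonneg_left q3 (show 0 ≤ 4 * k * Λ + 4 * k ^ 2 by positivity)
  have p5 := mul_le_mul_of_nonneg_left q4 (show 0 ≤ 64 * Λ + 64 * k by positivity)
  linarith

end

/-! ### Self-improvement of the weighted bound -/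

/-- Hölder bound for `∑ a_i ∂²_ii φ` near a point, from the weighted bound and the equation. -/
theorem LocEq.holder_Lop {a μ c : Fin I → ℝ} {γ Λ b M R r₀ A : ℝ} {φ g : Euc I → ℝ}
    {l e : Euc I → Fin I → ℝ} (hI : 0 < I) (hγ : 0 ≤ γ) (hΛ : 0 ≤ Λ) (hμ : ∀ i, |μ i| ≤ Λ)
    (hc : ∀ i, |c i| ≤ Λ) (h : LocEq a μ c γ Λ b M R r₀ A φ g l e) (hM : 0 < M) (hb : 0 ≤ b)
    (hr₀ : 0 < r₀) (hA : 1 ≤ A) {α s B S : ℝ} (hα : 0 < α) (hα1 : α ≤ 1) (hs : 0 < s) (hB : 0 ≤ B)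
    (hW : WB φ R r₀ α s B) (hS : r₀ ^ 2 + r₀ + b * r₀ + b ≤ S)
    {x y y' : Euc I} (hx : ‖x‖ < R) (hy : ‖y - x‖ ≤ wt R r₀ x / 2)
    (hy' : ‖y' - x‖ ≤ wt R r₀ x / 2) :
    M * |Lop a φ y - Lop a φ y'| ≤
      ((γ * I + Λ ^ 2 + I * Λ) * (10 + 3 * I) + 5 * Λ ^ 2 + 8 * I * Λ + 4 * (I : ℝ) ^ 2 + 64 * Λ
          + 64 * I) * (S * ((A + B) * th s (wt R r₀ x))) * (‖y - y'‖ / wt R r₀ x) ^ α := by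
  have hw := wt_pos hr₀ hx
  have hwr : wt R r₀ x ≤ r₀ := min_le_right _ _
  have hnear : ∀ z ∈ closedBall x (wt R r₀ x / 2), ‖z - x‖ ≤ wt R r₀ x / 2 := fun z hz => by
    rwa [mem_closedBall, dist_eq_norm] at hz
  have hymem : y ∈ closedBall x (wt R r₀ x / 2) := by rwa [mem_closedBall, dist_eq_norm]
  have hymem' : y' ∈ closedBall x (wt R r₀ x / 2) := by rwa [mem_closedBall, dist_eq_norm]
  have hRn : ∀ z, ‖z - x‖ ≤ wt R r₀ x / 2 → ‖z‖ < R := fun z hz => lt_of_near hr₀ hx hz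
  have hθ := th_pos hs hw
  have h1θ := one_le_th_mul hs hw
  have hA0 : 0 ≤ A := by linarith
  have hwn : ∀ z, ‖z - x‖ ≤ wt R r₀ x / 2 →
      wt R r₀ x / 2 ≤ wt R r₀ z ∧ wt R r₀ z ≤ 3 / 2 * wt R r₀ x := by
    intro z hz
    have k1 := wt_le_add (R := R) (r₀ := r₀) x z
    have k2 := wt_le_add (R := R) (r₀ := r₀) z x
    rw [norm_sub_rev] at k1
    constructor <;> linarith
  -- first and second derivatives on the ball of radius `w / 2`
  have hG : ∀ z, ‖z - x‖ ≤ wt R r₀ x / 2 → ∀ i, |pd1 φ i z|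
      ≤ wt R r₀ x * (10 * (A * th s (wt R r₀ x)) + 3 * I * (B * th s (wt R r₀ x))) := by
    intro z hz i
    refine (h.grad_bound hA0 hB hs hr₀ hW (hRn z hz) i).trans ?_
    obtain ⟨k1, k2⟩ := hwn z hz
    have k0 := wt_pos hr₀ (hRn z hz)
    have e : ∀ w, 0 < w → w * th s w = 1 + s / w := fun w hw => by rw [th]; field_simp
    have k3 : wt R r₀ z * th s (wt R r₀ z) ≤ 3 * (wt R r₀ x * th s (wt R r₀ x)) := by
      rw [e _ k0, e _ hw]
      have : s / wt R r₀ z ≤ s / (wt R r₀ x / 2) := by gcongr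
      have e2 : s / (wt R r₀ x / 2) = 2 * (s / wt R r₀ x) := by field_simp
      have : 0 < s / wt R r₀ x := by positivity
      linarith
    have k4 := mul_le_mul_of_nonneg_left k3 (show 0 ≤ (I : ℝ) * B by positivity)
    have k5 := mul_le_mul_of_nonneg_left h1θ hA0
    linarith
  have hQ : ∀ z, ‖z - x‖ ≤ wt R r₀ x / 2 → ∀ i j, |pd1 (pd1 φ j) i z|
      ≤ 4 * (B * th s (wt R r₀ x)) := fun z hz i j => hW.hess_near hB hs hr₀ hx hz i j
  have hH : ∀ i, |pd1 (pd1 φ i) i y - pd1 (pd1 φ i) i y'|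
      ≤ 64 * (B * th s (wt R r₀ x)) * (‖y - y'‖ / wt R r₀ x) ^ α :=
    fun i => hW.holder_near hα hα1 hB hs hr₀ hx hy hy' i i
  have hcv := convex_closedBall x (wt R r₀ x / 2)
  set w := wt R r₀ x with hwdef
  set X := B * th s w with hXdef
  set Y := A * th s w with hYdef
  have hX : 0 ≤ X := by positivity
  have hY : 0 ≤ Y := by positivity
  set ρ := (‖y - y'‖ / w) ^ α with hρdef
  have hρ : 0 ≤ ρ := by positivity
  have hd : ‖y - y'‖ ≤ w * ρ := by
    have k0 := norm_nonneg (y - y')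
    have k1 : ‖y - y'‖ / w ≤ 1 := by
      rw [div_le_one hw]
      have : y - y' = (y - x) - (y' - x) := by abel
      rw [this]
      exact (norm_sub_le _ _).trans (by linarith)
    have k2 : ‖y - y'‖ / w ≤ ρ := by
      have := Real.rpow_le_rpow_of_exponent_ge' (by positivity) k1 hα.le hα1
      simpa using this
    have := mul_le_mul_of_nonneg_left k2 hw.le
    rwa [mul_div_cancel₀ _ hw.ne'] at this
  set G := w * (10 * Y + 3 * I * X) with hGdef
  have hG0 : 0 ≤ G := by positivity
  have D0 : |φ y - φ y'| ≤ I * G * (w * ρ) :=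
    (abs_sub_le_of_pd1 hcv hG0
      (fun z hz => (h.contDiffAt (hRn z (hnear z hz))).differentiableAt (by norm_num))
      (fun z hz i => hG z (hnear z hz) i) hymem hymem').trans
        (mul_le_mul_of_nonneg_left hd (by positivity))
  have D1 : ∀ i, |pd1 φ i y - pd1 φ i y'| ≤ I * (4 * X) * (w * ρ) := fun i =>
    (abs_sub_le_of_pd1 hcv (by positivity)
      (fun z hz => (contDiffAt_pd1 (h.contDiffAt (hRn z (hnear z hz))) i).differentiableAt
        (by norm_num))
      (fun z hz j => hQ z (hnear z hz) j i) hymem hymem').trans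
        (mul_le_mul_of_nonneg_left hd (by positivity))
  have hyR := hRn y hy
  have hyR' := hRn y' hy'
  have hdl := mul_le_mul_of_nonneg_left hd hΛ
  have main := remainder_diff hI hγ hΛ hμ hc (h.bg y hyR) (h.bl y hyR) (h.be y hyR)
    ((h.lg y y').trans hdl) (fun i => (h.ll y y' i).trans hdl) (fun i => (h.le y y' i).trans hdl)
    D0 D1 hH (hG y' hy') (fun i => hQ y' hy' i i)
  rw [← h.eqn y hyR, ← h.eqn y' hyR', ← mul_sub, abs_mul, abs_of_pos hM] at main
  refine main.trans ?_
  have hSw : w ^ 2 + w + b * w + b ≤ S := by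
    refine le_trans ?_ hS
    gcongr
  have ct := collect_terms (k := I) (by positivity) hγ hΛ hb hw hX hY
    (by have := mul_le_mul_of_nonneg_left h1θ hA0
        rw [hYdef]; linarith) hSw
  have ct2 := mul_le_mul_of_nonneg_right ct hρ
  have eXY : (A + B) * th s w = X + Y := by rw [hXdef, hYdef]; ring
  rw [eXY]
  refine le_trans (le_of_eq ?_) ct2
  rw [hGdef]
  ring

/-- Improvement step: for a small enough ratio between the lower order part and the leading
part, the weighted bound with constant `B` self-improves to `C A + B / 2`. -/
theorem WB_step (hI : 0 < I) (a μ c : Fin I → ℝ) (ha : ∀ i, 0 < a i) (ha1 : ∀ i, a i ≤ 1)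
    {γ Λ α : ℝ} (hγ : 0 ≤ γ) (hΛ : 0 ≤ Λ) (hμ : ∀ i, |μ i| ≤ Λ) (hc : ∀ i, |c i| ≤ Λ)
    (hα : 0 < α) (hα1 : α < 1) :
    ∃ C ε : ℝ, 0 < C ∧ 0 < ε ∧ ∀ (b M R r₀ A : ℝ) (φ g : Euc I → ℝ) (l e : Euc I → Fin I → ℝ),
      LocEq a μ c γ Λ b M R r₀ A φ g l e → 0 < M → 0 ≤ b → 0 < r₀ → 1 ≤ A →
      r₀ ^ 2 + r₀ + b * r₀ + b ≤ ε * M →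
      ∀ s B : ℝ, 0 < s → 0 ≤ B → WB φ R r₀ α s B → WB φ R r₀ α s (C * A + B / 2) := by
  obtain ⟨C, hC, hSch⟩ := schauder_local hI a ha ha1 α hα hα1
  set K := ((γ * I + Λ ^ 2 + I * Λ) * (10 + 3 * I) + 5 * Λ ^ 2 + 8 * I * Λ + 4 * (I : ℝ) ^ 2
    + 64 * Λ + 64 * I) with hK
  have hI' : (0 : ℝ) < I := by exact_mod_cast hI
  have hK0 : 0 < K := by positivity
  refine ⟨96 * C + 1, 1 / (8 * C * K), by positivity, by positivity, ?_⟩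
  intro b M R r₀ A φ g l e h hM hb hr₀ hA hS s B hs hB hW x hx
  have hw := wt_pos hr₀ hx
  have hθ := th_pos hs hw
  have h1θ := one_le_th_mul hs hw
  have hA0 : 0 ≤ A := by linarith
  set w := wt R r₀ x with hwdef
  set θ := th s w with hθdef
  have hsub : ball x (4 * (w / 4)) ⊆ ball (0 : Euc I) R := by
    intro z hz
    rw [mem_ball, dist_eq_norm] at hz
    rw [mem_ball_zero_iff]
    have h1 : w ≤ R - ‖x‖ := min_le_left _ _
    have h3 : ‖z‖ ≤ ‖x‖ + ‖z - x‖ := by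
      have := norm_add_le x (z - x)
      rwa [add_sub_cancel] at this
    linarith
  set H := (A + B) * θ / (8 * C) with hH
  have hH0 : 0 ≤ H := by positivity
  have hφA : ∀ y, ‖y - x‖ ≤ 2 * (w / 4) → |φ y| ≤ A * (3 / 2 * w) := by
    intro y hy
    have hy' : ‖y - x‖ ≤ wt R r₀ x / 2 := by rw [← hwdef]; linarith
    refine (h.size y (lt_of_near hr₀ hx hy')).trans (mul_le_mul_of_nonneg_left ?_ hA0)
    have := wt_le_add (R := R) (r₀ := r₀) y x
    linarith
  have hpow : ∀ d : ℝ, 0 ≤ d → (d / w) ^ α ≤ (d / (w / 4)) ^ α := fun d hd =>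
    Real.rpow_le_rpow (by positivity) (by gcongr; linarith) hα.le
  have hLH : ∀ y y', ‖y - x‖ ≤ 2 * (w / 4) → ‖y' - x‖ ≤ 2 * (w / 4) →
      |Lop a φ y - Lop a φ y'| ≤ H * (‖y - y'‖ / (w / 4)) ^ α := by
    intro y y' hy hy'
    have k := h.holder_Lop hI hγ hΛ hμ hc hM hb hr₀ hA hα hα1.le hs hB hW hS hx
      (y := y) (y' := y') (by rw [← hwdef]; linarith) (by rw [← hwdef]; linarith)
    rw [← hK, ← hwdef, ← hθdef] at k
    have e : K * (1 / (8 * C * K) * M * ((A + B) * θ)) * (‖y - y'‖ / w) ^ α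
        = M * (H * (‖y - y'‖ / w) ^ α) := by rw [hH]; field_simp
    rw [e] at k
    exact (le_of_mul_le_mul_left k hM).trans
      (mul_le_mul_of_nonneg_left (hpow _ (norm_nonneg _)) hH0)
  have hconst : C * (A * (3 / 2 * w) / (w / 4) ^ 2 + H) * 4 ≤ ((96 * C + 1) * A + B / 2) * θ := by
    have e1 : A * (3 / 2 * w) / (w / 4) ^ 2 = 24 * (A * (1 / w)) := by field_simp; ring
    have k1 : 1 / w ≤ θ := by
      rw [div_le_iff₀ hw]; linarith
    have k2 := mul_le_mul_of_nonneg_left k1 hA0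
    have e2 : C * H = (A + B) * θ / 8 := by rw [hH]; field_simp
    rw [e1]
    have k3 := mul_le_mul_of_nonneg_left k2 hC.le
    have k4 : 0 ≤ A * θ := by positivity
    linarith
  have hN : 0 ≤ C * (A * (3 / 2 * w) / (w / 4) ^ 2 + H) := by positivity
  intro i j
  obtain ⟨r1, r2⟩ := hSch φ x (w / 4) (by positivity) (h.smooth.mono hsub) (A * (3 / 2 * w)) H
    (by positivity) hH0 hφA hLH i j
  refine ⟨r1.trans (by linarith), fun y hy => ?_⟩
  refine (r2 y (by rw [norm_sub_rev]; exact hy)).trans ?_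
  have k1 : (‖x - y‖ / (w / 4)) ^ α ≤ 4 * (‖x - y‖ / w) ^ α := by
    have e : ‖x - y‖ / (w / 4) = 4 * (‖x - y‖ / w) := by field_simp
    rw [e, Real.mul_rpow (by norm_num) (by positivity)]
    refine mul_le_mul_of_nonneg_right ?_ (by positivity)
    simpa using Real.rpow_le_rpow_of_exponent_le (show (1:ℝ) ≤ 4 by norm_num) hα1.le
  have k2 : 0 ≤ (‖x - y‖ / w) ^ α := by positivity
  calc _ ≤ C * (A * (3 / 2 * w) / (w / 4) ^ 2 + H) * (4 * (‖x - y‖ / w) ^ α) :=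
        mul_le_mul_of_nonneg_left k1 hN
    _ = C * (A * (3 / 2 * w) / (w / 4) ^ 2 + H) * 4 * (‖x - y‖ / w) ^ α := by ring
    _ ≤ _ := mul_le_mul_of_nonneg_right hconst k2

theorem WB.mono {φ : Euc I → ℝ} {R r₀ α s B B' : ℝ} (hr₀ : 0 < r₀) (hs : 0 < s)
    (h : WB φ R r₀ α s B) (hBB : B ≤ B') : WB φ R r₀ α s B' := by
  intro x hx i j
  have hw := wt_pos hr₀ hx
  have hθ := th_pos hs hw
  obtain ⟨h1, h2⟩ := h x hx i j
  refine ⟨h1.trans (by gcongr), fun y hy => (h2 y hy).trans ?_⟩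
  have : 0 ≤ (‖x - y‖ / wt R r₀ x) ^ α := by positivity
  gcongr

/-- Interior derivative bounds: `|∂_i φ| ≤ C A` and `|∂²_ij φ| ≤ C A / w`, provided *some* finite
weighted bound holds for each `s`. -/
theorem interior_bounds (hI : 0 < I) (a μ c : Fin I → ℝ) (ha : ∀ i, 0 < a i) (ha1 : ∀ i, a i ≤ 1)
    {γ Λ α : ℝ} (hγ : 0 ≤ γ) (hΛ : 0 ≤ Λ) (hμ : ∀ i, |μ i| ≤ Λ) (hc : ∀ i, |c i| ≤ Λ)
    (hα : 0 < α) (hα1 : α < 1) :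
    ∃ C ε : ℝ, 0 < C ∧ 0 < ε ∧ ∀ (b M R r₀ A : ℝ) (φ g : Euc I → ℝ) (l e : Euc I → Fin I → ℝ),
      LocEq a μ c γ Λ b M R r₀ A φ g l e → 0 < M → 0 ≤ b → 0 < r₀ → 1 ≤ A →
      r₀ ^ 2 + r₀ + b * r₀ + b ≤ ε * M →
      (∀ s : ℝ, 0 < s → ∃ B : ℝ, WB φ R r₀ α s B) →
      ∀ x : Euc I, ‖x‖ < R → (∀ i, |pd1 φ i x| ≤ C * A) ∧
        ∀ i j, |pd1 (pd1 φ j) i x| ≤ C * A / wt R r₀ x := by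
  obtain ⟨C, ε, hC, hε, hstep⟩ := WB_step hI a μ c ha ha1 hγ hΛ hμ hc hα hα1
  refine ⟨10 + 2 * (I + 1) * (2 * C + 1), ε, by positivity, hε, ?_⟩
  intro b M R r₀ A φ g l e h hM hb hr₀ hA hS hfin x hx
  have hw := wt_pos hr₀ hx
  have hA0 : 0 ≤ A := by linarith
  obtain ⟨B₁, hB₁⟩ := hfin (wt R r₀ x) hw
  set B₀ := max B₁ 0 with hB₀
  have hB₀n : 0 ≤ B₀ := le_max_right _ _
  have iter : ∀ k : ℕ, WB φ R r₀ α (wt R r₀ x) (2 * C * A + B₀ / 2 ^ k) := by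
    intro k
    induction k with
    | zero =>
      refine hB₁.mono hr₀ hw ((le_max_left B₁ 0).trans ?_)
      rw [← hB₀, pow_zero, div_one]
      have : 0 ≤ 2 * C * A := by positivity
      linarith
    | succ k ih =>
      have := hstep b M R r₀ A φ g l e h hM hb hr₀ hA hS _ _ hw (by positivity) ih
      have e1 : C * A + (2 * C * A + B₀ / 2 ^ k) / 2 = 2 * C * A + B₀ / 2 ^ (k + 1) := by
        rw [pow_succ]; field_simp; ring
      rwa [e1] at this
  obtain ⟨k, hk⟩ := pow_unbounded_of_one_lt B₀ (show (1 : ℝ) < 2 by norm_num)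
  have hWB : WB φ R r₀ α (wt R r₀ x) ((2 * C + 1) * A) := by
    refine (iter k).mono hr₀ hw ?_
    have : B₀ / 2 ^ k ≤ 1 := by
      rw [div_le_one (by positivity)]; exact hk.le
    linarith
  have eth : th (wt R r₀ x) (wt R r₀ x) = 2 / wt R r₀ x := by rw [th]; field_simp; ring
  have hIn : (0 : ℝ) ≤ I := by positivity
  constructor
  · intro i
    refine (h.grad_bound hA0 (by positivity) hw hr₀ hWB hx i).trans (le_of_sub_nonneg ?_)
    rw [eth, mul_div_cancel₀ _ hw.ne']
    have : (10 + 2 * (I + 1) * (2 * C + 1)) * A - (10 * A + I * ((2 * C + 1) * A) * 2)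
        = 2 * (2 * C + 1) * A := by ring
    rw [this]; positivity
  · intro i j
    refine (hWB x hx i j).1.trans ?_
    rw [eth, ← mul_div_assoc]
    refine div_le_div_of_nonneg_right (le_of_sub_nonneg ?_) hw.le
    have : (10 + 2 * (I + 1) * (2 * C + 1)) * A - (2 * C + 1) * A * 2
        = 10 * A + 2 * I * (2 * C + 1) * A := by ring
    rw [this]; positivity

/-! ### A priori finiteness of the weighted bound -/

theorem pd1_pd1_eq {f : Euc I → ℝ} {x : Euc I} (hf : ContDiffAt ℝ 2 f x) (i j : Fin I) :
    pd1 (pd1 f i) j x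
      = fderiv ℝ (fderiv ℝ f) x (EuclideanSpace.single j 1) (EuclideanSpace.single i 1) := by
  have hd : DifferentiableAt ℝ (fderiv ℝ f) x :=
    (hf.fderiv_right (m := 1) (by norm_num)).differentiableAt (by norm_num)
  have : HasFDerivAt (pd1 f i) _ x :=
    hd.hasFDerivAt.clm_apply (hasFDerivAt_const (EuclideanSpace.single i (1:ℝ)) x)
  rw [pd1, this.fderiv]
  simp

theorem abs_apply_single_le (T : Euc I →L[ℝ] Euc I →L[ℝ] ℝ) (i j : Fin I) :
    |T (EuclideanSpace.single j 1) (EuclideanSpace.single i 1)| ≤ ‖T‖ := by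
  have := T.le_opNorm₂ (EuclideanSpace.single j (1:ℝ)) (EuclideanSpace.single i (1:ℝ))
  simpa using this

/-- A finite interior Schauder norm makes the weighted bound finite for every `s > 0`. This only
serves to start the absorption argument; the size of `B` is irrelevant there. -/
theorem exists_WB_of_schauder {φ : Euc I → ℝ} {R r₀ α s M : ℝ} (hα0 : 0 < α) (hα1 : α ≤ 1)
    (hr₀ : 0 < r₀) (hs : 0 < s) (hsm : ContDiffOn ℝ 2 φ (ball 0 R)) (hS : SchauderBound α R M φ) :
    ∃ B, WB φ R r₀ (α / 2) s B := by
  obtain ⟨h0, -, h2, h3⟩ := hS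
  have hcd : ∀ x : Euc I, ‖x‖ < R → ContDiffAt ℝ 2 φ x := fun x hx =>
    hsm.contDiffAt (isOpen_ball.mem_nhds (by simpa using hx))
  refine ⟨3 * M / s, fun x hx i j => ?_⟩
  have hM : 0 ≤ M := (abs_nonneg _).trans (h0 x hx)
  have hw := wt_pos hr₀ hx
  have hwR : wt R r₀ x ≤ R - ‖x‖ := min_le_left _ _
  set w := wt R r₀ x with hwdef
  have hth : M / w ^ 2 ≤ M / s * th s w := by
    have : M / s * th s w = M / w ^ 2 + M / (s * w) := by rw [th]; field_simp; ring
    rw [this]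
    have : 0 ≤ M / (s * w) := by positivity
    linarith
  have hth0 : 0 ≤ M / s * th s w := mul_nonneg (by positivity) (th_pos hs hw).le
  have e3 : 3 * M / s * th s w = 3 * (M / s * th s w) := by ring
  rw [e3]
  constructor
  · rw [pd1_pd1_eq (hcd x hx)]
    refine (abs_apply_single_le _ _ _).trans ?_
    have h4 : ‖fderiv ℝ (fderiv ℝ φ) x‖ ≤ M / w ^ 2 := by
      rw [le_div_iff₀ (by positivity), mul_comm]
      refine le_trans ?_ (h2 x hx)
      gcongr
    linarith
  · intro y hy
    have hyx : ‖y - x‖ ≤ w / 2 := by rw [norm_sub_rev]; linarith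
    have hyR : ‖y‖ < R := lt_of_near hr₀ hx hyx
    rw [pd1_pd1_eq (hcd x hx), pd1_pd1_eq (hcd y hyR)]
    have e : fderiv ℝ (fderiv ℝ φ) x (EuclideanSpace.single i 1) (EuclideanSpace.single j 1)
        - fderiv ℝ (fderiv ℝ φ) y (EuclideanSpace.single i 1) (EuclideanSpace.single j 1)
        = (fderiv ℝ (fderiv ℝ φ) x - fderiv ℝ (fderiv ℝ φ) y)
          (EuclideanSpace.single i 1) (EuclideanSpace.single j 1) := by simp
    rw [e]
    refine (abs_apply_single_le _ _ _).trans ?_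
    rcases eq_or_ne x y with rfl | hne
    · simp only [sub_self, norm_zero]
      have h3' : (0:ℝ) ≤ 3 * (M / s * th s w) := by linarith
      refine le_trans (le_of_eq ContinuousLinearMap.opNorm_zero) (mul_nonneg h3' ?_)
      exact (Real.rpow_nonneg (div_nonneg le_rfl hw.le) _)
    have hr : 0 < ‖x - y‖ := norm_pos_iff.2 (sub_ne_zero.2 hne)
    have h5 := h3 x y hx hyR hne
    have hmin : 3 / 4 * w ≤ min (R - ‖x‖) (R - ‖y‖) := by
      refine le_min (by linarith) ?_
      have := norm_sub_norm_le y x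
      rw [norm_sub_rev] at this
      linarith
    have hH0 := norm_nonneg (fderiv ℝ (fderiv ℝ φ) x - fderiv ℝ (fderiv ℝ φ) y)
    set H := ‖fderiv ℝ (fderiv ℝ φ) x - fderiv ℝ (fderiv ℝ φ) y‖ with hH
    have h6 : (3 / 4 * w) ^ (2 + α) * H ≤ M * ‖x - y‖ ^ α :=
      (mul_le_mul_of_nonneg_right (Real.rpow_le_rpow (by positivity) hmin (by linarith : (0:ℝ) ≤ 2 + α))
        hH0).trans h5
    have h7 : w ^ 2 * w ^ α / 3 ≤ (3 / 4 * w) ^ (2 + α) := by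
      rw [Real.rpow_add (by positivity), Real.mul_rpow (z := α) (by norm_num) hw.le,
        Real.rpow_two]
      have : (3 / 4 : ℝ) ≤ (3 / 4) ^ α := by
        conv_lhs => rw [← Real.rpow_one (3 / 4 : ℝ)]
        exact Real.rpow_le_rpow_of_exponent_ge (by norm_num) (by norm_num) hα1
      have hp : 0 < w ^ 2 * w ^ α := by positivity
      have := mul_le_mul_of_nonneg_left this hp.le
      nlinarith
    have h8 : H ≤ 3 * (M / w ^ 2) * (‖x - y‖ / w) ^ α := by
      have h9 := (mul_le_mul_of_nonneg_right h7 hH0).trans h6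
      rw [Real.div_rpow hr.le hw.le]
      have : 3 * (M / w ^ 2) * (‖x - y‖ ^ α / w ^ α) = 3 * (M * ‖x - y‖ ^ α) / (w ^ 2 * w ^ α) := by
        field_simp
      rw [this, le_div_iff₀ (by positivity)]
      linarith
    have hratio : ‖x - y‖ / w ≤ 1 := by rw [div_le_one hw]; linarith
    have h10 : (‖x - y‖ / w) ^ α ≤ (‖x - y‖ / w) ^ (α / 2) :=
      Real.rpow_le_rpow_of_exponent_ge (by positivity) hratio (by linarith)
    refine h8.trans ?_
    have h11 : 0 ≤ (‖x - y‖ / w) ^ (α / 2) := by positivity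
    have h12 : 0 ≤ M / w ^ 2 := by positivity
    calc 3 * (M / w ^ 2) * (‖x - y‖ / w) ^ α ≤ 3 * (M / w ^ 2) * (‖x - y‖ / w) ^ (α / 2) := by
          gcongr
      _ ≤ _ := by gcongr

/-! ### Oscillation of the controlled second order term -/

/-- Twice the difference between the uncontrolled diffusion coefficient in the HJB equation and its
leading part `a_i μ̄ n`, where `μ̄ = (∑ a_j/μ_j)⁻¹`. -/
def ecoef (μ a : Fin I → ℝ) (lam : ℝ) (n : ℕ) (x : Euc I) (i : Fin I) : ℝ :=
  a i * (lam - (∑ j, a j / μ j)⁻¹ * n) + μ i * x i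

theorem mul_nu {μ : Fin I → ℝ} (a : Fin I → ℝ) (hμ : ∀ i, 0 < μ i) (i : Fin I) :
    μ i * nu μ a i = a i * (∑ j, a j / μ j)⁻¹ := by
  have := (hμ i).ne'
  rw [nu]; field_simp

theorem dcoef_eq {μ : Fin I → ℝ} (a : Fin I → ℝ) (hμ : ∀ i, 0 < μ i) (lam : ℝ) (n : ℕ) (x : Euc I)
    (i : Fin I) :
    dcoef μ a lam n x i = 2 * (a i * ((∑ j, a j / μ j)⁻¹ * n)) + ecoef μ a lam n x i := by
  have := mul_nu a hμ i
  rw [dcoef, ecoef, mul_add, ← mul_assoc, this]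
  ring

theorem abs_pos_sub_le (x y : Euc I) : |pos x - pos y| ≤ I * ‖x - y‖ := by
  have h1 : |pos x - pos y| ≤ |∑ j, x j - ∑ j, y j| := by
    rw [pos, pos]
    exact abs_max_sub_max_le_abs _ _ _
  refine h1.trans ?_
  rw [← Finset.sum_sub_distrib]
  refine (Finset.abs_sum_le_sum_abs _ _).trans ?_
  calc ∑ j, |x j - y j| ≤ ∑ _j : Fin I, ‖x - y‖ :=
        Finset.sum_le_sum fun j _ => abs_coord_le (x - y) j
    _ = I * ‖x - y‖ := by simp

/-- The HJB equation in the form `M ∑ a_i ∂²_ii φ = remainder` with `M = μ̄ n`. -/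
theorem locEq_of_sol {μ a c : Fin I → ℝ} {γ lam R Λ b r₀ A : ℝ} {n : ℕ} {φ : Euc I → ℝ}
    (hμ : ∀ i, 0 < μ i) (hsol : IsSolGen μ a c γ lam n R (fun y => max y 0) φ)
    (hsize : ∀ x, ‖x‖ < R → |φ x| ≤ A * wt R r₀ x) (hΛμ : ∀ i, |μ i| ≤ Λ) (hΛI : (I : ℝ) ≤ Λ)
    (hbg : ∀ x : Euc I, ‖x‖ < R → pos x ≤ b)
    (hbl : ∀ x : Euc I, ‖x‖ < R → ∀ i, |drift μ a lam n x i| ≤ b)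
    (hbe : ∀ x : Euc I, ‖x‖ < R → ∀ i, |ecoef μ a lam n x i| ≤ b) :
    LocEq a μ c γ Λ b ((∑ j, a j / μ j)⁻¹ * n) R r₀ A φ pos (drift μ a lam n)
      (ecoef μ a lam n) where
  smooth := hsol.2.1
  size := hsize
  eqn x hx := by
    have h := hsol.2.2.2 x (by simpa using hx)
    simp only [HJBgen] at h
    have e1 : ∑ i, (a i * lam + μ i * (nu μ a i * n + x i)) * pd2 φ i x
        = 2 * ((∑ j, a j / μ j)⁻¹ * n * Lop a φ x)
          + ∑ i, ecoef μ a lam n x i * pd1 (pd1 φ i) i x := by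
      rw [Lop, Finset.mul_sum, Finset.mul_sum, ← Finset.sum_add_distrib]
      refine Finset.sum_congr rfl fun i _ => ?_
      have := dcoef_eq a hμ lam n x i
      rw [dcoef] at this
      rw [this, show pd2 φ i x = pd1 (pd1 φ i) i x from rfl]
      ring
    rw [e1] at h
    rw [remainder]
    have e2 : ∑ i, drift μ a lam n x i * pd1 φ i x
        = ∑ i, ((a i * lam - μ i * nu μ a i * n) - μ i * x i) * pd1 φ i x := rfl
    have e3 : pos x * (⨅ i, (c i + μ i * pd1 φ i x - 1 / 2 * μ i * pd1 (pd1 φ i) i x))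
        = max (∑ j, x j) 0 * (⨅ i, (c i + μ i * pd1 φ i x - 1 / 2 * μ i * pd2 φ i x)) := rfl
    rw [e2, e3]
    linarith
  bg x hx := by rw [abs_of_nonneg (pos_nonneg x)]; exact hbg x hx
  bl := hbl
  be := hbe
  lg x y := (abs_pos_sub_le x y).trans (by gcongr)
  ll x y i := by
    have : drift μ a lam n x i - drift μ a lam n y i = -(μ i * (x - y) i) := by
      rw [drift, drift, PiLp.sub_apply]; ring
    rw [this, abs_neg, abs_mul]
    exact mul_le_mul (hΛμ i) (abs_coord_le _ i) (abs_nonneg _) ((abs_nonneg _).trans (hΛμ i))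
  le x y i := by
    have : ecoef μ a lam n x i - ecoef μ a lam n y i = μ i * (x - y) i := by
      rw [ecoef, ecoef, PiLp.sub_apply]; ring
    rw [this, abs_mul]
    exact mul_le_mul (hΛμ i) (abs_coord_le _ i) (abs_nonneg _) ((abs_nonneg _).trans (hΛμ i))

/-- Oscillation of the controlled second-order term between two points at distance at most `1`:
its leading part is a multiple of `∑ a_i ∂²_ii φ`, which the equation expresses through lower-order
quantities, and the rest has coefficients of size `b` only. -/
theorem osc_bound {μ a c : Fin I → ℝ} {γ lam R Λ b r₀ A ρ G Q : ℝ} {n : ℕ} {φ : Euc I → ℝ}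
    (hI : 0 < I) (hμ : ∀ i, 0 < μ i) (hγ : 0 ≤ γ) (hΛ : 0 ≤ Λ) (hΛμ : ∀ i, |μ i| ≤ Λ)
    (hc : ∀ i, |c i| ≤ Λ) (hG0 : 0 ≤ G) (hQ0 : 0 ≤ Q)
    (h : LocEq a μ c γ Λ b ((∑ j, a j / μ j)⁻¹ * n) R r₀ A φ pos (drift μ a lam n)
      (ecoef μ a lam n)) (hρ : ρ ≤ R)
    (hG : ∀ x, ‖x‖ < ρ → ∀ i, |pd1 φ i x| ≤ G)
    (hQ : ∀ x, ‖x‖ < ρ → ∀ i j, |pd1 (pd1 φ j) i x| ≤ Q)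
    {x y : Euc I} (hx : ‖x‖ < ρ) (hy : ‖y‖ < ρ) (hxy : ‖x - y‖ ≤ 1)
    {u : Fin I → ℝ} (hu : ∀ i, 0 ≤ u i) (hu1 : ∑ i, u i = 1) :
    |∑ i, (pd2 φ i y - pd2 φ i x) * sigmaSq μ a lam n x u i|
      ≤ 2 * (γ * (I * G) + (b * (Λ * (I * Q + 2 * Q)) + Λ * (Λ * (1 + G + Q)))
          + I * (b * (I * Q) + Λ * G) + I * (b * (2 * Q) + Λ * Q))
        + I * (2 * Q * (b + Λ * b)) := by
  have hcv : Convex ℝ (ball (0 : Euc I) ρ) := convex_ball _ _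
  have hin : ∀ z ∈ ball (0 : Euc I) ρ, ‖z‖ < ρ := fun z hz => by simpa using hz
  have hmem : ∀ z : Euc I, ‖z‖ < ρ → z ∈ ball (0 : Euc I) ρ := fun z hz => by simpa using hz
  have hd0 : |φ x - φ y| ≤ I * G := by
    have := abs_sub_le_of_pd1 hcv hG0
      (fun z hz => (h.contDiffAt ((hin z hz).trans_le hρ)).differentiableAt (by norm_num))
      (fun z hz => hG z (hin z hz)) (hmem x hx) (hmem y hy)
    exact this.trans (mul_le_of_le_one_right (by positivity) hxy)
  have hd1 : ∀ i, |pd1 φ i x - pd1 φ i y| ≤ I * Q := fun i => by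
    have := abs_sub_le_of_pd1 hcv hQ0
      (fun z hz => (contDiffAt_pd1 (h.contDiffAt ((hin z hz).trans_le hρ)) i).differentiableAt
        (by norm_num))
      (fun z hz j => hQ z (hin z hz) j i) (hmem x hx) (hmem y hy)
    exact this.trans (mul_le_of_le_one_right (by positivity) hxy)
  have hd2 : ∀ i, |pd1 (pd1 φ i) i x - pd1 (pd1 φ i) i y| ≤ 2 * Q := fun i =>
    (abs_sub _ _).trans (by linarith [hQ x hx i i, hQ y hy i i])
  have hΛ1 : Λ * ‖x - y‖ ≤ Λ := mul_le_of_le_one_right hΛ hxy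
  have hxR := hx.trans_le hρ
  have hyR := hy.trans_le hρ
  have main := remainder_diff hI hγ hΛ hΛμ hc (h.bg x hxR) (h.bl x hxR) (h.be x hxR)
    ((h.lg x y).trans hΛ1) (fun i => (h.ll x y i).trans hΛ1) (fun i => (h.le x y i).trans hΛ1)
    hd0 hd1 hd2 (hG y hy) (fun i => hQ y hy i i)
  rw [← h.eqn x hxR, ← h.eqn y hyR] at main
  have hsplit : ∑ i, (pd2 φ i y - pd2 φ i x) * sigmaSq μ a lam n x u i
      = -2 * ((∑ j, a j / μ j)⁻¹ * n * Lop a φ x - (∑ j, a j / μ j)⁻¹ * n * Lop a φ y)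
        + ∑ i, (pd2 φ i y - pd2 φ i x) * (ecoef μ a lam n x i - μ i * (u i * pos x)) := by
    rw [Lop, Lop, ← mul_sub, ← Finset.sum_sub_distrib, Finset.mul_sum, Finset.mul_sum,
      ← Finset.sum_add_distrib]
    refine Finset.sum_congr rfl fun i _ => ?_
    have := dcoef_eq a hμ lam n x i
    have e : sigmaSq μ a lam n x u i = dcoef μ a lam n x i - μ i * (u i * pos x) := by
      rw [sigmaSq, dcoef, pos]; ring
    rw [e, this, show pd2 φ i y = pd1 (pd1 φ i) i y from rfl,
      show pd2 φ i x = pd1 (pd1 φ i) i x from rfl]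
    ring
  have hrest : |∑ i, (pd2 φ i y - pd2 φ i x) * (ecoef μ a lam n x i - μ i * (u i * pos x))|
      ≤ I * (2 * Q * (b + Λ * b)) := by
    refine (Finset.abs_sum_le_sum_abs _ _).trans ?_
    calc _ ≤ ∑ _i : Fin I, 2 * Q * (b + Λ * b) := Finset.sum_le_sum fun i _ => by
          have k1 : |pd2 φ i y - pd2 φ i x| ≤ 2 * Q := by
            rw [abs_sub_comm]; exact hd2 i
          have ui : u i ≤ 1 := hu1 ▸ Finset.single_le_sum (fun j _ => hu j) (Finset.mem_univ i)
          have k2 : |u i * pos x| ≤ b := by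
            rw [abs_mul, abs_of_nonneg (hu i)]
            exact (mul_le_of_le_one_left (abs_nonneg _) ui).trans (h.bg x hxR)
          have k3 : |μ i * (u i * pos x)| ≤ Λ * b := by
            rw [abs_mul]
            exact mul_le_mul (hΛμ i) k2 (abs_nonneg _) hΛ
          have k4 := (abs_sub (ecoef μ a lam n x i) (μ i * (u i * pos x))).trans
            (add_le_add (h.be x hxR i) k3)
          rw [abs_mul]
          exact mul_le_mul k1 k4 (abs_nonneg _) (by positivity)
      _ = I * (2 * Q * (b + Λ * b)) := by simp
  rw [hsplit]
  refine (abs_add_le _ _).trans (add_le_add ?_ hrest)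
  rw [abs_mul, show |(-2 : ℝ)| = 2 by norm_num]
  exact mul_le_mul_of_nonneg_left main (by norm_num)

/-! ### Orders of magnitude in the heavy-traffic regime -/

theorem exists_large_log (m : ℕ) {η : ℝ} (hη : 0 < η) :
    ∃ N : ℕ, ∀ n : ℕ, N ≤ n → 1 ≤ n ∧ 1 ≤ Real.log n ∧ √n * Real.log n ^ m ≤ η * n := by
  have h1 : ∀ᶠ n : ℕ in Filter.atTop, 1 ≤ Real.log n :=
    (Real.tendsto_log_atTop.comp tendsto_natCast_atTop_atTop).eventually_ge_atTop 1
  have h2 : ∀ᶠ n : ℕ in Filter.atTop, ‖Real.log n ^ (2 * m)‖ ≤ η ^ 2 * ‖(id (n : ℝ))‖ :=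
    tendsto_natCast_atTop_atTop.eventually
      ((Real.isLittleO_pow_log_id_atTop (n := 2 * m)).def (by positivity))
  obtain ⟨N, hN⟩ := Filter.eventually_atTop.1 ((h1.and h2).and (Filter.eventually_ge_atTop 1))
  refine ⟨N, fun n hn => ?_⟩
  obtain ⟨⟨hL, h3⟩, hn1⟩ := hN n hn
  refine ⟨hn1, hL, ?_⟩
  have hn0 : (0 : ℝ) ≤ n := Nat.cast_nonneg n
  rw [Real.norm_of_nonneg (by positivity), id, Real.norm_of_nonneg hn0] at h3
  have h4 : Real.log n ^ m ≤ η * √n := by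
    refine le_of_sq_le_sq ?_ (by positivity)
    rw [mul_pow, Real.sq_sqrt hn0, ← pow_mul, mul_comm m 2]
    exact h3
  calc √n * Real.log n ^ m ≤ √n * (η * √n) := by gcongr
    _ = η * (√n * √n) := by ring
    _ = η * n := by rw [Real.mul_self_sqrt hn0]

/-- The heavy-traffic condition gives `λ^n = μ̄ n + O(√n)`. -/
theorem heavy_traffic {H β lam : ℝ} {n : ℕ} (hH : 0 < H) (hn : 1 ≤ n) (hlam : 0 < lam)
    (h : (n : ℝ) = lam * H + β * √(lam * H)) :
    |lam - H⁻¹ * n| ≤ H⁻¹ * (|β| * √(2 + β ^ 2)) * √n := by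
  set z := lam * H with hz
  have hz0 : 0 < z := mul_pos hlam hH
  have hn1 : (1 : ℝ) ≤ n := by exact_mod_cast hn
  have hsq : √z ^ 2 = z := Real.sq_sqrt hz0.le
  have h1 : z ≤ (2 + β ^ 2) * n := by
    nlinarith [sq_nonneg (√z + β), sq_nonneg β]
  have h2 : √z ≤ √(2 + β ^ 2) * √n := by
    rw [← Real.sqrt_mul (by positivity)]
    exact Real.sqrt_le_sqrt h1
  have e : lam - H⁻¹ * n = H⁻¹ * -(β * √z) := by
    rw [h, hz]; field_simp; ring
  rw [e, abs_mul, abs_of_pos (inv_pos.2 hH), abs_neg, abs_mul, abs_of_nonneg (Real.sqrt_nonneg z)]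
  have : |β| * √z ≤ |β| * (√(2 + β ^ 2) * √n) := by gcongr
  calc _ ≤ H⁻¹ * (|β| * (√(2 + β ^ 2) * √n)) := by gcongr
    _ = _ := by ring

theorem pos_le_norm (x : Euc I) : pos x ≤ I * ‖x‖ := by
  refine max_le ?_ (by positivity)
  calc ∑ j, x j ≤ ∑ _j : Fin I, ‖x‖ :=
        Finset.sum_le_sum fun j _ => (le_abs_self _).trans (abs_coord_le x j)
    _ = I * ‖x‖ := by simp

/-- All coefficients other than the leading diffusion are `O(X)` in the ball, if `‖x‖ ≤ κ X` there
and `λ^n - μ̄ n = O(X)`. -/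
theorem coef_bounds {μ a : Fin I → ℝ} {lam κ Cl Λ X : ℝ} {n : ℕ} (hμ : ∀ i, 0 < μ i)
    (ha : ∀ i, 0 < a i) (ha1 : ∀ i, a i ≤ 1) (hΛμ : ∀ i, |μ i| ≤ Λ) (hΛ : 0 ≤ Λ)
    (hl : |lam - (∑ j, a j / μ j)⁻¹ * n| ≤ Cl * X) {x : Euc I} (hx : ‖x‖ < κ * X) :
    pos x ≤ I * κ * X ∧
    (∀ i, |drift μ a lam n x i| + μ i * pos x ≤ (Cl + Λ * κ + Λ * (I * κ)) * X) ∧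
    (∀ i, |ecoef μ a lam n x i| + μ i * pos x ≤ (Cl + Λ * κ + Λ * (I * κ)) * X) := by
  have hp : pos x ≤ I * κ * X := by
    refine (pos_le_norm x).trans ?_
    rw [mul_assoc]; gcongr
  have hmp : ∀ i, μ i * pos x ≤ Λ * (I * κ) * X := fun i => by
    rw [mul_assoc]
    exact mul_le_mul ((le_abs_self _).trans (hΛμ i)) hp (pos_nonneg x) hΛ
  have h1 : ∀ i, |a i * (lam - (∑ j, a j / μ j)⁻¹ * n)| ≤ Cl * X := fun i => by
    rw [abs_mul, abs_of_pos (ha i)]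
    exact (mul_le_of_le_one_left (abs_nonneg _) (ha1 i)).trans hl
  have h2 : ∀ i, |μ i * x i| ≤ Λ * κ * X := fun i => by
    rw [abs_mul, mul_assoc]
    exact mul_le_mul (hΛμ i) ((abs_coord_le x i).trans hx.le) (abs_nonneg _) hΛ
  refine ⟨hp, fun i => ?_, fun i => ?_⟩
  · have e : drift μ a lam n x i = a i * (lam - (∑ j, a j / μ j)⁻¹ * n) - μ i * x i := by
      rw [drift, mul_nu a hμ i]; ring
    rw [e]
    linarith [abs_sub (a i * (lam - (∑ j, a j / μ j)⁻¹ * n)) (μ i * x i), h1 i, h2 i, hmp i]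
  · rw [ecoef]
    linarith [abs_add_le (a i * (lam - (∑ j, a j / μ j)⁻¹ * n)) (μ i * x i), h1 i, h2 i, hmp i]

/-- Collection of the error terms in `osc_bound`, using `Q ≤ b Q`. -/
theorem collect_osc {Λ γ b G Q K : ℝ} (hΛ0 : 0 ≤ Λ) (hγ : 0 ≤ γ) (hG0 : 0 ≤ G) (hQ0 : 0 ≤ Q)
    (hQb : Q ≤ b * Q)
    (hK : K = 2 * (γ * I + Λ * (I + 2) + Λ * Λ + I * I + I * Λ + 2 * I + I * Λ)
      + 2 * I * (1 + Λ)) :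
    2 * (γ * (I * G) + (b * (Λ * (I * Q + 2 * Q)) + Λ * (Λ * (1 + G + Q)))
          + I * (b * (I * Q) + Λ * G) + I * (b * (2 * Q) + Λ * Q))
        + I * (2 * Q * (b + Λ * b)) ≤ K * (1 + G + b * Q) := by
  set q := b * Q with hq
  have hq0 : 0 ≤ q := hQ0.trans hQb
  have e : b * (Λ * (I * Q + 2 * Q)) = Λ * (I + 2) * q ∧ I * (b * (I * Q)) = I * I * q ∧
      I * (b * (2 * Q)) = 2 * I * q ∧ I * (2 * Q * (b + Λ * b)) = 2 * I * (1 + Λ) * q := by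
    rw [hq]; refine ⟨by ring, by ring, by ring, by ring⟩
  have p1 : Λ * (Λ * (1 + G + Q)) ≤ Λ * Λ * (1 + G + q) := by
    rw [← mul_assoc]; gcongr
  have p2 : I * (Λ * Q) ≤ I * Λ * (1 + G + q) := by
    rw [← mul_assoc]
    have : Q ≤ 1 + G + q := by linarith
    gcongr
  have p3 : γ * (I * G) ≤ γ * I * (1 + G + q) := by
    rw [← mul_assoc]
    have : G ≤ 1 + G + q := by linarith
    gcongr
  have p4 : I * (Λ * G) ≤ I * Λ * (1 + G + q) := by
    rw [← mul_assoc]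
    have : G ≤ 1 + G + q := by linarith
    gcongr
  have hqle : q ≤ 1 + G + q := by linarith
  have p5 : Λ * (I + 2) * q ≤ Λ * (I + 2) * (1 + G + q) := by gcongr
  have p6 : I * I * q ≤ I * I * (1 + G + q) := by gcongr
  have p7 : 2 * I * q ≤ 2 * I * (1 + G + q) := by gcongr
  have p8 : 2 * I * (1 + Λ) * q ≤ 2 * I * (1 + Λ) * (1 + G + q) := by gcongr
  obtain ⟨e1, e2, e3, e4⟩ := e
  rw [mul_add (I : ℝ), mul_add (I : ℝ), e1, e2, e3, e4]
  have eK : K * (1 + G + q) = 2 * (γ * I * (1 + G + q) + Λ * (I + 2) * (1 + G + q)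
    + Λ * Λ * (1 + G + q) + I * I * (1 + G + q) + I * Λ * (1 + G + q) + 2 * I * (1 + G + q)
    + I * Λ * (1 + G + q)) + 2 * I * (1 + Λ) * (1 + G + q) := by rw [hK]; ring
  rw [eK]
  linarith

set_option maxHeartbeats 2000000 in
/-- The estimate with the exponent `4 m`, which does not see the size of the Schauder norm. -/
theorem osc_log_bound (hI : 0 < I) (μ a c : Fin I → ℝ) (γ β : ℝ)
    (hμ : ∀ i, 0 < μ i) (ha : ∀ i, 0 < a i) (hsum : ∑ i, a i = 1)
    (hc : ∀ i, 0 < c i) (hγ : 0 < γ) (lam : ℕ → ℝ)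
    (hlam : ∀ n : ℕ, 1 ≤ n → 0 < lam n ∧
      (n : ℝ) = lam n * (∑ i, a i / μ i) + β * √(lam n * (∑ i, a i / μ i)))
    (κ : ℝ) (hκ : 0 < κ) (m : ℕ) (α : ℝ) (hα0 : 0 < α) (hα1 : α ≤ 1) :
    ∃ C : ℝ, 0 < C ∧ ∃ N : ℕ, ∀ n : ℕ, N ≤ n → 1 ≤ Real.log n ∧
      ∀ ϑ : ℝ, 0 < ϑ → ϑ < 1 → ∀ φ : Euc I → ℝ, ∀ M₀ : ℝ,
        IsSolGen μ a c γ (lam n) n (Rad κ m n) (fun y => max y 0) φ →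
        SchauderBound α (Rad κ m n) M₀ φ →
        ∀ x y : Euc I, ‖x‖ < ϑ * Rad κ m n → ‖y‖ < ϑ * Rad κ m n → ‖x - y‖ ≤ 1 →
          ∀ u : Fin I → ℝ, (∀ i, 0 ≤ u i) → (∑ i, u i) = 1 →
            |∑ i, (pd2 φ i y - pd2 φ i x) * sigmaSq μ a (lam n) n x u i| ≤
              C / (1 - ϑ) * Real.log n ^ (4 * m) := by
  have hne : Nonempty (Fin I) := ⟨⟨0, hI⟩⟩
  have i₀ : Fin I := ⟨0, hI⟩
  have hI1 : (1 : ℝ) ≤ I := by exact_mod_cast hI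
  set H := ∑ i, a i / μ i with hH
  have hH0 : 0 < H := Finset.sum_pos (fun i _ => div_pos (ha i) (hμ i)) Finset.univ_nonempty
  have hH1 : 0 < H⁻¹ := inv_pos.2 hH0
  have ha1 : ∀ i, a i ≤ 1 := fun i =>
    hsum ▸ Finset.single_le_sum (fun j _ => (ha j).le) (Finset.mem_univ i)
  obtain ⟨i₁, hi₁⟩ := Finite.exists_min a
  -- `Λ` dominates all fixed data
  set Λ : ℝ := I + ∑ i, (μ i + c i) with hΛ
  have hsle : ∀ i, μ i + c i ≤ ∑ i, (μ i + c i) := fun i =>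
    Finset.single_le_sum (f := fun i => μ i + c i)
      (fun j _ => (add_pos (hμ j) (hc j)).le) (Finset.mem_univ i)
  have hΛI : (I : ℝ) ≤ Λ := by linarith [hsle i₀, hμ i₀, hc i₀]
  have hΛ0 : 0 < Λ := by linarith
  have hΛμ : ∀ i, |μ i| ≤ Λ := fun i => by
    rw [abs_of_pos (hμ i)]; linarith [hsle i, hc i]
  have hΛc : ∀ i, |c i| ≤ Λ := fun i => by
    rw [abs_of_pos (hc i)]; linarith [hsle i, hμ i]
  obtain ⟨C, ε, hC, hε, hint⟩ := interior_bounds hI a μ c ha ha1 hγ.le hΛ0.le hΛμ hΛc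
    (α := α / 2) (by positivity) (by linarith)
  set Cl : ℝ := H⁻¹ * (|β| * √(2 + β ^ 2)) with hCl
  have hCl0 : 0 ≤ Cl := by positivity
  set C₁ : ℝ := 1 + I * κ + (Cl + Λ * κ + Λ * (I * κ)) with hC₁
  have hIκ : 0 < I * κ := by positivity
  have hC₁1 : 1 ≤ C₁ := by
    have : 0 ≤ Cl + Λ * κ + Λ * (I * κ) := by positivity
    linarith
  have hC₁0 : 0 < C₁ := by linarith
  set C₂ : ℝ := (4 * (Λ * C₁) + 1) / γ with hC₂
  have hC₂0 : 0 < C₂ := by positivity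
  have hC₂γ : γ * C₂ = 4 * (Λ * C₁) + 1 := by rw [hC₂]; field_simp
  set d : ℝ := a i₁ * H⁻¹ with hd
  have hd0 : 0 < d := mul_pos (ha i₁) hH1
  have hE : 0 < ε * H⁻¹ := mul_pos hε hH1
  -- the truncation radius is `δ √n / (log n) ^ m` with a small constant `δ`
  obtain ⟨δ, hδ0, hδ1, hδa, hδb, hδc, hδd, hδe, hδf⟩ : ∃ δ : ℝ, 0 < δ ∧ δ ≤ 1 ∧
      4 * (I * C₁) * δ ≤ d ∧ 8 * (Λ * C₁) * δ < C₂ * d ∧ 32 * (I * C₁) * δ ≤ γ * κ ^ 2 ∧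
      2 * δ ≤ κ ∧ δ ≤ 2 * C₂ ∧ (2 + C₁) * δ ≤ ε * H⁻¹ / 2 := by
    have key : ∀ k t : ℝ, 0 < k → 0 < t → ∀ᶠ δ in nhdsWithin (0 : ℝ) (Set.Ioi 0), k * δ < t := by
      intro k t hk ht
      filter_upwards [Ioo_mem_nhdsGT (show (0 : ℝ) < t / k by positivity)] with δ hδ
      have := (lt_div_iff₀ hk).1 hδ.2
      linarith
    have hpos : ∀ᶠ δ in nhdsWithin (0 : ℝ) (Set.Ioi 0), 0 < δ := self_mem_nhdsWithin
    have := (hpos.and ((key 1 1 one_pos one_pos).and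
      ((key (4 * (I * C₁)) d (by positivity) hd0).and
      ((key (8 * (Λ * C₁)) (C₂ * d) (by positivity) (by positivity)).and
      ((key (32 * (I * C₁)) (γ * κ ^ 2) (by positivity) (by positivity)).and
      ((key 2 κ two_pos hκ).and ((key 1 (2 * C₂) one_pos (by positivity)).and
      (key (2 + C₁) (ε * H⁻¹ / 2) (by positivity) (by positivity))))))))).exists
    obtain ⟨δ, h0, h1, h2, h3, h4, h5, h6, h7⟩ := this
    exact ⟨δ, h0, by linarith, h2.le, h3, h4.le, h5.le, by linarith, h7.le⟩
  set η : ℝ := min 1 (min (d / C₁) (ε * H⁻¹ / (2 * C₁))) with hη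
  have hη0 : 0 < η := by positivity
  have hη1 : η ≤ 1 := min_le_left _ _
  have hη2 : C₁ * η ≤ d := by
    have : η ≤ d / C₁ := (min_le_right _ _).trans (min_le_left _ _)
    rw [le_div_iff₀ hC₁0] at this
    linarith
  have hη3 : C₁ * η ≤ ε * H⁻¹ / 2 := by
    have : η ≤ ε * H⁻¹ / (2 * C₁) := (min_le_right _ _).trans (min_le_right _ _)
    rw [le_div_iff₀ (by positivity)] at this
    linarith
  clear_value Λ Cl C₁ C₂ d η
  obtain ⟨N, hN⟩ := exists_large_log m hη0
  set A₀ : ℝ := 2 * C₂ / δ with hA₀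
  have hA₀1 : 1 ≤ A₀ := by rw [hA₀, le_div_iff₀ hδ0]; linarith
  set K : ℝ := 2 * (γ * I + Λ * (I + 2) + Λ * Λ + I * I + I * Λ + 2 * I + I * Λ)
    + 2 * I * (1 + Λ) with hK
  have hK0 : 0 < K := by positivity
  set Cf : ℝ := K * (1 + C * A₀ + C * A₀ * (C₁ / κ + C₁ / δ)) with hCf
  refine ⟨Cf, by positivity, N, fun n hn => ?_⟩
  obtain ⟨hn1, hL, hXn⟩ := hN n hn
  clear_value A₀ K Cf
  refine ⟨hL, fun ϑ hϑ0 hϑ1 φ M₀ hsol hSch x y hx hy hxy u hu hu1 => ?_⟩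
  have hn1' : (1 : ℝ) ≤ n := by exact_mod_cast hn1
  have hL0 : 0 < Real.log n := by linarith
  set s := √(n : ℝ) with hs
  set L := Real.log n with hLdef
  have hs1 : 1 ≤ s := Real.one_le_sqrt.2 hn1'
  have hss : s * s = n := Real.mul_self_sqrt (by linarith)
  have hLm : 1 ≤ L ^ m := one_le_pow₀ hL
  set X := s * L ^ m with hX
  have hsX : s ≤ X := le_mul_of_one_le_right (by linarith) hLm
  have hX0 : 0 < X := by linarith
  clear_value X
  have hR : Rad κ m n = κ * X := by rw [Rad, hX]; ring
  rw [hR] at hsol hSch hx hy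
  have hRpos : 0 < κ * X := by positivity
  have hlX : |lam n - H⁻¹ * n| ≤ Cl * X :=
    (heavy_traffic hH0 hn1 (hlam n hn1).1 (hlam n hn1).2).trans (by rw [← hCl]; gcongr)
  have hcb : ∀ z : Euc I, ‖z‖ < κ * X → _ := fun z hz =>
    coef_bounds hμ ha ha1 hΛμ hΛ0.le hlX hz
  set b := C₁ * X with hb
  have hb0 : 0 < b := by positivity
  have hb1 : 1 ≤ b := by nlinarith
  have hbig1 : I * κ * X ≤ b := by
    rw [hb]; gcongr
    have : 0 ≤ Cl + Λ * κ + Λ * (I * κ) := by positivity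
    linarith
  have hbig2 : (Cl + Λ * κ + Λ * (I * κ)) * X ≤ b := by
    rw [hb]; gcongr; linarith
  have hmp : ∀ i (z : Euc I), 0 ≤ μ i * pos z := fun i z => mul_nonneg (hμ i).le (pos_nonneg z)
  set r₀ := δ * s / L ^ m with hr₀
  have hr₀0 : 0 < r₀ := by positivity
  have hr₀s : r₀ ≤ δ * s := div_le_self (by positivity) hLm
  clear_value b r₀
  have hbr : b * r₀ = C₁ * δ * n := by rw [hb, hr₀, hX, ← hss]; field_simp
  have hr₀2 : r₀ ^ 2 ≤ δ * δ * n := by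
    have := pow_le_pow_left₀ hr₀0.le hr₀s 2
    rw [← hss]; linarith
  have hXb : C₁ * X ≤ d * n := by
    calc C₁ * X ≤ C₁ * (η * n) := by gcongr
      _ = C₁ * η * n := by ring
      _ ≤ d * n := by gcongr
  have hXn2 : (n : ℝ) ≤ X ^ 2 := by
    rw [← hss]; nlinarith
  -- boundary growth from the barrier
  have hgrow := sol_bound (D := d * n) (b := b) (S := Λ * b) (T := C₂ * X) (r₀ := r₀) hI hc hγ hμ
    hsol i₀ (by positivity) hRpos (by positivity) hr₀0 hb0.le
    (fun z hz i => by
      rw [dcoef_eq a hμ]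
      have h1 := (hcb z hz).2.2 i
      have h2 := neg_abs_le (ecoef μ a (lam n) n z i)
      have h3 : d * n ≤ a i * (H⁻¹ * n) := by
        rw [hd, mul_assoc]
        exact mul_le_mul_of_nonneg_right (hi₁ i) (by positivity)
      linarith)
    (fun z hz i => ((hcb z hz).2.1 i).trans hbig2)
    (fun z hz => by
      rw [mul_comm]
      exact mul_le_mul ((le_abs_self _).trans (hΛc i₀)) ((hcb z hz).1.trans hbig1)
        (pos_nonneg z) hΛ0.le)
    (by
      rw [show 4 * (I * b) * r₀ = 4 * I * (b * r₀) by ring, hbr]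
      calc 4 * I * (C₁ * δ * n) = 4 * (I * C₁) * δ * n := by ring
        _ ≤ d * n := by gcongr)
    (by
      have e1 : 8 * (Λ * b) * r₀ ^ 2 ≤ 8 * (Λ * b) * (δ * n) := by
        gcongr
        exact hr₀2.trans (by
          have : δ * δ ≤ δ := mul_le_of_le_one_left hδ0.le hδ1
          gcongr)
      refine e1.trans_lt ?_
      calc 8 * (Λ * b) * (δ * n) = 8 * (Λ * C₁) * δ * (X * n) := by rw [hb]; ring
        _ < C₂ * d * (X * n) := by gcongr
        _ = _ := by ring)
    (by
      calc 4 * (Λ * b) = 4 * (Λ * C₁) * X := by rw [hb]; ring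
        _ < γ * C₂ * X := mul_lt_mul_of_pos_right (by linarith) hX0
        _ = _ := by ring)
    (by
      rw [show 32 * (I * b) * r₀ = 32 * I * (b * r₀) by ring, hbr]
      calc 32 * I * (C₁ * δ * n) = 32 * (I * C₁) * δ * n := by ring
        _ ≤ γ * κ ^ 2 * X ^ 2 := by gcongr
        _ = _ := by ring)
    (by
      calc 2 * r₀ ≤ 2 * (δ * X) := by gcongr; exact hr₀s.trans (by gcongr)
        _ = 2 * δ * X := by ring
        _ ≤ κ * X := by gcongr)
  set A := A₀ * L ^ (2 * m) with hA
  have hA1 : 1 ≤ A := one_le_mul_of_one_le_of_one_le hA₀1 (one_le_pow₀ hL)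
  have hA0 : 0 < A := by linarith
  have hAeq : 2 * (C₂ * X) / r₀ = A := by
    rw [hA, hA₀, hr₀, hX, pow_mul' L 2 m]; field_simp
  rw [hAeq] at hgrow
  clear_value A s L
  have hloc := locEq_of_sol (Λ := Λ) (b := b) (r₀ := r₀) (A := A) hμ hsol
    (fun z hz => hgrow z hz.le) hΛμ hΛI (fun z hz => (hcb z hz).1.trans hbig1)
    (fun z hz i => by linarith [(hcb z hz).2.1 i, hmp i z])
    (fun z hz i => by linarith [(hcb z hz).2.2 i, hmp i z])
  have hbd := hint b (H⁻¹ * n) (κ * X) r₀ A φ _ _ _ hloc (by positivity) hb0.le hr₀0 hA1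
    (by
      rw [hbr]
      have t1 : δ * δ * n ≤ δ * n := by
        have : δ * δ ≤ δ := mul_le_of_le_one_left hδ0.le hδ1
        gcongr
      have t2 : r₀ ≤ δ * n := hr₀s.trans (by
        have : s ≤ n := by rw [← hss]; exact le_mul_of_one_le_left (by linarith) hs1
        gcongr)
      have t3 : b ≤ ε * H⁻¹ / 2 * n := by
        calc b ≤ C₁ * (η * n) := by rw [hb]; gcongr
          _ = C₁ * η * n := by ring
          _ ≤ _ := by gcongr
      have t4 : (2 + C₁) * δ * n ≤ ε * H⁻¹ / 2 * n := by gcongr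
      linarith)
    (fun s' hs' => exists_WB_of_schauder hα0 hα1 hr₀0 hs' hsol.2.1 hSch)
  -- distance to the boundary, from inside the ball of radius `ϑ R`
  have hϑ : 0 < 1 - ϑ := by linarith
  have hρ : ϑ * (κ * X) ≤ κ * X := mul_le_of_le_one_left hRpos.le hϑ1.le
  set w₀ := min ((1 - ϑ) * (κ * X)) r₀ with hw₀
  have hw₀0 : 0 < w₀ := lt_min (by positivity) hr₀0
  have hwt : ∀ z : Euc I, ‖z‖ < ϑ * (κ * X) → w₀ ≤ wt (κ * X) r₀ z := fun z hz =>
    min_le_min_right _ (by linarith)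
  have hosc := osc_bound (G := C * A) (Q := C * A / w₀) hI hμ hγ.le hΛ0.le hΛμ hΛc (by positivity)
    (by positivity) hloc hρ (fun z hz => (hbd z (hz.trans_le hρ)).1)
    (fun z hz i j => ((hbd z (hz.trans_le hρ)).2 i j).trans (by
      have := hwt z hz
      gcongr))
    hx hy hxy hu hu1
  refine hosc.trans ?_
  have hG0 : 0 < C * A := by positivity
  have hQ0 : 0 < C * A / w₀ := by positivity
  obtain ⟨Q, hQ⟩ : ∃ Q, Q = C * A / w₀ := ⟨_, rfl⟩
  obtain ⟨G, hG⟩ : ∃ G, G = C * A := ⟨_, rfl⟩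
  rw [← hQ, ← hG]
  rw [← hQ] at hQ0
  rw [← hG] at hG0
  clear_value w₀
  have hQb : Q ≤ b * Q := le_mul_of_one_le_left hQ0.le hb1
  have hL4 : 1 ≤ L ^ (4 * m) := one_le_pow₀ hL
  have hL2 : 1 ≤ L ^ (2 * m) := one_le_pow₀ hL
  have h24 : L ^ (2 * m) ≤ L ^ (4 * m) := pow_le_pow_right₀ hL (by omega)
  have hinv : 1 ≤ 1 / (1 - ϑ) := by rw [le_div_iff₀ hϑ]; linarith
  set Z := 1 / (1 - ϑ) * L ^ (4 * m) with hZ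
  have hZ4 : L ^ (4 * m) ≤ Z := le_mul_of_one_le_left (by positivity) hinv
  have hbw : b / w₀ ≤ (C₁ / κ + C₁ / δ) * (1 / (1 - ϑ) * L ^ (2 * m)) := by
    have e1 : b / ((1 - ϑ) * (κ * X)) = C₁ / κ * (1 / (1 - ϑ) * 1) := by
      rw [hb]; field_simp
    have e2 : b / r₀ = C₁ / δ * (1 * L ^ (2 * m)) := by
      rw [hb, hr₀, hX, pow_mul' L 2 m]; field_simp
    have p1 : 0 < C₁ / κ * (1 / (1 - ϑ) * L ^ (2 * m)) := by positivity
    have p2 : 0 < C₁ / δ * (1 / (1 - ϑ) * L ^ (2 * m)) := by positivity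
    rw [add_mul]
    rcases min_cases ((1 - ϑ) * (κ * X)) r₀ with ⟨h, _⟩ | ⟨h, _⟩ <;> rw [hw₀, h]
    · rw [e1]
      have : C₁ / κ * (1 / (1 - ϑ) * 1) ≤ C₁ / κ * (1 / (1 - ϑ) * L ^ (2 * m)) := by gcongr
      linarith
    · rw [e2]
      have : C₁ / δ * (1 * L ^ (2 * m)) ≤ C₁ / δ * (1 / (1 - ϑ) * L ^ (2 * m)) := by gcongr
      linarith
  have hGZ : G ≤ C * A₀ * Z := by
    calc G = C * A₀ * L ^ (2 * m) := by rw [hG, hA]; ring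
      _ ≤ C * A₀ * Z := by
        have := h24.trans hZ4
        gcongr
  have hQZ : b * Q ≤ C * A₀ * (C₁ / κ + C₁ / δ) * Z := by
    calc b * Q = G * (b / w₀) := by rw [hQ, hG]; ring
      _ ≤ G * ((C₁ / κ + C₁ / δ) * (1 / (1 - ϑ) * L ^ (2 * m))) := by gcongr
      _ = C * A₀ * (C₁ / κ + C₁ / δ) * (1 / (1 - ϑ) * (L ^ (2 * m) * L ^ (2 * m))) := by
        rw [hG, hA]; ring
      _ = C * A₀ * (C₁ / κ + C₁ / δ) * Z := by
        rw [hZ, ← pow_add, show 2 * m + 2 * m = 4 * m by omega]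
  have hfin : 2 * (γ * (I * G) + (b * (Λ * (I * Q + 2 * Q)) + Λ * (Λ * (1 + G + Q)))
          + I * (b * (I * Q) + Λ * G) + I * (b * (2 * Q) + Λ * Q))
        + I * (2 * Q * (b + Λ * b)) ≤ K * (1 + G + b * Q) :=
    collect_osc hΛ0.le hγ.le hG0.le hQ0.le hQb hK
  refine hfin.trans ?_
  have hZ1 : 1 ≤ Z := hL4.trans hZ4
  calc K * (1 + G + b * Q)
      ≤ K * (Z + C * A₀ * Z + C * A₀ * (C₁ / κ + C₁ / δ) * Z) := by gcongr
    _ = Cf / (1 - ϑ) * L ^ (4 * m) := by rw [hCf, hZ]; ring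

/-- Fix `κ > 0`, `m ≥ 3`, `α ∈ (0,1]`, and set `k₀ = 4m(1+1/α)`,
`k₁ = k₀ − m`.  For every constant `C₀` there exists `C > 0` independent of `n` such that for
all sufficiently large `n`, every `ϑ ∈ (0,1)`, and every classical solution `φ` of the HJB
equation on `B_κ^n` with `|φ|*_{2,α,B_κ^n} ≤ C₀ √n (log n)^{k₀}`: for all
`x, y ∈ B_{ϑκ}^n` with `|x − y| ≤ 1` and all `u ∈ 𝒰`,
`|∑ i (∂²_{ii}φ(y) − ∂²_{ii}φ(x))(σ_i^n(x,u))²| ≤ C/(1−ϑ) (log n)^{k₁}`. -/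
theorem stmt3
    (I : ℕ) (hI : 0 < I)
    (μ a c : Fin I → ℝ) (γ β : ℝ)
    (hμ : ∀ i, 0 < μ i) (ha : ∀ i, 0 < a i) (hsum : ∑ i, a i = 1)
    (hc : ∀ i, 0 < c i) (hγ : 0 < γ)
    (lam : ℕ → ℝ)
    (hlam : ∀ n : ℕ, 1 ≤ n → 0 < lam n ∧
      (n : ℝ) = lam n * (∑ i, a i / μ i)
        + β * Real.sqrt (lam n * (∑ i, a i / μ i)))
    (κ : ℝ) (hκ : 0 < κ) (m : ℕ) (hm : 3 ≤ m)
    (α : ℝ) (hα0 : 0 < α) (hα1 : α ≤ 1) :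
    ∀ C₀ : ℝ, 0 < C₀ →
      ∃ C : ℝ, 0 < C ∧
        ∃ N : ℕ, ∀ n : ℕ, N ≤ n →
          ∀ ϑ : ℝ, 0 < ϑ → ϑ < 1 →
            ∀ φ : Euc I → ℝ,
              IsSolGen μ a c γ (lam n) n (Rad κ m n) (fun y => max y 0) φ →
              SchauderBound α (Rad κ m n)
                (C₀ * Real.sqrt n * Real.log n ^ ((4 * (m : ℝ)) * (1 + 1 / α))) φ →
              ∀ x y : Euc I, ‖x‖ < ϑ * Rad κ m n → ‖y‖ < ϑ * Rad κ m n →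
                ‖x - y‖ ≤ 1 →
                ∀ u : Fin I → ℝ, (∀ i, 0 ≤ u i) → (∑ i, u i) = 1 →
                  |∑ i, (pd2 φ i y - pd2 φ i x) * sigmaSq μ a (lam n) n x u i| ≤
                    C / (1 - ϑ) * Real.log n ^ ((4 * (m : ℝ)) * (1 + 1 / α) - m) := by
  intro C₀ _
  obtain ⟨C, hC, N, h⟩ := osc_log_bound hI μ a c γ β hμ ha hsum hc hγ lam hlam κ hκ m α hα0 hα1
  refine ⟨C, hC, N, fun n hn ϑ hϑ0 hϑ1 φ hsol hSch x y hx hy hxy u hu hu1 => ?_⟩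
  obtain ⟨hL, h⟩ := h n hn
  refine (h ϑ hϑ0 hϑ1 φ _ hsol hSch x y hx hy hxy u hu hu1).trans ?_
  have h1 : 0 < 1 - ϑ := by linarith
  refine mul_le_mul_of_nonneg_left ?_ (by positivity)
  rw [← Real.rpow_natCast]
  refine Real.rpow_le_rpow_of_exponent_le hL ?_
  push_cast
  -- `1 / α ≥ 1`, so the exponent on the right is at least `7 m`
  have h2 : 1 ≤ 1 / α := by rw [le_div_iff₀ hα0]; linarith
  have h3 : (0 : ℝ) ≤ m := Nat.cast_nonneg m
  nlinarith

end HW
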